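/- arXiv:2001.09525 — 3 statements merged into one kernel-verified Lean document; each statement's English description precedes it below -/
import Mathlib

section
/- Let ABC be a triangle and let T' be a minimum area isosceles container for ABC. Then T' and ABC have a common side and equal angles at one endpoint of that side: there exist two distinct vertices P and Q of ABC that are also vertices of T', and the angle of ABC at P equals the angle of T' at P. -/
open EuclideanGeometry MeasureTheory Real

noncomputable section

/-- The Euclidean plane. -/
abbrev Pt : Type := EuclideanSpace ℝ (Fin 2)

/-- The closed triangular region with vertices `A`, `B`, `C`
(the convex hull of the three vertices). -/
def tri (A B C : Pt) : Set Pt := convexHull ℝ {A, B, C}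

/-- The area of the triangle `A B C`:
the 2-dimensional Lebesgue measure of its convex hull. -/
def triArea (A B C : Pt) : ℝ := (volume (tri A B C)).toReal

/-- A triangle is isosceles if at least two of its side lengths coincide. -/
def IsIsosceles (A B C : Pt) : Prop :=
  dist B C = dist C A ∨ dist C A = dist A B ∨ dist A B = dist B C

/-- `S P R` is an isosceles container for the triangle `A B C`:
it is a genuine isosceles triangle whose convex hull contains that of `A B C`. -/
def IsIsoscelesContainer (A B C S P R : Pt) : Prop :=
  AffineIndependent ℝ ![S, P, R] ∧ IsIsosceles S P R ∧ tri A B C ⊆ tri S P R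

/-- `S P R` is a minimum area isosceles container for the triangle `A B C`. -/
def IsMinIsoscelesContainer (A B C S P R : Pt) : Prop :=
  IsIsoscelesContainer A B C S P R ∧
    ∀ S' P' R' : Pt, IsIsoscelesContainer A B C S' P' R' →
      triArea S P R ≤ triArea S' P' R'

/-- `Z` lies on the ray starting at `X` passing through `Y`. -/
def OnRay (X Y Z : Pt) : Prop := SameRay ℝ (Y - X) (Z - X)

open scoped Classical in
/-- The angle of the triangle `A B C` at the vertex `X ∈ {A, B, C}`:
the undirected angle at `X` spanned by the two other vertices. -/
def vertexAngle (X A B C : Pt) : ℝ :=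
  if X = A then ∠ B A C else if X = B then ∠ A B C else ∠ A C B

/-!
Use oblique coordinates with the apex of the container at the origin and its two legs as basis
vectors, so that the container is the unit triangle and everything depends only on the cosine `c`
of its apex angle. A minimal container must resist every deformation through isosceles triangles
that keeps the points of contact on its sides. Three one-parameter families are enough: opening or
closing the two base angles, rotating the whole container, and turning one leg while the other
stays fixed. Each of them has an explicit first-order condition in terms of the contact points under
which the area drops. Every contact pattern without a common side and a common angle admits one of
these deformations, except when one point is a base vertex and the two others lie inside the two
legs, with `2 * z ≤ c` for the height `z` of the point on the other leg; then moving the apex down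
to that point gives a smaller container outright.
-/

section ObliqueCoordinates

open Filter Topology

variable {ι : Type*} {c : ℝ} {p r : ι → ℝ}

/-- The points `(p i, r i)` lie in an isosceles triangle of area less than `1 / 2`. Coordinates are
oblique: the two basis vectors are unit vectors at an angle with cosine `c` and span a parallelogram
of area `1` by convention. The triangle is cut out by
`h ≤ ℓ`, `h' ≤ ℓ'` and `ℓ + ℓ' ≤ h + h' + κ`, where `ℓ = (a, b)` and `ℓ' = (a', b')` are linear
forms of equal dual norm; its area is `κ ^ 2 / (2 * (a * b' - b * a'))`. -/
def FitsSmaller (c : ℝ) (p r : ι → ℝ) : Prop :=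
  ∃ a b a' b' h h' κ : ℝ, 0 < κ ∧ κ ^ 2 < a * b' - b * a' ∧
    a ^ 2 + b ^ 2 - 2 * c * a * b = a' ^ 2 + b' ^ 2 - 2 * c * a' * b' ∧
    ∀ i, h ≤ a * p i + b * r i ∧ h' ≤ a' * p i + b' * r i ∧
      a * p i + b * r i + (a' * p i + b' * r i) ≤ h + h' + κ

lemma FitsSmaller.swap (hF : FitsSmaller c p r) : FitsSmaller c r p := by
  obtain ⟨a, b, a', b', h, h', κ, hκ, hN, hiso, hi⟩ := hF
  refine ⟨b', a', b, a, h', h, κ, hκ, by linarith, by linarith, fun i => ?_⟩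
  obtain ⟨h₁, h₂, h₃⟩ := hi i
  exact ⟨by linarith, by linarith, by linarith⟩

lemma FitsSmaller.exists_vertices (hF : FitsSmaller c p r) :
    ∃ s₁ s₂ e₁ e₂ f₁ f₂ : ℝ, 0 < e₁ * f₂ - f₁ * e₂ ∧ e₁ * f₂ - f₁ * e₂ < 1 ∧
      e₁ ^ 2 + e₂ ^ 2 + 2 * c * e₁ * e₂ = f₁ ^ 2 + f₂ ^ 2 + 2 * c * f₁ * f₂ ∧
      ∀ i, ∃ α β : ℝ, 0 ≤ α ∧ 0 ≤ β ∧ α + β ≤ 1 ∧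
        p i = s₁ + α * e₁ + β * f₁ ∧ r i = s₂ + α * e₂ + β * f₂ := by
  obtain ⟨a, b, a', b', h, h', κ, hκ, hN, hiso, hi⟩ := hF
  have hN₀ : 0 < a * b' - b * a' := (by positivity : 0 < κ ^ 2).trans hN
  set N := a * b' - b * a' with hN_def
  have hdet : κ / N * b' * (κ / N * a) - -(κ / N * b) * -(κ / N * a') = κ ^ 2 / N := by
    field_simp
    rw [hN_def]
    ring
  refine ⟨(h * b' - h' * b) / N, (h' * a - h * a') / N, κ / N * b', -(κ / N * a'),
    -(κ / N * b), κ / N * a, by rw [hdet]; positivity, by rwa [hdet, div_lt_one hN₀],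
    by linear_combination -(κ / N) ^ 2 * hiso, fun i => ?_⟩
  obtain ⟨hi₁, hi₂, hi₃⟩ := hi i
  refine ⟨(a * p i + b * r i - h) / κ, (a' * p i + b' * r i - h') / κ,
    div_nonneg (sub_nonneg.2 hi₁) hκ.le, div_nonneg (sub_nonneg.2 hi₂) hκ.le, ?_, ?_, ?_⟩
  · rw [← add_div, div_le_one hκ]
    linarith
  · field_simp
    rw [hN_def]
    ring
  · field_simp
    rw [hN_def]
    ring

/-- The points `(p i, r i)` lie in the triangle with vertices `(0, 0)`, `(1, 0)`, `(0, 1)`: the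
isosceles container in oblique coordinates, with its apex at the origin. -/
structure InUnitTriangle (p r : ι → ℝ) : Prop where
  fst_nonneg : ∀ i, 0 ≤ p i
  snd_nonneg : ∀ i, 0 ≤ r i
  add_le_one : ∀ i, p i + r i ≤ 1

lemma InUnitTriangle.swap (hT : InUnitTriangle p r) : InUnitTriangle r p :=
  ⟨hT.snd_nonneg, hT.fst_nonneg, fun i => add_comm (p i) (r i) ▸ hT.add_le_one i⟩

/- The smaller triangle has its apex at `(0, z)` and two legs of length `ρ`, one of them ending at
`(1, 0)` and the other one running along `p = 0`. -/
lemma fitsSmaller_of_apex_on_leg {z : ℝ} (hz : 0 < z) (hzc : z < 2 * c) (hcz : 2 * c * z ≤ 1)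
    (hp : ∀ i, 0 ≤ p i) (hp' : ∀ i, p i ≤ 1) (hr : ∀ i, 0 ≤ r i)
    (hpr : ∀ i, z * p i + r i ≤ z) : FitsSmaller c p r := by
  set ρ := √(1 + z ^ 2 - 2 * c * z)
  have hρ_sq : ρ ^ 2 = 1 + z ^ 2 - 2 * c * z := Real.sq_sqrt (by nlinarith)
  have hzρ : z ≤ ρ := Real.le_sqrt_of_sq_le (by linarith)
  have hρ_pos : 0 < ρ := hz.trans_le hzρ
  have hρ_lt : ρ < 1 := by
    refine (sq_lt_one_iff₀ hρ_pos.le).1 ?_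
    nlinarith
  refine ⟨-z, -1, ρ, 0, -z, 0, ρ, hρ_pos, by nlinarith, by linarith, fun i =>
    ⟨by linarith [hpr i], by linarith [mul_nonneg hρ_pos.le (hp i)], ?_⟩⟩
  nlinarith [mul_nonneg (sub_nonneg.2 hzρ) (sub_nonneg.2 (hp' i)), hr i]

/-- No line contains all the points `(p i, r i)`. -/
def Noncollinear (p r : ι → ℝ) : Prop :=
  ∀ a b h : ℝ, (∀ i, a * p i + b * r i = h) → a = 0 ∧ b = 0

lemma Noncollinear.swap (hnc : Noncollinear p r) : Noncollinear r p := fun a b h hab =>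
  (hnc b a h fun i => by rw [add_comm, hab i]).symm

/-- The barycentric coordinates of the point `(x, y)` with respect to `(0, 0)`, `(1, 0)`, `(0, 1)`,
indexed in this order. -/
def bary (x y : ℝ) : Fin 3 → ℝ := ![1 - x - y, x, y]

lemma bary_zero (x y : ℝ) : bary x y 0 = 1 - x - y := rfl

lemma bary_one (x y : ℝ) : bary x y 1 = x := rfl

lemma bary_two (x y : ℝ) : bary x y 2 = y := rfl

/-- Among the points `(p i, r i)`, one is a vertex `l` of the triangle with vertices `(0, 0)`,
`(1, 0)`, `(0, 1)`, another one is a vertex `m ≠ l`, and a third one lies on the side through `l`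
opposite to `m`. -/
def SharesSideAndAngle (p r : ι → ℝ) : Prop :=
  ∃ i j k, i ≠ j ∧ j ≠ k ∧ i ≠ k ∧ ∃ l m, l ≠ m ∧
    bary (p i) (r i) l = 1 ∧ bary (p j) (r j) m = 1 ∧ bary (p k) (r k) m = 0

lemma bary_swap (x y : ℝ) (l : Fin 3) : bary y x (Equiv.swap 1 2 l) = bary x y l := by
  fin_cases l
  · simpa [bary, Equiv.swap_apply_of_ne_of_ne] using sub_right_comm 1 y x
  · simp [bary]
  · simp [bary]

lemma SharesSideAndAngle.swap (hS : SharesSideAndAngle p r) : SharesSideAndAngle r p := by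
  obtain ⟨i, j, k, hij, hjk, hik, l, m, hlm, hi, hj, hk⟩ := hS
  exact ⟨i, j, k, hij, hjk, hik, Equiv.swap 1 2 l, Equiv.swap 1 2 m,
    (Equiv.injective _).ne hlm, by rwa [bary_swap], by rwa [bary_swap], by rwa [bary_swap]⟩

lemma eventually_pos_of_continuous {F : ℝ → ℝ} (hF : Continuous F) (h₀ : 0 < F 0) :
    ∀ᶠ t in 𝓝[>] 0, 0 < F t :=
  (hF.continuousAt.eventually (lt_mem_nhds h₀)).filter_mono nhdsWithin_le_nhds

lemma eventually_pos_of_eq_mul {F G : ℝ → ℝ} (hFG : ∀ t, F t = t * G t) (hG : Continuous G)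
    (h₀ : 0 < G 0) : ∀ᶠ t in 𝓝[>] 0, 0 < F t := by
  filter_upwards [self_mem_nhdsWithin, eventually_pos_of_continuous hG h₀] with t ht hGt
  rw [hFG]
  exact mul_pos ht hGt

lemma eventually_sq_lt_mul {D m q ε : ℝ} (hD : 0 < D) (hm : 0 < -(ε * (c + m))) :
    ∀ᶠ t in 𝓝[>] 0, (D + m * (ε * t) + q * (ε * t) ^ 2) ^ 2 <
      (D - 2 * c * (ε * t) - (ε * t) ^ 2) * (D + (ε * t) ^ 2) := by
  simp only [← sub_pos (b := (_ : ℝ) ^ 2)]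
  refine eventually_pos_of_eq_mul
    (G := fun t => 2 * D * -(ε * (c + m)) - ε * ((ε * t) * (m ^ 2 + 2 * D * q) +
      (ε * t) ^ 2 * (2 * c + 2 * m * q) + (ε * t) ^ 3 * (1 + q ^ 2)))
    (fun t => by ring) (by fun_prop) ?_
  have : 0 < 2 * D * -(ε * (c + m)) := by positivity
  simpa using this

variable [Finite ι]

lemma eventually_forall_nonneg_add_mul {f : ι → ℝ} {g : ι → ℝ → ℝ} (hg : ∀ i, Continuous (g i))
    (hf : ∀ i, 0 ≤ f i) (hfg : ∀ i, f i = 0 → ∀ᶠ t in 𝓝[>] 0, 0 ≤ g i t) :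
    ∀ᶠ t in 𝓝[>] 0, ∀ i, 0 ≤ f i + t * g i t := by
  refine eventually_all.2 fun i => ?_
  rcases (hf i).eq_or_lt' with hi | hi
  · filter_upwards [self_mem_nhdsWithin, hfg i hi] with t ht hgt
    rw [hi, zero_add]
    exact mul_nonneg (le_of_lt ht) hgt
  · have hcont : Continuous fun t => f i + t * g i t := by fun_prop
    exact (eventually_pos_of_continuous hcont (by simpa using hi)).mono fun _ => le_of_lt

/- In the next three lemmas `x`, `y`, `z` mark contact points on the base `p + r = 1`, on the leg
`r = 0` and on the leg `p = 0`, the sign `ε` is the sense of the deformation, and the last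
hypothesis is the first-order condition on the area. -/

lemma fitsSmaller_of_base_angles (ε : ℝ) (hT : InUnitTriangle p r) {y z : ℝ}
    (hy : ∀ i, r i = 0 → 0 ≤ ε * (y - p i)) (hz : ∀ i, p i = 0 → 0 ≤ ε * (z - r i))
    (hyz : 0 < ε * (1 - (y + z))) : FitsSmaller c p r := by
  have hκ : ∀ᶠ t in 𝓝[>] (0 : ℝ), 0 < 1 + ε * t * (y + z) :=
    eventually_pos_of_continuous (by fun_prop) (by simp)
  have hN : ∀ᶠ t in 𝓝[>] (0 : ℝ), 0 < 1 + 2 * (ε * t) - (1 + ε * t * (y + z)) ^ 2 :=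
    eventually_pos_of_eq_mul
      (G := fun t => 2 * (ε * (1 - (y + z))) - t * (ε * (y + z)) ^ 2)
      (fun t => by ring) (by fun_prop) (by simpa)
  have hp : ∀ᶠ t in 𝓝[>] (0 : ℝ), ∀ i, 0 ≤ p i + t * (ε * (z - r i + p i)) :=
    eventually_forall_nonneg_add_mul (fun i => by fun_prop) hT.fst_nonneg
      fun i hi => .of_forall fun _ => by simpa [hi] using hz i hi
  have hr : ∀ᶠ t in 𝓝[>] (0 : ℝ), ∀ i, 0 ≤ r i + t * (ε * (y - p i + r i)) :=
    eventually_forall_nonneg_add_mul (fun i => by fun_prop) hT.snd_nonneg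
      fun i hi => .of_forall fun _ => by simpa [hi] using hy i hi
  obtain ⟨t, hκ, hN, hp, hr⟩ := (hκ.and <| hN.and <| hp.and hr).exists
  exact ⟨1 + ε * t, -(ε * t), -(ε * t), 1 + ε * t, -(ε * t) * z, -(ε * t) * y,
    1 + ε * t * (y + z), hκ, by linarith, by ring,
    fun i => ⟨by linarith [hp i], by linarith [hr i], by linarith [hT.add_le_one i]⟩⟩

lemma fitsSmaller_of_rotation (ε : ℝ) (hc : c ^ 2 < 1) (hε : ε ≠ 0) (hT : InUnitTriangle p r)
    {x y z : ℝ} (hx : ∀ i, p i + r i = 1 → 0 ≤ ε * (p i - x))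
    (hy : ∀ i, r i = 0 → 0 ≤ ε * (y - p i)) (hz : ∀ i, p i = 0 → 0 ≤ ε * (r i - z))
    (hxyz : ε * ((1 - 2 * x) * (1 - c) + y - z) ≤ 0) : FitsSmaller c p r := by
  have hc₁ : 0 < 1 - c := by nlinarith
  have hκ : ∀ᶠ t in 𝓝[>] (0 : ℝ), 0 < 1 + t * (ε * ((1 - 2 * x) * (1 - c) + y - z)) :=
    eventually_pos_of_continuous (by fun_prop) (by simp)
  have hp : ∀ᶠ t in 𝓝[>] (0 : ℝ), ∀ i, 0 ≤ p i + t * (ε * (r i - z + c * p i)) :=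
    eventually_forall_nonneg_add_mul (fun i => by fun_prop) hT.fst_nonneg
      fun i hi => .of_forall fun _ => by simpa [hi] using hz i hi
  have hr : ∀ᶠ t in 𝓝[>] (0 : ℝ), ∀ i, 0 ≤ r i + t * (ε * (y - p i - c * r i)) :=
    eventually_forall_nonneg_add_mul (fun i => by fun_prop) hT.snd_nonneg
      fun i hi => .of_forall fun _ => by simpa [hi] using hy i hi
  have hpr : ∀ᶠ t in 𝓝[>] (0 : ℝ), ∀ i,
      0 ≤ 1 - (p i + r i) + t * (ε * ((1 - c) * (1 - 2 * x - r i + p i))) :=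
    eventually_forall_nonneg_add_mul (fun i => by fun_prop)
      (fun i => sub_nonneg.2 (hT.add_le_one i)) fun i hi => .of_forall fun _ => by
        have hri : r i = 1 - p i := by linarith
        calc 0 ≤ 2 * (1 - c) * (ε * (p i - x)) :=
              mul_nonneg (by linarith) (hx i (by linarith))
          _ = ε * ((1 - c) * (1 - 2 * x - r i + p i)) := by rw [hri]; ring
  obtain ⟨t, ht, hκ, hp, hr, hpr⟩ :=
    (eventually_mem_nhdsWithin.and <| hκ.and <| hp.and <| hr.and hpr).exists
  rw [Set.mem_Ioi] at ht
  refine ⟨1 + c * (ε * t), ε * t, -(ε * t), 1 - c * (ε * t), ε * t * z, -(ε * t) * y,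
    1 + t * (ε * ((1 - 2 * x) * (1 - c) + y - z)), hκ, ?_, by ring,
    fun i => ⟨by linarith [hp i], by linarith [hr i], by linarith [hpr i]⟩⟩
  have hκ_le : 1 + t * (ε * ((1 - 2 * x) * (1 - c) + y - z)) ≤ 1 := by
    linarith [mul_nonpos_of_nonneg_of_nonpos ht.le hxyz]
  calc (1 + t * (ε * ((1 - 2 * x) * (1 - c) + y - z))) ^ 2 ≤ 1 := pow_le_one₀ hκ.le hκ_le
    _ < 1 + (1 - c ^ 2) * (ε * t) ^ 2 := by
      have : 0 < 1 - c ^ 2 := by linarith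
      have : ε * t ≠ 0 := mul_ne_zero hε ht.ne'
      simp only [lt_add_iff_pos_right]
      positivity
    _ = (1 + c * (ε * t)) * (1 - c * (ε * t)) - ε * t * -(ε * t) := by ring

lemma fitsSmaller_of_turning_leg (ε : ℝ) (hc : c ^ 2 < 1) (hT : InUnitTriangle p r) {x z : ℝ}
    (hx : ∀ i, p i + r i = 1 → 0 ≤ ε * (x - p i)) (hz : ∀ i, p i = 0 → 0 ≤ ε * (z - r i))
    (hxz : 0 < ε * (2 * (x * c + 1 - x) - (2 * z + c))) : FitsSmaller c p r := by
  have hc₁ : 0 < 1 - c := by nlinarith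
  have hD : 0 < 1 - c ^ 2 := by linarith
  set D := 1 - c ^ 2
  set m := 2 * z - 2 * c * x - 2 * (1 - x) with hm
  have hκ : ∀ᶠ t in 𝓝[>] (0 : ℝ), 0 < D + m * (ε * t) + (1 - 2 * x) * (ε * t) ^ 2 :=
    eventually_pos_of_continuous (by fun_prop) (by simpa)
  have hN := eventually_sq_lt_mul (c := c) (q := 1 - 2 * x) hD
    (show 0 < -(ε * (c + m)) by simp only [hm]; linarith)
  have hp : ∀ᶠ t in 𝓝[>] (0 : ℝ), ∀ i,
      0 ≤ D * p i + t * (ε * (2 * (z - r i) - (2 * c + ε * t) * p i)) :=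
    eventually_forall_nonneg_add_mul (fun i => by fun_prop)
      (fun i => mul_nonneg hD.le (hT.fst_nonneg i)) fun i hi => .of_forall fun t => by
        have hpi : p i = 0 := (mul_eq_zero.1 hi).resolve_left hD.ne'
        rw [hpi]
        linarith [hz i hpi]
  have hpr : ∀ᶠ t in 𝓝[>] (0 : ℝ), ∀ i, 0 ≤ D * (1 - (p i + r i)) +
      t * (ε * (2 * (r i - (1 - x)) - 2 * c * (x - p i) + ε * t * (p i - x + (1 - x - r i)))) :=
    eventually_forall_nonneg_add_mul (fun i => by fun_prop)
      (fun i => mul_nonneg hD.le (sub_nonneg.2 (hT.add_le_one i))) fun i hi => by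
        have hpri := (mul_eq_zero.1 hi).resolve_left hD.ne'
        have hri : r i = 1 - p i := by linarith
        have hsmall : ∀ᶠ t in 𝓝[>] (0 : ℝ), 0 < 1 - c - ε * t :=
          eventually_pos_of_continuous (by fun_prop) (by simpa using hc₁)
        filter_upwards [hsmall] with t ht
        calc 0 ≤ 2 * (1 - c - ε * t) * (ε * (x - p i)) :=
              mul_nonneg (by linarith) (hx i (by linarith))
          _ = _ := by rw [hri]; ring
  obtain ⟨t, hκ, hN, hp, hpr⟩ := (hκ.and <| hN.and <| hp.and hpr).exists
  refine ⟨D - 2 * c * (ε * t) - (ε * t) ^ 2, -2 * (ε * t), 0, D + (ε * t) ^ 2,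
    -2 * (ε * t) * z, 0, D + m * (ε * t) + (1 - 2 * x) * (ε * t) ^ 2, hκ, by linarith, by ring,
    fun i => ⟨by linarith [hp i], ?_, by linarith [hpr i]⟩⟩
  have hri : 0 ≤ r i := hT.snd_nonneg i
  have hD_add : 0 ≤ D + (ε * t) ^ 2 := by positivity
  simpa using mul_nonneg hD_add hri

lemma exists_eq_zero_of_not_fitsSmaller (hT : InUnitTriangle p r) (hF : ¬ FitsSmaller c p r) :
    ∃ i, p i = 0 := by
  by_contra! hp
  exact hF (fitsSmaller_of_base_angles (-1) hT (y := 0) (z := 2)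
    (fun i _ => by linarith [hT.fst_nonneg i]) (fun i hi => absurd hi (hp i)) (by norm_num))

lemma exists_add_eq_one_of_not_fitsSmaller (hc : c ^ 2 < 1) (hT : InUnitTriangle p r)
    (hF : ¬ FitsSmaller c p r) : ∃ i, p i + r i = 1 := by
  by_contra! hpr
  refine hF (fitsSmaller_of_turning_leg 1 hc hT (x := -(2 + c) / (2 * (1 - c))) (z := 1)
    (fun i hi => absurd hi (hpr i)) (fun i _ => ?_) ?_)
  · linarith [hT.fst_nonneg i, hT.add_le_one i]
  · have hc₁ : 1 - c ≠ 0 := by nlinarith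
    have : -(2 + c) / (2 * (1 - c)) * (1 - c) = -(2 + c) / 2 := by field_simp
    linarith

lemma fitsSmaller_of_unique_contacts {i j k : ι} (hc : c ^ 2 < 1) (hT : InUnitTriangle p r)
    (hi : ∀ l, p l = 0 → l = i) (hj : ∀ l, r l = 0 → l = j) (hk : ∀ l, p l + r l = 1 → l = k) :
    FitsSmaller c p r := by
  obtain ⟨ε, hε, hE⟩ :
      ∃ ε : ℝ, ε ≠ 0 ∧ ε * ((1 - 2 * p k) * (1 - c) + p j - r i) ≤ 0 := by
    rcases le_total ((1 - 2 * p k) * (1 - c) + p j - r i) 0 with hE | hE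
    · exact ⟨1, one_ne_zero, by linarith⟩
    · exact ⟨-1, by norm_num, by linarith⟩
  exact fitsSmaller_of_rotation ε hc hε hT (fun l hl => by simp [hk l hl])
    (fun l hl => by simp [hj l hl]) (fun l hl => by simp [hi l hl]) hE

section ThreePoints

variable {p r : Fin 3 → ℝ} {i j k : Fin 3}

lemma eq_or_eq_or_eq_of_ne (hij : i ≠ j) (hjk : j ≠ k) (hik : i ≠ k) (l : Fin 3) :
    l = i ∨ l = j ∨ l = k := by
  lia

lemma fitsSmaller_or_sharesSideAndAngle_of_two_on_base (hT : InUnitTriangle p r)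
    (hij : i ≠ j) (hjk : j ≠ k) (hik : i ≠ k) (hi : p i + r i = 1) (hj : p j + r j = 1)
    (hk : p k + r k < 1) : FitsSmaller c p r ∨ SharesSideAndAngle p r := by
  have hijk := eq_or_eq_or_eq_of_ne hij hjk hik
  have hpk := hT.fst_nonneg k
  have hrk := hT.snd_nonneg k
  rcases hpk.eq_or_lt' with hpk₀ | hpk₀
  case inr =>
    refine .inl (fitsSmaller_of_base_angles (-1) hT (y := p k) (z := 1) ?_ ?_ (by linarith)) <;>
      intro l hl <;> rcases hijk l with rfl | rfl | rfl <;> linarith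
  rcases hrk.eq_or_lt' with hrk₀ | hrk₀
  case inr =>
    refine .inl (fitsSmaller_of_base_angles (-1) hT (y := 1) (z := r k) ?_ ?_ (by linarith)) <;>
      intro l hl <;> rcases hijk l with rfl | rfl | rfl <;> linarith
  by_cases h : (p i = 0 ∨ r i = 0) ∨ p j = 0 ∨ r j = 0
  · right
    rcases h with (h | h) | h | h
    · exact ⟨i, k, j, hik, hjk.symm, hij, 2, 0, by decide, by rw [bary_two]; linarith,
        by simp [bary, hpk₀, hrk₀], by rw [bary_zero]; linarith⟩
    · exact ⟨i, k, j, hik, hjk.symm, hij, 1, 0, by decide, by rw [bary_one]; linarith,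
        by simp [bary, hpk₀, hrk₀], by rw [bary_zero]; linarith⟩
    · exact ⟨j, k, i, hjk, hik.symm, hij.symm, 2, 0, by decide, by rw [bary_two]; linarith,
        by simp [bary, hpk₀, hrk₀], by rw [bary_zero]; linarith⟩
    · exact ⟨j, k, i, hjk, hik.symm, hij.symm, 1, 0, by decide, by rw [bary_one]; linarith,
        by simp [bary, hpk₀, hrk₀], by rw [bary_zero]; linarith⟩
  · left
    simp only [not_or] at h
    refine fitsSmaller_of_base_angles 1 hT (y := 0) (z := 0) ?_ ?_ (by norm_num) <;>
      intro l hl <;> rcases hijk l with rfl | rfl | rfl <;> simp_all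

lemma fitsSmaller_or_sharesSideAndAngle_of_leg_contained (hc : c ^ 2 < 1) (hT : InUnitTriangle p r)
    (hij : i ≠ j) (hjk : j ≠ k) (hik : i ≠ k) (hri : r i = 0) (hrj : r j = 0) (hrk : 0 < r k)
    (hpi : p i = 0) (hpj : p j = 1) : FitsSmaller c p r ∨ SharesSideAndAngle p r := by
  have hijk := eq_or_eq_or_eq_of_ne hij hjk hik
  rcases (hT.fst_nonneg k).eq_or_lt' with hpk | hpk
  · exact .inr ⟨i, j, k, hij, hjk, hik, 0, 1, by decide, by simp [bary, hpi, hri],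
      by simp [bary, hpj], by simp [bary, hpk]⟩
  rcases (hT.add_le_one k).eq_or_lt with hk | hk
  · exact .inr ⟨j, i, k, hij.symm, hik, hjk, 1, 0, by decide, by simp [bary, hpj],
      by simp [bary, hpi, hri], by rw [bary_zero]; linarith⟩
  left
  rcases le_or_gt c 0 with hc₀ | hc₀
  · refine fitsSmaller_of_rotation 1 hc one_ne_zero hT (x := 1) (y := 1) (z := 0) ?_ ?_ ?_
      (by linarith) <;> intro l hl <;> rcases hijk l with rfl | rfl | rfl <;> linarith
  · refine fitsSmaller_of_turning_leg 1 hc hT (x := 1) (z := 0) ?_ ?_ (by linarith) <;>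
      intro l hl <;> rcases hijk l with rfl | rfl | rfl <;> linarith

lemma fitsSmaller_or_sharesSideAndAngle_of_apex_of_on_base (hc : c ^ 2 < 1)
    (hT : InUnitTriangle p r) (hij : i ≠ j) (hjk : j ≠ k) (hik : i ≠ k)
    (hri : r i = 0) (hrj : r j = 0) (hpi : p i = 0) (hpj : 0 < p j) (hpj' : p j < 1)
    (hrk : 0 < r k) (hk : p k + r k = 1) : FitsSmaller c p r ∨ SharesSideAndAngle p r := by
  have hijk := eq_or_eq_or_eq_of_ne hij hjk hik
  rcases (hT.fst_nonneg k).eq_or_lt' with hpk₀ | hpk₀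
  · exact .inr ⟨i, k, j, hik, hjk.symm, hij, 0, 2, by decide, by simp [bary, hpi, hri],
      by rw [bary_two]; linarith, by simp [bary, hrj]⟩
  left
  rcases le_or_gt ((1 - 2 * p k) * (1 - c) + p j) 0 with hE | hE
  · refine fitsSmaller_of_rotation 1 hc one_ne_zero hT (x := p k) (y := p j) (z := 0) ?_ ?_ ?_
      (by linarith) <;> intro l hl <;> rcases hijk l with rfl | rfl | rfl <;> linarith
  · refine fitsSmaller_of_turning_leg 1 hc hT (x := p k) (z := 0) ?_ ?_ (by linarith) <;>
      intro l hl <;> rcases hijk l with rfl | rfl | rfl <;> linarith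

lemma fitsSmaller_or_sharesSideAndAngle_of_opposite_vertex (hc : c ^ 2 < 1)
    (hT : InUnitTriangle p r) (hij : i ≠ j) (hjk : j ≠ k) (hik : i ≠ k)
    (hri : r i = 0) (hrj : r j = 0) (hpi : 0 < p i) (hpij : p i < p j)
    (hpk : p k = 0) (hrk : r k = 1) : FitsSmaller c p r ∨ SharesSideAndAngle p r := by
  have hijk := eq_or_eq_or_eq_of_ne hij hjk hik
  rcases lt_or_ge 0 c with hc₀ | hc₀
  · refine .inl (fitsSmaller_of_turning_leg (-1) hc hT (x := 0) (z := 1) ?_ ?_ (by linarith)) <;>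
      intro l hl <;> rcases hijk l with rfl | rfl | rfl <;> linarith
  have hpj := hT.add_le_one j
  rcases hpj.eq_or_lt with hpj₁ | hpj₁
  · exact .inr ⟨j, k, i, hjk, hik.symm, hij.symm, 1, 2, by decide, by rw [bary_one]; linarith,
      by simp [bary, hrk], by simp [bary, hri]⟩
  · refine .inl (fitsSmaller_of_rotation (-1) hc (by norm_num) hT (x := 0) (y := p i) (z := 1)
      ?_ ?_ ?_ (by linarith)) <;>
      intro l hl <;> rcases hijk l with rfl | rfl | rfl <;> linarith

lemma fitsSmaller_of_base_vertex_of_on_leg (hc : c ^ 2 < 1) (hT : InUnitTriangle p r) (hij : i ≠ j)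
    (hjk : j ≠ k) (hik : i ≠ k) (hri : r i = 0) (hrj : r j = 0) (hpi : 0 < p i) (hpi' : p i < 1)
    (hpj : p j = 1) (hpk : p k = 0) (hrk : 0 < r k) (hrk' : r k < 1) : FitsSmaller c p r := by
  have hijk := eq_or_eq_or_eq_of_ne hij hjk hik
  rcases lt_or_ge c (2 * r k) with hck | hck
  · refine fitsSmaller_of_turning_leg (-1) hc hT (x := 1) (z := r k) ?_ ?_ (by linarith) <;>
      intro l hl <;> rcases hijk l with rfl | rfl | rfl <;> linarith
  · refine fitsSmaller_of_apex_on_leg hrk (by linarith) (by nlinarith) hT.fst_nonneg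
      (fun l => ?_) hT.snd_nonneg fun l => ?_
    · linarith [hT.add_le_one l, hT.snd_nonneg l]
    · rcases hijk l with rfl | rfl | rfl <;> nlinarith

lemma fitsSmaller_or_sharesSideAndAngle_of_two_on_leg (hc : c ^ 2 < 1) (hT : InUnitTriangle p r)
    (hij : i ≠ j) (hjk : j ≠ k) (hik : i ≠ k) (hri : r i = 0) (hrj : r j = 0) (hrk : r k ≠ 0)
    (hpij : p i < p j) : FitsSmaller c p r ∨ SharesSideAndAngle p r := by
  by_contra! hcon
  have hijk := eq_or_eq_or_eq_of_ne hij hjk hik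
  have hpi := hT.fst_nonneg i
  have hpk := hT.fst_nonneg k
  have hrk := (hT.snd_nonneg k).lt_of_ne' hrk
  have hpj := hT.add_le_one j
  have hk := hT.add_le_one k
  have hleg : p i = 0 ∨ p k = 0 := by
    obtain ⟨l, hl⟩ := exists_eq_zero_of_not_fitsSmaller hT hcon.1
    rcases hijk l with rfl | rfl | rfl
    exacts [.inl hl, by linarith, .inr hl]
  have hbase : p j = 1 ∨ p k + r k = 1 := by
    obtain ⟨l, hl⟩ := exists_add_eq_one_of_not_fitsSmaller hc hT hcon.1
    rcases hijk l with rfl | rfl | rfl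
    exacts [by linarith, .inl (by linarith), .inr hl]
  have hleg_cases : FitsSmaller c p r ∨ SharesSideAndAngle p r := by
    rcases hpi.eq_or_lt' with hpi₀ | hpi₀
    · rcases (show p j ≤ 1 by linarith).eq_or_lt with hpj₁ | hpj₁
      · exact fitsSmaller_or_sharesSideAndAngle_of_leg_contained hc hT hij hjk hik hri hrj hrk
          hpi₀ hpj₁
      · exact fitsSmaller_or_sharesSideAndAngle_of_apex_of_on_base hc hT hij hjk hik hri hrj hpi₀
          (by linarith) hpj₁ hrk (hbase.resolve_left hpj₁.ne)
    · have hpk₀ := hleg.resolve_left hpi₀.ne'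
      rcases (show r k ≤ 1 by linarith).eq_or_lt with hrk₁ | hrk₁
      · exact fitsSmaller_or_sharesSideAndAngle_of_opposite_vertex hc hT hij hjk hik hri hrj
          hpi₀ hpij hpk₀ hrk₁
      · exact .inl <| fitsSmaller_of_base_vertex_of_on_leg hc hT hij hjk hik hri hrj hpi₀
          (by linarith) (hbase.resolve_right (by linarith)) hpk₀ hrk hrk₁
  exact hleg_cases.elim hcon.1 hcon.2

lemma eq_of_snd_eq_zero (hc : c ^ 2 < 1) (hT : InUnitTriangle p r) (hnc : Noncollinear p r)
    (hF : ¬ FitsSmaller c p r) (hS : ¬ SharesSideAndAngle p r) (hi : r i = 0) (hj : r j = 0) :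
    i = j := by
  by_contra hij
  obtain ⟨k, hik, hjk⟩ := Fin.exists_ne_and_ne_of_two_lt i j (by lia)
  have hijk := eq_or_eq_or_eq_of_ne hij hjk.symm hik.symm
  have hrk : r k ≠ 0 := fun hk => one_ne_zero (hnc 0 1 0 fun l => by
    rcases hijk l with rfl | rfl | rfl <;> linarith).2
  rcases lt_trichotomy (p i) (p j) with hlt | heq | hlt
  · exact (fitsSmaller_or_sharesSideAndAngle_of_two_on_leg hc hT hij hjk.symm hik.symm hi hj
      hrk hlt).elim hF hS
  · exact hrk (hnc (r k) (p i - p k) (r k * p i) fun l => by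
      rcases hijk l with rfl | rfl | rfl <;> grind).1
  · exact (fitsSmaller_or_sharesSideAndAngle_of_two_on_leg hc hT (Ne.symm hij) hik.symm hjk.symm
      hj hi hrk hlt).elim hF hS

lemma eq_of_add_eq_one (hT : InUnitTriangle p r) (hnc : Noncollinear p r)
    (hF : ¬ FitsSmaller c p r) (hS : ¬ SharesSideAndAngle p r)
    (hi : p i + r i = 1) (hj : p j + r j = 1) : i = j := by
  by_contra hij
  obtain ⟨k, hik, hjk⟩ := Fin.exists_ne_and_ne_of_two_lt i j (by lia)
  have hijk := eq_or_eq_or_eq_of_ne hij hjk.symm hik.symm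
  have hk : p k + r k < 1 := (hT.add_le_one k).lt_of_ne fun hk =>
    one_ne_zero (hnc 1 1 1 fun l => by rcases hijk l with rfl | rfl | rfl <;> linarith).1
  exact (fitsSmaller_or_sharesSideAndAngle_of_two_on_base hT hij hjk.symm hik.symm hi hj
    hk).elim hF hS

lemma fitsSmaller_or_sharesSideAndAngle (hc : c ^ 2 < 1) (hT : InUnitTriangle p r)
    (hnc : Noncollinear p r) : FitsSmaller c p r ∨ SharesSideAndAngle p r := by
  by_contra! hcon
  obtain ⟨hF, hS⟩ := hcon
  have hF' : ¬ FitsSmaller c r p := mt FitsSmaller.swap hF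
  have hS' : ¬ SharesSideAndAngle r p := mt SharesSideAndAngle.swap hS
  obtain ⟨i, hi⟩ := exists_eq_zero_of_not_fitsSmaller hT hF
  obtain ⟨j, hj⟩ := exists_eq_zero_of_not_fitsSmaller hT.swap hF'
  obtain ⟨k, hk⟩ := exists_add_eq_one_of_not_fitsSmaller hc hT hF
  exact hF <| fitsSmaller_of_unique_contacts hc hT
    (fun l hl => eq_of_snd_eq_zero hc hT.swap hnc.swap hF' hS' hl hi)
    (fun l hl => eq_of_snd_eq_zero hc hT hnc hF hS hl hj)
    (fun l hl => eq_of_add_eq_one hT hnc hF hS hl hk)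

end ThreePoints

end ObliqueCoordinates

section TrianglesInThePlane

variable {A B C S P R : Pt}

lemma mem_convexHull_triple_iff {E : Type*} [AddCommGroup E] [Module ℝ E] {x y z w : E} :
    w ∈ convexHull ℝ {x, y, z} ↔
      ∃ α β : ℝ, 0 ≤ α ∧ 0 ≤ β ∧ α + β ≤ 1 ∧ w = x + α • (y - x) + β • (z - x) := by
  constructor
  · rw [convexHull_insert (Set.insert_nonempty _ _), convexHull_pair]
    simp only [mem_convexJoin, Set.mem_singleton_iff, exists_eq_left]
    rintro ⟨-, ⟨s, t, hs, ht, hst, rfl⟩, ⟨a, b, ha, hb, hab, rfl⟩⟩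
    obtain rfl : a = 1 - b := by linarith
    obtain rfl : s = 1 - t := by linarith
    exact ⟨b * (1 - t), b * t, by positivity, by positivity, by linarith, by module⟩
  · rintro ⟨α, β, hα, hβ, hαβ, rfl⟩
    refine mem_convexHull_of_exists_fintype ![1 - α - β, α, β] ![x, y, z] ?_ ?_ ?_ ?_
    · have hαβ' : 0 ≤ 1 - α - β := by linarith
      intro i
      fin_cases i
      exacts [hαβ', hα, hβ]
    · simp only [Fin.sum_univ_three, Matrix.cons_val]
      ring
    · simp [Fin.forall_fin_succ]
    · simp only [Fin.sum_univ_three, Matrix.cons_val]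
      module

lemma tri_affineMap (g : Pt →ᵃ[ℝ] Pt) (S P R : Pt) : tri (g S) (g P) (g R) = g '' tri S P R := by
  simp only [tri, AffineMap.image_convexHull, Set.image_insert_eq, Set.image_singleton]

lemma triArea_affineMap (g : Pt →ᵃ[ℝ] Pt) (S P R : Pt) :
    triArea (g S) (g P) (g R) = |LinearMap.det g.linear| * triArea S P R := by
  have himage : tri (g S) (g P) (g R) = (fun X => g 0 + X) '' (g.linear '' tri S P R) := by
    simp only [tri_affineMap, g.decomp', Pi.sub_apply, Set.image_image, add_sub_cancel]
  rw [triArea, triArea, himage, Set.image_add_left, measure_preimage_add,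
    Measure.addHaar_image_linearMap, ENNReal.toReal_mul, ENNReal.toReal_ofReal (abs_nonneg _)]

lemma triArea_pos (hSPR : AffineIndependent ℝ ![S, P, R]) : 0 < triArea S P R := by
  refine ENNReal.toReal_pos (Measure.measure_pos_of_nonempty_interior volume ?_).ne'
    (Set.Finite.isCompact_convexHull ℝ (Set.toFinite _)).measure_lt_top.ne
  rw [tri, interior_convexHull_nonempty_iff_affineSpan_eq_top]
  simpa only [Matrix.range_cons, Matrix.range_empty, Set.union_empty, Set.singleton_union] using
    hSPR.affineSpan_eq_top_iff_card_eq_finrank_add_one.2 (by simp)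

lemma linearIndependent_sub_sub {E : Type*} [AddCommGroup E] [Module ℝ E] {x y z : E}
    (hxyz : AffineIndependent ℝ ![x, y, z]) : LinearIndependent ℝ ![y - x, z - x] := by
  have hsub : ![y - x, z - x] = fun i : Fin 2 => ![x, y, z] i.succ -ᵥ ![x, y, z] 0 := by
    ext i : 1
    fin_cases i <;> rfl
  rw [hsub]
  exact ((affineIndependent_iff_linearIndependent_vsub ℝ _ 0).1 hxyz).comp
    (fun i : Fin 2 => ⟨i.succ, Fin.succ_ne_zero i⟩) fun i j hij => by simpa using hij

lemma exists_linearMap_det_eq {E : Type*} [AddCommGroup E] [Module ℝ E] {u v : E}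
    (huv : LinearIndependent ℝ ![u, v]) (hE : Module.finrank ℝ E = 2) (e₁ e₂ f₁ f₂ : ℝ) :
    ∃ φ : E →ₗ[ℝ] E, φ u = e₁ • u + e₂ • v ∧ φ v = f₁ • u + f₂ • v ∧
      LinearMap.det φ = e₁ * f₂ - f₁ * e₂ := by
  have hbasis : ∃ b : Module.Basis (Fin 2) ℝ E, b 0 = u ∧ b 1 = v :=
    ⟨basisOfLinearIndependentOfCardEqFinrank huv (by simp [hE]), by simp, by simp⟩
  obtain ⟨b, rfl, rfl⟩ := hbasis
  refine ⟨Matrix.toLin b b !![e₁, f₁; e₂, f₂], ?_, ?_, ?_⟩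
  · simp [Matrix.toLin_self]
  · simp [Matrix.toLin_self]
  · rw [LinearMap.det_toLin, Matrix.det_fin_two_of]

lemma norm_sq_smul_add_smul {E : Type*} [NormedAddCommGroup E] [InnerProductSpace ℝ E] {u v : E}
    (huv : ‖u‖ = ‖v‖) (e f : ℝ) : ‖e • u + f • v‖ ^ 2 =
      ‖u‖ ^ 2 * (e ^ 2 + f ^ 2 + 2 * Real.cos (InnerProductGeometry.angle u v) * e * f) := by
  rw [norm_add_sq_real, norm_smul, norm_smul, inner_smul_left, inner_smul_right,
    ← InnerProductGeometry.cos_angle_mul_norm_mul_norm, ← huv, mul_pow, mul_pow, Real.norm_eq_abs,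
    Real.norm_eq_abs, sq_abs, sq_abs, RCLike.conj_to_real]
  ring

lemma cos_angle_sq_lt_one {V Q : Type*} [NormedAddCommGroup V] [InnerProductSpace ℝ V]
    [MetricSpace Q] [NormedAddTorsor V Q] {x y z : Q} (hxyz : AffineIndependent ℝ ![x, y, z]) :
    Real.cos (∠ y x z) ^ 2 < 1 := by
  have hcol : ¬ Collinear ℝ {y, x, z} := by
    rwa [Set.insert_comm, ← affineIndependent_iff_not_collinear_set]
  nlinarith [EuclideanGeometry.sin_pos_of_not_collinear hcol, Real.sin_sq_add_cos_sq (∠ y x z)]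

lemma exists_isIsoscelesContainer_of_fitsSmaller {p r : Fin 3 → ℝ}
    (hSPR : AffineIndependent ℝ ![S, P, R]) (hdist : dist S P = dist S R)
    (hq : ∀ i, ![A, B, C] i = S + p i • (P - S) + r i • (R - S))
    (hF : FitsSmaller (Real.cos (∠ P S R)) p r) :
    ∃ S' P' R', IsIsoscelesContainer A B C S' P' R' ∧ triArea S' P' R' < triArea S P R := by
  obtain ⟨s₁, s₂, e₁, e₂, f₁, f₂, hdet_pos, hdet_lt, hiso, hmem⟩ := hF.exists_vertices
  obtain ⟨φ, hφu, hφv, hφ_det⟩ := exists_linearMap_det_eq (linearIndependent_sub_sub hSPR)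
    (by simp) e₁ e₂ f₁ f₂
  let S' := S + s₁ • (P - S) + s₂ • (R - S)
  let g : Pt →ᵃ[ℝ] Pt := AffineMap.mk' (fun X => φ (X - S) + S') φ S fun X => by simp
  have hgS : g S = S' := by simp [g]
  have hgP : g P - g S = e₁ • (P - S) + e₂ • (R - S) := by simp [g, ← hφu]
  have hgR : g R - g S = f₁ • (P - S) + f₂ • (R - S) := by simp [g, ← hφv]
  have hdet : LinearMap.det g.linear = e₁ * f₂ - f₁ * e₂ := hφ_det
  refine ⟨g S, g P, g R, ⟨?_, .inr <| .inl ?_, convexHull_min ?_ (convex_convexHull ℝ _)⟩, ?_⟩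
  · have hg : Function.Injective g := g.linear_injective_iff.1
      (LinearMap.equivOfDetNeZero g.linear (hdet ▸ hdet_pos.ne')).injective
    convert hSPR.map' g hg using 1
    ext i : 1
    fin_cases i <;> rfl
  · rw [dist_comm (g S), dist_eq_norm, dist_eq_norm, ← sq_eq_sq₀ (norm_nonneg _) (norm_nonneg _)]
    have huv : ‖P - S‖ = ‖R - S‖ := by simpa only [dist_eq_norm'] using hdist
    rw [hgR, hgP, norm_sq_smul_add_smul huv, norm_sq_smul_add_smul huv]
    exact congrArg (‖P - S‖ ^ 2 * ·) hiso.symm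
  · have hvertex : ∀ i, ![A, B, C] i ∈ tri (g S) (g P) (g R) := fun i => by
      obtain ⟨α, β, hα, hβ, hαβ, hp, hr⟩ := hmem i
      refine mem_convexHull_triple_iff.2 ⟨α, β, hα, hβ, hαβ, ?_⟩
      rw [hq, hp, hr, hgP, hgR, hgS]
      module
    rintro X (rfl | rfl | rfl)
    exacts [hvertex 0, hvertex 1, hvertex 2]
  · rw [triArea_affineMap, hdet, abs_of_pos hdet_pos]
    exact mul_lt_of_lt_one_left (triArea_pos hSPR) hdet_lt

lemma bary_nonneg {x y : ℝ} (hx : 0 ≤ x) (hy : 0 ≤ y) (hxy : x + y ≤ 1) (l : Fin 3) :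
    0 ≤ bary x y l := by
  fin_cases l <;> simp only [bary, Fin.reduceFinMk, Matrix.cons_val] <;> linarith

lemma eq_vertex_of_bary_eq_one {E : Type*} [AddCommGroup E] [Module ℝ E] {S P R : E} {x y : ℝ}
    (hx : 0 ≤ x) (hy : 0 ≤ y) (hxy : x + y ≤ 1) {l : Fin 3} (hl : bary x y l = 1) :
    S + x • (P - S) + y • (R - S) = ![S, P, R] l := by
  fin_cases l
  · obtain rfl : x = 0 := by linarith [(bary_zero x y).symm.trans hl]
    obtain rfl : y = 0 := by linarith [(bary_zero 0 y).symm.trans hl]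
    simp
  · obtain rfl : x = 1 := hl
    obtain rfl : y = 0 := by linarith
    simp
  · obtain rfl : y = 1 := hl
    obtain rfl : x = 0 := by linarith
    simp

lemma sub_vertex_eq_smul_of_bary_eq_zero {E : Type*} [AddCommGroup E] [Module ℝ E] {S P R : E}
    {x y : ℝ} {l m n : Fin 3} (hlm : l ≠ m) (hmn : m ≠ n) (hln : l ≠ n) (hm : bary x y m = 0) :
    S + x • (P - S) + y • (R - S) - ![S, P, R] l =
      bary x y n • (![S, P, R] n - ![S, P, R] l) := by
  have hsum : S + x • (P - S) + y • (R - S) - ![S, P, R] l =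
      bary x y m • (![S, P, R] m - ![S, P, R] l) + bary x y n • (![S, P, R] n - ![S, P, R] l) := by
    fin_cases l <;> fin_cases m <;> fin_cases n <;> simp [bary] at hlm hmn hln ⊢ <;> module
  rw [hsum, hm, zero_smul, zero_add]

lemma vertexAngle_eq (hABC : AffineIndependent ℝ ![A, B, C]) {i j k : Fin 3} (hij : i ≠ j)
    (hjk : j ≠ k) (hik : i ≠ k) :
    vertexAngle (![A, B, C] i) A B C = ∠ (![A, B, C] j) (![A, B, C] i) (![A, B, C] k) := by
  have hBA : B ≠ A := hABC.injective.ne (a₁ := 1) (a₂ := 0) (by decide)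
  have hCA : C ≠ A := hABC.injective.ne (a₁ := 2) (a₂ := 0) (by decide)
  have hCB : C ≠ B := hABC.injective.ne (a₁ := 2) (a₂ := 1) (by decide)
  fin_cases i <;> fin_cases j <;> fin_cases k <;>
    simp [vertexAngle, hBA, hCA, hCB, EuclideanGeometry.angle_comm] at hij hjk hik ⊢

lemma noncollinear_of_affineIndependent {p r : Fin 3 → ℝ} (hABC : AffineIndependent ℝ ![A, B, C])
    (hq : ∀ i, ![A, B, C] i = S + p i • (P - S) + r i • (R - S)) : Noncollinear p r := by
  intro a b h hab
  by_contra hne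
  have hsq : a ^ 2 + b ^ 2 ≠ 0 := by
    contrapose! hne
    constructor <;> nlinarith
  refine affineIndependent_iff_not_collinear.1 hABC
    ((collinear_iff_of_mem (Set.mem_range_self 0)).2 ⟨b • (P - S) - a • (R - S), ?_⟩)
  rintro _ ⟨i, rfl⟩
  obtain ⟨t, hp, hr⟩ : ∃ t, p i = p 0 + t * b ∧ r i = r 0 - t * a := by
    refine ⟨((p i - p 0) * b - (r i - r 0) * a) / (a ^ 2 + b ^ 2), ?_, ?_⟩
    · field_simp
      linear_combination a * hab i - a * hab 0
    · field_simp
      linear_combination b * hab i - b * hab 0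
  refine ⟨t, ?_⟩
  rw [hq i, hq 0, hp, hr, vadd_eq_add]
  module

/-- The triangles `A B C` and `S P R` have a common side `X Y` and equal angles at its endpoint
`X`. -/
def HasCommonSideAndAngle (A B C S P R : Pt) : Prop :=
  ∃ X Y : Pt, X ≠ Y ∧
    X ∈ ({A, B, C} : Set Pt) ∧ Y ∈ ({A, B, C} : Set Pt) ∧
    X ∈ ({S, P, R} : Set Pt) ∧ Y ∈ ({S, P, R} : Set Pt) ∧
    vertexAngle X A B C = vertexAngle X S P R

lemma hasCommonSideAndAngle_of_sharesSideAndAngle {p r : Fin 3 → ℝ}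
    (hABC : AffineIndependent ℝ ![A, B, C]) (hSPR : AffineIndependent ℝ ![S, P, R])
    (hT : InUnitTriangle p r) (hq : ∀ i, ![A, B, C] i = S + p i • (P - S) + r i • (R - S))
    (hS : SharesSideAndAngle p r) : HasCommonSideAndAngle A B C S P R := by
  obtain ⟨i, j, k, hij, hjk, hik, l, m, hlm, hil, hjm, hkm⟩ := hS
  obtain ⟨n, hln, hmn⟩ := Fin.exists_ne_and_ne_of_two_lt l m (by lia)
  have hvertex : ∀ i l, bary (p i) (r i) l = 1 → ![A, B, C] i = ![S, P, R] l := fun i l h =>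
    (hq i).trans
      (eq_vertex_of_bary_eq_one (hT.fst_nonneg i) (hT.snd_nonneg i) (hT.add_le_one i) h)
  have hi := hvertex i l hil
  have hj := hvertex j m hjm
  have hk : ![A, B, C] k - ![S, P, R] l =
      bary (p k) (r k) n • (![S, P, R] n - ![S, P, R] l) := by
    rw [hq k, sub_vertex_eq_smul_of_bary_eq_zero hlm hmn.symm hln.symm hkm]
  have hpos : 0 < bary (p k) (r k) n := by
    refine (bary_nonneg (hT.fst_nonneg k) (hT.snd_nonneg k) (hT.add_le_one k) n).lt_of_ne'
      fun h₀ => ?_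
    rw [h₀, zero_smul, sub_eq_zero, ← hi] at hk
    exact hik (hABC.injective hk).symm
  have hmem : ∀ {A B C : Pt} (i : Fin 3), ![A, B, C] i ∈ ({A, B, C} : Set Pt) := by
    intro A B C i
    fin_cases i <;> simp
  refine ⟨![A, B, C] i, ![A, B, C] j, hABC.injective.ne hij, hmem i, hmem j, hi ▸ hmem l,
    hj ▸ hmem m, ?_⟩
  rw [vertexAngle_eq hABC hij hjk hik, hi, vertexAngle_eq hSPR hlm hmn.symm hln.symm,
    hj, EuclideanGeometry.angle, EuclideanGeometry.angle, vsub_eq_sub, vsub_eq_sub, vsub_eq_sub, hk,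
    InnerProductGeometry.angle_smul_right_of_pos _ _ hpos]

lemma IsMinIsoscelesContainer.hasCommonSideAndAngle_of_dist_eq
    (hABC : AffineIndependent ℝ ![A, B, C]) (hmin : IsMinIsoscelesContainer A B C S P R)
    (hdist : dist S P = dist S R) : HasCommonSideAndAngle A B C S P R := by
  obtain ⟨⟨hSPR, -, hsub⟩, hle⟩ := hmin
  have hcoord : ∀ i, ∃ x y : ℝ, 0 ≤ x ∧ 0 ≤ y ∧ x + y ≤ 1 ∧
      ![A, B, C] i = S + x • (P - S) + y • (R - S) := fun i =>
    mem_convexHull_triple_iff.1 (hsub (subset_convexHull ℝ _ (by fin_cases i <;> simp)))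
  choose p r hp hr hpr hq using hcoord
  have hT : InUnitTriangle p r := ⟨hp, hr, hpr⟩
  refine hasCommonSideAndAngle_of_sharesSideAndAngle hABC hSPR hT hq
    ((fitsSmaller_or_sharesSideAndAngle (cos_angle_sq_lt_one hSPR) hT
      (noncollinear_of_affineIndependent hABC hq)).resolve_left fun hF => ?_)
  obtain ⟨S', P', R', hcont, hlt⟩ := exists_isIsoscelesContainer_of_fitsSmaller hSPR hdist hq hF
  exact (hle S' P' R' hcont).not_gt hlt

lemma insert_rotate {α : Type*} (x y z : α) : ({y, z, x} : Set α) = {x, y, z} := by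
  rw [Set.pair_comm z x, Set.insert_comm]

lemma affineIndependent_rotate {V Q : Type*} [AddCommGroup V] [Module ℝ V] [AddTorsor V Q]
    {x y z : Q} (hxyz : AffineIndependent ℝ ![x, y, z]) : AffineIndependent ℝ ![y, z, x] := by
  rwa [affineIndependent_iff_not_collinear_set, insert_rotate,
    ← affineIndependent_iff_not_collinear_set]

lemma IsMinIsoscelesContainer.rotate (hmin : IsMinIsoscelesContainer A B C S P R) :
    IsMinIsoscelesContainer A B C P R S := by
  obtain ⟨⟨hSPR, hiso, hsub⟩, hle⟩ := hmin
  have htri : tri P R S = tri S P R := by rw [tri, tri, insert_rotate]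
  refine ⟨⟨affineIndependent_rotate hSPR, ?_, by rwa [htri]⟩, by rwa [triArea, htri, ← triArea]⟩
  unfold IsIsosceles at *
  tauto

lemma HasCommonSideAndAngle.of_rotate (hSPR : AffineIndependent ℝ ![S, P, R])
    (h : HasCommonSideAndAngle A B C P R S) : HasCommonSideAndAngle A B C S P R := by
  obtain ⟨X, Y, hXY, hX, hY, hX', hY', hangle⟩ := h
  rw [insert_rotate] at hX' hY'
  refine ⟨X, Y, hXY, hX, hY, hX', hY', hangle.trans ?_⟩
  have hPS : P ≠ S := hSPR.injective.ne (a₁ := 1) (a₂ := 0) (by decide)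
  have hRS : R ≠ S := hSPR.injective.ne (a₁ := 2) (a₂ := 0) (by decide)
  have hRP : R ≠ P := hSPR.injective.ne (a₁ := 2) (a₂ := 1) (by decide)
  obtain rfl | rfl | rfl := hX' <;>
    simp [vertexAngle, hPS, hRS, hRP, hPS.symm, hRS.symm, EuclideanGeometry.angle_comm]

end TrianglesInThePlane

/-- a minimum area isosceles container `T' = S P R` of a triangle
`A B C` shares a side with `A B C` (two common vertices `X ≠ Y`), and the two
triangles have equal angles at one endpoint `X` of this common side. -/
theorem statement0 (A B C S P R : Pt)
    (hABC : AffineIndependent ℝ ![A, B, C])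
    (hmin : IsMinIsoscelesContainer A B C S P R) :
    ∃ X Y : Pt, X ≠ Y ∧
      X ∈ ({A, B, C} : Set Pt) ∧ Y ∈ ({A, B, C} : Set Pt) ∧
      X ∈ ({S, P, R} : Set Pt) ∧ Y ∈ ({S, P, R} : Set Pt) ∧
      vertexAngle X A B C = vertexAngle X S P R := by
  have hSPR := hmin.1.1
  rcases hmin.1.2.1 with h | h | h
  · exact ((hmin.rotate.rotate.hasCommonSideAndAngle_of_dist_eq hABC
      (by rw [← h, dist_comm])).of_rotate (affineIndependent_rotate hSPR)).of_rotate hSPR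
  · exact hmin.hasCommonSideAndAngle_of_dist_eq hABC (by rw [← h, dist_comm])
  · exact (hmin.rotate.hasCommonSideAndAngle_of_dist_eq hABC
      (by rw [← h, dist_comm])).of_rotate hSPR
end
end

section
/- Let ABC be a triangle with side lengths a < b < c, and let T' be a minimum area isosceles container for ABC. Then T' equals (as a convex set) one of the nine special containers associated with ABC: a special container of the first kind (AB'C, ABC', or ABC''), of the second kind (AB₁C, ABC₁, or ABC₂), or of the third kind (ĀBC, AB̄C, or ABC̄). -/
open EuclideanGeometry MeasureTheory Real

noncomputable section

/-!
Let `T` be an isosceles triangle of least area containing the three vertices of a triangle. If `T`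
could be perturbed to a smaller isosceles triangle still containing them, we would have a
contradiction, and each of the following perturbations excludes a configuration.

* Shrinking `T` towards one of its vertices: every side of `T` contains one of the three points.
* Turning `T` slightly while rescaling it to keep the contacts: some side contains two of them.
* Narrowing the base of `T`: if neither of these two is an endpoint of the side, then the third
  point lies on both other sides, that is, it is the opposite vertex of `T`, and the base can be
  narrowed. So one of the points is a vertex of `T`.
* Sliding a vertex `v` of `T` along the side that joins it to a common vertex `u`: hence `T` has two
  of the points as vertices.
* Moving the remaining vertex of `T`: the third point must lie on a side ending there.

So `T` is a triangle `X Y W` with `X`, `Y`, `Z` the given points in some order and `Z` on the side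
`X W`. The pair of equal sides of `X Y W` determines the kind of the special container, and
the inequalities between the three side lengths leave three of the six orders possible.
-/

namespace IsoscelesContainer

open Filter Topology

section Plane

/-- Twice the signed area of the triangle `P Q R`. -/
def cross (P Q R : Pt) : ℝ := (Q 0 - P 0) * (R 1 - P 1) - (Q 1 - P 1) * (R 0 - P 0)

lemma pt_ext {X Y : Pt} (h₀ : X 0 = Y 0) (h₁ : X 1 = Y 1) : X = Y := by
  ext i
  fin_cases i <;> assumption

lemma dist_sq_eq (P Q : Pt) : dist P Q ^ 2 = (P 0 - Q 0) ^ 2 + (P 1 - Q 1) ^ 2 := by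
  rw [EuclideanSpace.dist_sq_eq, Fin.sum_univ_two, Real.dist_eq, Real.dist_eq, sq_abs, sq_abs]

lemma dist_eq_dist_iff_sq {P Q P' Q' : Pt} :
    dist P Q = dist P' Q' ↔ dist P Q ^ 2 = dist P' Q' ^ 2 :=
  (sq_eq_sq₀ dist_nonneg dist_nonneg).symm

lemma cross_rotate (P Q R : Pt) : cross Q R P = cross P Q R := by
  simp only [cross]; ring

lemma cross_rotate' (P Q R : Pt) : cross R P Q = cross P Q R := by
  simp only [cross]; ring

lemma cross_swap (P Q R : Pt) : cross P R Q = -cross P Q R := by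
  simp only [cross]; ring

lemma affineIndependent_iff_cross_ne_zero {P Q R : Pt} :
    AffineIndependent ℝ ![P, Q, R] ↔ cross P Q R ≠ 0 := by
  have hpair : AffineIndependent ℝ ![P, Q, R] ↔ LinearIndependent ℝ ![Q - P, R - P] := by
    have hvec : (fun i : {i : Fin 3 // i ≠ 0} => ![P, Q, R] i -ᵥ ![P, Q, R] 0) ∘
        finSuccAboveEquiv (0 : Fin 3) = ![Q - P, R - P] := by
      ext1 i
      fin_cases i <;> rfl
    rw [affineIndependent_iff_linearIndependent_vsub ℝ _ (0 : Fin 3),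
      ← linearIndependent_equiv (finSuccAboveEquiv (0 : Fin 3)), hvec]
  rw [hpair, LinearIndependent.pair_iff]
  have hcoord (s t : ℝ) : s • (Q - P) + t • (R - P) = 0 ↔
      s * (Q 0 - P 0) + t * (R 0 - P 0) = 0 ∧ s * (Q 1 - P 1) + t * (R 1 - P 1) = 0 :=
    ⟨fun h => ⟨congrArg (· 0) h, congrArg (· 1) h⟩, fun h => pt_ext h.1 h.2⟩
  simp only [hcoord, cross]
  constructor
  · intro h h0
    have hQ₀ := (h (R 0 - P 0) (-(Q 0 - P 0)) ⟨by ring, by linear_combination -h0⟩).2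
    have hQ₁ := (h (R 1 - P 1) (-(Q 1 - P 1)) ⟨by linear_combination h0, by ring⟩).2
    exact one_ne_zero (h 1 0 ⟨by linear_combination -hQ₀, by linear_combination -hQ₁⟩).1
  · rintro h s t ⟨h₀, h₁⟩
    constructor <;> refine (mul_eq_zero_iff_right h).1 ?_
    · linear_combination (R 1 - P 1) * h₀ - (R 0 - P 0) * h₁
    · linear_combination (Q 0 - P 0) * h₁ - (Q 1 - P 1) * h₀

lemma triple_rotate {α : Type*} (a b c : α) : ({b, c, a} : Set α) = {a, b, c} := by
  rw [Set.insert_comm, Set.pair_comm, Set.insert_comm, Set.pair_comm]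

lemma tri_rotate (P Q R : Pt) : tri Q R P = tri P Q R := by
  rw [tri, tri, triple_rotate]

lemma tri_swap (P Q R : Pt) : tri P R Q = tri P Q R := by
  rw [tri, tri, Set.pair_comm]

end Plane

section Area

/-- The area of the triangle with vertices `(0, 0)`, `(1, 0)`, `(0, 1)`; it stays symbolic because
areas are only ever compared. -/
def unitArea : ℝ := triArea 0 (EuclideanSpace.single 0 1) (EuclideanSpace.single 1 1)

lemma unitArea_pos : 0 < unitArea := by
  have hind : AffineIndependent ℝ
      ![(0 : Pt), EuclideanSpace.single 0 1, EuclideanSpace.single 1 1] := by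
    rw [affineIndependent_iff_cross_ne_zero]
    simp [cross]
  refine ENNReal.toReal_pos (Measure.measure_pos_of_nonempty_interior _ ?_).ne'
    ((Set.toFinite _).isCompact_convexHull ℝ).measure_lt_top.ne
  rw [tri, interior_convexHull_nonempty_iff_affineSpan_eq_top,
    ← hind.affineSpan_eq_top_iff_card_eq_finrank_add_one.2 (by simp)]
  simp only [Matrix.range_cons, Matrix.range_empty, Set.union_empty, Set.singleton_union]

lemma tri_eq_image (L : Pt →ₗ[ℝ] Pt) {P Q R : Pt} {x y : Pt} (hx : L x = Q - P)
    (hy : L y = R - P) : tri P Q R = (P + ·) '' (L '' tri 0 x y) := by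
  have himage : L '' tri 0 x y = tri 0 (Q - P) (R - P) := by
    rw [tri, tri, LinearMap.image_convexHull, Set.image_insert_eq, Set.image_pair, map_zero, hx, hy]
  have hvadd := convexHull_vadd (𝕜 := ℝ) P ({0, Q - P, R - P} : Set Pt)
  rw [himage]
  simpa [tri, ← Set.image_vadd, Set.image_insert_eq, Set.image_pair] using hvadd

lemma triArea_eq (P Q R : Pt) : triArea P Q R = |cross P Q R| * unitArea := by
  let b := (EuclideanSpace.basisFun (Fin 2) ℝ).toBasis
  let L : Pt →ₗ[ℝ] Pt := b.constr ℝ ![Q - P, R - P]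
  have hdet : LinearMap.det L = cross P Q R := by
    rw [← LinearMap.det_toMatrix b, Matrix.det_fin_two]
    simp [LinearMap.toMatrix_apply, L, b, cross, mul_comm]
  have hQ : L (EuclideanSpace.single 0 1) = Q - P := by simp [L, b]
  have hR : L (EuclideanSpace.single 1 1) = R - P := by simp [L, b]
  rw [triArea, tri_eq_image L hQ hR, Set.image_add_left, measure_preimage_add,
    Measure.addHaar_image_linearMap, ENNReal.toReal_mul, ENNReal.toReal_ofReal (abs_nonneg _),
    hdet, unitArea, triArea]

end Area

section Barycentric

variable {P Q R X : Pt}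

/-- The barycentric coordinate of `X` at the vertex `P` of the triangle `P Q R`. -/
def bary (P Q R X : Pt) : ℝ := cross X Q R / cross P Q R

lemma bary_self (h : cross P Q R ≠ 0) : bary P Q R P = 1 := div_self h

lemma bary_swap (P Q R X : Pt) : bary P R Q X = bary P Q R X := by
  rw [bary, bary, cross_swap, cross_swap P, neg_div_neg_eq]

lemma bary_lineMap (P Q R X Y : Pt) (e : ℝ) :
    bary P Q R (AffineMap.lineMap X Y e) = (1 - e) * bary P Q R X + e * bary P Q R Y := by
  simp only [bary, cross, AffineMap.lineMap_apply_module, PiLp.add_apply, PiLp.smul_apply,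
    smul_eq_mul]
  ring

lemma bary_smul_add_smul_add_smul (h : cross P Q R ≠ 0) {a b c : ℝ} (habc : a + b + c = 1) :
    bary P Q R (a • P + b • Q + c • R) = a := by
  rw [bary, div_eq_iff h]
  obtain rfl : c = 1 - a - b := by linear_combination habc
  simp only [cross, PiLp.add_apply, PiLp.smul_apply, smul_eq_mul]
  ring

lemma bary_add_bary_add_bary (h : cross P Q R ≠ 0) (X : Pt) :
    bary P Q R X + bary Q R P X + bary R P Q X = 1 := by
  rw [bary, bary, bary, cross_rotate P Q R, cross_rotate' P Q R, ← add_div, ← add_div,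
    div_eq_one_iff_eq h]
  simp only [cross]
  ring

lemma bary_smul_eq (h : cross P Q R ≠ 0) (X : Pt) :
    bary P Q R X • P + bary Q R P X • Q + bary R P Q X • R = X := by
  rw [bary, bary, bary, cross_rotate P Q R, cross_rotate' P Q R]
  refine pt_ext ?_ ?_ <;> simp only [PiLp.add_apply, PiLp.smul_apply, smul_eq_mul] <;>
    field_simp <;> simp only [cross] <;> ring

lemma mem_tri_iff_exists : X ∈ tri P Q R ↔
    ∃ a b c : ℝ, 0 ≤ a ∧ 0 ≤ b ∧ 0 ≤ c ∧ a + b + c = 1 ∧ a • P + b • Q + c • R = X := by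
  constructor
  · intro hX
    rw [tri, ← convexJoin_singleton_segment, mem_convexJoin] at hX
    obtain ⟨_, rfl, _, ⟨b, c, hb, hc, hbc, rfl⟩, s, t, hs, ht, hst, rfl⟩ := hX
    refine ⟨s, t * b, t * c, hs, by positivity, by positivity, ?_, by module⟩
    linear_combination t * hbc + hst
  · rintro ⟨a, b, c, ha, hb, hc, habc, hX⟩
    refine mem_convexHull_of_exists_fintype ![a, b, c] ![P, Q, R] ?_ ?_ ?_ ?_
    · simp [Fin.forall_fin_succ, ha, hb, hc]
    · simpa [Fin.sum_univ_three] using habc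
    · simp [Fin.forall_fin_succ]
    · simpa [Fin.sum_univ_three] using hX

lemma mem_tri_iff (h : cross P Q R ≠ 0) :
    X ∈ tri P Q R ↔ 0 ≤ bary P Q R X ∧ 0 ≤ bary Q R P X ∧ 0 ≤ bary R P Q X := by
  rw [mem_tri_iff_exists]
  constructor
  · rintro ⟨a, b, c, ha, hb, hc, habc, rfl⟩
    have hQ : cross Q R P ≠ 0 := by rwa [cross_rotate]
    have hR : cross R P Q ≠ 0 := by rwa [cross_rotate]
    refine ⟨?_, ?_, ?_⟩
    · rwa [bary_smul_add_smul_add_smul h habc]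
    · rwa [add_assoc, add_comm, bary_smul_add_smul_add_smul hQ (by linarith)]
    · rwa [add_comm, ← add_assoc, bary_smul_add_smul_add_smul hR (by linarith)]
  · rintro ⟨hP, hQ, hR⟩
    exact ⟨_, _, _, hP, hQ, hR, bary_add_bary_add_bary h X, bary_smul_eq h X⟩

lemma mem_segment_of_bary_eq_zero (h : cross P Q R ≠ 0) (hX : X ∈ tri P Q R)
    (h0 : bary P Q R X = 0) : X ∈ segment ℝ Q R := by
  obtain ⟨-, hQ, hR⟩ := (mem_tri_iff h).1 hX
  refine ⟨_, _, hQ, hR, ?_, ?_⟩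
  · rw [← bary_add_bary_add_bary h X, h0, zero_add]
  · simpa [h0] using bary_smul_eq h X

lemma bary_eq_zero_of_mem_segment (h : X ∈ segment ℝ Q R) : bary P Q R X = 0 := by
  obtain ⟨a, b, -, -, hab, rfl⟩ := h
  obtain rfl := eq_sub_of_add_eq hab
  simp only [bary, div_eq_zero_iff]
  left
  simp only [cross, PiLp.add_apply, PiLp.smul_apply, smul_eq_mul]
  ring

lemma notMem_segment_of_cross_ne_zero (h : cross P Q R ≠ 0) : P ∉ segment ℝ Q R := fun hP =>
  one_ne_zero ((bary_self h).symm.trans (bary_eq_zero_of_mem_segment hP))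

lemma eq_of_mem_segment_of_mem_segment (h : cross P Q R ≠ 0) (hP : X ∈ segment ℝ P Q)
    (hR : X ∈ segment ℝ Q R) : X = Q := by
  have hsum := bary_smul_eq h X
  have hone := bary_add_bary_add_bary h X
  rw [bary_eq_zero_of_mem_segment hR, bary_eq_zero_of_mem_segment hP, zero_add, add_zero] at hone
  simpa [bary_eq_zero_of_mem_segment hR, bary_eq_zero_of_mem_segment hP, hone] using hsum.symm

end Barycentric

section Similarity

/-- The rotation by a right angle about the origin. -/
def quarterTurn (X : Pt) : Pt := !₂[-X 1, X 0]

/-- The similarity of the plane given in complex notation by `z ↦ (a + b i) z + t`; it is the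
identity for `a = 1`, `b = 0`, `t = 0`. -/
def similarity (a b : ℝ) (t X : Pt) : Pt := a • X + b • quarterTurn X + t

variable {a b : ℝ} {t : Pt}

lemma similarity_apply_zero (X : Pt) : similarity a b t X 0 = a * X 0 - b * X 1 + t 0 := by
  simp only [similarity, quarterTurn, PiLp.add_apply, PiLp.smul_apply, smul_eq_mul,
    Matrix.cons_val_zero]
  ring

lemma similarity_apply_one (X : Pt) : similarity a b t X 1 = a * X 1 + b * X 0 + t 1 := by
  simp only [similarity, quarterTurn, PiLp.add_apply, PiLp.smul_apply, smul_eq_mul,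
    Matrix.cons_val_one, Matrix.cons_val_zero]

lemma similarity_surjective (h : a ^ 2 + b ^ 2 ≠ 0) : Function.Surjective (similarity a b t) := by
  intro Y
  refine ⟨!₂[(a * (Y 0 - t 0) + b * (Y 1 - t 1)) / (a ^ 2 + b ^ 2),
    (a * (Y 1 - t 1) - b * (Y 0 - t 0)) / (a ^ 2 + b ^ 2)], pt_ext ?_ ?_⟩
  · rw [similarity_apply_zero]
    simp only [Matrix.cons_val_zero, Matrix.cons_val_one]
    field_simp
    ring
  · rw [similarity_apply_one]
    simp only [Matrix.cons_val_zero, Matrix.cons_val_one]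
    field_simp
    ring

lemma cross_similarity (P Q R : Pt) :
    cross (similarity a b t P) (similarity a b t Q) (similarity a b t R) =
      (a ^ 2 + b ^ 2) * cross P Q R := by
  simp only [cross, similarity_apply_zero, similarity_apply_one]
  ring

lemma dist_similarity_sq (P Q : Pt) :
    dist (similarity a b t P) (similarity a b t Q) ^ 2 = (a ^ 2 + b ^ 2) * dist P Q ^ 2 := by
  simp only [dist_sq_eq, similarity_apply_zero, similarity_apply_one]
  ring

lemma bary_similarity (h : a ^ 2 + b ^ 2 ≠ 0) (P Q R X : Pt) :
    bary (similarity a b t P) (similarity a b t Q) (similarity a b t R) (similarity a b t X) =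
      bary P Q R X := by
  rw [bary, cross_similarity, cross_similarity, mul_div_mul_left _ _ h, bary]

lemma isIsosceles_similarity (h : a ^ 2 + b ^ 2 ≠ 0) {P Q R : Pt} :
    IsIsosceles (similarity a b t P) (similarity a b t Q) (similarity a b t R) ↔
      IsIsosceles P Q R := by
  simp only [IsIsosceles, dist_eq_dist_iff_sq, dist_similarity_sq, mul_right_inj' h]

lemma mem_tri_similarity (h : a ^ 2 + b ^ 2 ≠ 0) {P Q R X : Pt} (hPQR : cross P Q R ≠ 0) :
    similarity a b t X ∈ tri (similarity a b t P) (similarity a b t Q) (similarity a b t R) ↔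
      X ∈ tri P Q R := by
  rw [mem_tri_iff hPQR, mem_tri_iff (by rw [cross_similarity]; exact mul_ne_zero h hPQR),
    bary_similarity h, bary_similarity h, bary_similarity h]

lemma similarity_eq_lineMap (a b : ℝ) (t X : Pt) (e : ℝ) :
    similarity (1 + e * (a - 1)) (e * b) (e • t) X =
      AffineMap.lineMap X (similarity a b t X) e := by
  simp only [similarity, AffineMap.lineMap_apply_module]
  module

end Similarity

section MinContainer

/-- `S P R` is an isosceles triangle of least area among those containing the set `K`; areas are
compared through `|cross|`, so no measure theory is involved. -/
structure IsMinContainer (K : Set Pt) (S P R : Pt) : Prop where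
  cross_ne_zero : cross S P R ≠ 0
  isIsosceles : IsIsosceles S P R
  subset : K ⊆ tri S P R
  abs_cross_le : ∀ S' P' R' : Pt, cross S' P' R' ≠ 0 → IsIsosceles S' P' R' →
    K ⊆ tri S' P' R' → |cross S P R| ≤ |cross S' P' R'|

variable {K : Set Pt} {u v w : Pt}

lemma isIsosceles_rotate : IsIsosceles v w u ↔ IsIsosceles u v w := by
  unfold IsIsosceles
  tauto

lemma isIsosceles_swap : IsIsosceles u w v ↔ IsIsosceles u v w := by
  simp only [IsIsosceles, dist_comm w v, dist_comm v u, dist_comm u w, eq_comm]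
  tauto

lemma IsMinContainer.rotate (h : IsMinContainer K u v w) : IsMinContainer K v w u where
  cross_ne_zero := by rw [cross_rotate]; exact h.cross_ne_zero
  isIsosceles := isIsosceles_rotate.2 h.isIsosceles
  subset := by rw [tri_rotate]; exact h.subset
  abs_cross_le := by rw [cross_rotate]; exact h.abs_cross_le

lemma IsMinContainer.swap (h : IsMinContainer K u v w) : IsMinContainer K u w v where
  cross_ne_zero := by rw [cross_swap]; exact neg_ne_zero.2 h.cross_ne_zero
  isIsosceles := isIsosceles_swap.2 h.isIsosceles
  subset := by rw [tri_swap]; exact h.subset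
  abs_cross_le := by rw [cross_swap, abs_neg]; exact h.abs_cross_le

lemma IsMinContainer.bary_nonneg (h : IsMinContainer K u v w) {x : Pt} (hx : x ∈ K) :
    0 ≤ bary u v w x ∧ 0 ≤ bary v w u x ∧ 0 ≤ bary w u v x :=
  (mem_tri_iff h.cross_ne_zero).1 (h.subset hx)

lemma IsMinContainer.false_of_smaller (h : IsMinContainer K u v w) {u' v' w' : Pt} {ρ : ℝ}
    (hρ₀ : 0 < ρ) (hρ₁ : ρ < 1) (hcross : cross u' v' w' = ρ * cross u v w)
    (hiso : IsIsosceles u' v' w') (hsub : K ⊆ tri u' v' w') : False := by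
  have hle := h.abs_cross_le u' v' w'
    (by rw [hcross]; exact mul_ne_zero hρ₀.ne' h.cross_ne_zero) hiso hsub
  rw [hcross, abs_mul, abs_of_pos hρ₀] at hle
  exact hle.not_gt (mul_lt_of_lt_one_left (abs_pos.2 h.cross_ne_zero) hρ₁)

lemma eventually_nhdsGT_zero_pos {f : ℝ → ℝ} (hf : ContinuousAt f 0) (h : 0 < f 0) :
    ∀ᶠ e in 𝓝[>] 0, 0 < f e :=
  (hf.eventually_const_lt h).filter_mono nhdsWithin_le_nhds

lemma eventually_bary_lineMap_nonneg {x y : Pt} (hx : 0 ≤ bary u v w x)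
    (hxy : 0 < bary u v w x ∨ 0 ≤ bary u v w y) :
    ∀ᶠ e : ℝ in 𝓝[>] 0, 0 ≤ bary u v w (AffineMap.lineMap x y e) := by
  simp only [bary_lineMap]
  rcases hxy with hpos | hy
  · refine (eventually_nhdsGT_zero_pos (by fun_prop) ?_).mono fun e he => he.le
    simpa using hpos
  · filter_upwards [Ioo_mem_nhdsGT one_pos] with e he
    have := mul_nonneg (sub_nonneg.2 he.2.le) hx
    have := mul_nonneg he.1.le hy
    linarith

lemma IsMinContainer.false_of_similarity_mem (h : IsMinContainer K u v w) {a b : ℝ} {t : Pt}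
    (hab : 1 < a ^ 2 + b ^ 2) (hK : ∀ x ∈ K, similarity a b t x ∈ tri u v w) : False := by
  have hab₀ : a ^ 2 + b ^ 2 ≠ 0 := by linarith
  obtain ⟨u', rfl⟩ := similarity_surjective (t := t) hab₀ u
  obtain ⟨v', rfl⟩ := similarity_surjective (t := t) hab₀ v
  obtain ⟨w', rfl⟩ := similarity_surjective (t := t) hab₀ w
  have hcross := h.cross_ne_zero
  rw [cross_similarity] at hcross
  refine h.false_of_smaller (inv_pos.2 (one_pos.trans hab)) (inv_lt_one_of_one_lt₀ hab)
    ?_ ((isIsosceles_similarity hab₀).1 h.isIsosceles)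
    fun x hx => (mem_tri_similarity hab₀ (right_ne_zero_of_mul hcross)).1 (hK x hx)
  rw [cross_similarity, inv_mul_cancel_left₀ hab₀]

/-- For `g = similarity a b t`, the expanding similarities `1 + e (g - 1)` carry `K` into the
triangle for small `e > 0`, so the inverse images of the triangle are smaller containers. -/
lemma IsMinContainer.false_of_expanding (hK : K.Finite) (h : IsMinContainer K u v w) {a b : ℝ}
    {t : Pt} (ha : 1 ≤ a) (hab : 1 < a ^ 2 + b ^ 2)
    (hu : ∀ x ∈ K, 0 < bary u v w x ∨ 0 ≤ bary u v w (similarity a b t x))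
    (hv : ∀ x ∈ K, 0 < bary v w u x ∨ 0 ≤ bary v w u (similarity a b t x))
    (hw : ∀ x ∈ K, 0 < bary w u v x ∨ 0 ≤ bary w u v (similarity a b t x)) : False := by
  have hmem : ∀ᶠ e : ℝ in 𝓝[>] 0, ∀ x ∈ K,
      AffineMap.lineMap x (similarity a b t x) e ∈ tri u v w := by
    refine (eventually_all_finite hK).2 fun x hx => ?_
    obtain ⟨hxu, hxv, hxw⟩ := h.bary_nonneg hx
    filter_upwards [eventually_bary_lineMap_nonneg hxu (hu x hx),
      eventually_bary_lineMap_nonneg hxv (hv x hx),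
      eventually_bary_lineMap_nonneg hxw (hw x hx)] with e heu hev hew
    exact (mem_tri_iff h.cross_ne_zero).2 ⟨heu, hev, hew⟩
  obtain ⟨e, he, he₀, he₁⟩ := (hmem.and (Ioo_mem_nhdsGT one_pos)).exists
  have hk₁ : 1 < (1 + e * (a - 1)) ^ 2 + (e * b) ^ 2 := by
    have hlin : 0 ≤ e * (1 - e) * (a - 1) :=
      mul_nonneg (mul_nonneg he₀.le (by linarith)) (by linarith)
    have hquad : 0 < e ^ 2 * (a ^ 2 + b ^ 2 - 1) := mul_pos (pow_pos he₀ 2) (by linarith)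
    linarith
  exact h.false_of_similarity_mem hk₁ fun x hx => by rw [similarity_eq_lineMap]; exact he x hx

lemma IsMinContainer.exists_mem_segment (hK : K.Finite) (h : IsMinContainer K u v w) :
    ∃ x ∈ K, x ∈ segment ℝ v w := by
  by_contra! hne
  have hcross := h.cross_ne_zero
  have hg (x : Pt) : similarity 2 0 (-u) x = AffineMap.lineMap u x (2 : ℝ) := by
    simp only [similarity, AffineMap.lineMap_apply_module]
    module
  refine h.false_of_expanding hK (a := 2) (b := 0) (t := -u) one_le_two (by norm_num)
    (fun x hx => Or.inl ?_) (fun x hx => Or.inr ?_) (fun x hx => Or.inr ?_)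
  · refine (h.bary_nonneg hx).1.lt_of_ne' fun h0 => ?_
    exact hne x hx (mem_segment_of_bary_eq_zero hcross (h.subset hx) h0)
  · rw [hg, bary_lineMap, bary_eq_zero_of_mem_segment (right_mem_segment ℝ w u)]
    linarith [(h.bary_nonneg hx).2.1]
  · rw [hg, bary_lineMap, bary_eq_zero_of_mem_segment (left_mem_segment ℝ u v)]
    linarith [(h.bary_nonneg hx).2.2]

/-- Multiplication by `1 + i` changes the coordinate of the contact point `p` by `l`, and those of
the contact points on the other two sides by `m` and `n`. The real part `a` and the translation `t`
are chosen to make up for these three changes at once. -/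
lemma bary_similarity_of_rescaling (h : cross u v w ≠ 0) {a σ l m n : ℝ} {t p : Pt}
    (ha : a = 1 + σ * (l + m + n)) (ht : t = -(σ • (l • u + m • v + n • w)))
    (hl : l = bary u v w (similarity 1 1 0 p) - bary u v w p) :
    bary u v w (similarity a σ t p) = a * bary u v w p := by
  have hexpand : bary u v w (similarity a σ t p) =
      a * bary u v w p + σ * (bary u v w (similarity 1 1 0 p) - bary u v w p - l) := by
    rw [ha, ht]
    simp only [bary]
    field_simp
    simp only [cross, similarity_apply_zero, similarity_apply_one, PiLp.neg_apply, PiLp.add_apply,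
      PiLp.smul_apply, smul_eq_mul, PiLp.zero_apply]
    ring
  rw [hexpand, ← hl, sub_self, mul_zero, add_zero]

/-- A rotation by a small angle, the triangle being rescaled so that its sides keep touching their
contact points, changes the area to first order by an amount which is odd in the angle; hence
turning in one of the two directions shrinks the triangle. -/
lemma IsMinContainer.false_of_single_contacts (hK : K.Finite) (h : IsMinContainer K u v w)
    {p q r : Pt} (hp : ∀ x ∈ K, bary u v w x = 0 → x = p)
    (hq : ∀ x ∈ K, bary v w u x = 0 → x = q) (hr : ∀ x ∈ K, bary w u v x = 0 → x = r) : False := by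
  obtain ⟨l, hl⟩ : ∃ l, l = bary u v w (similarity 1 1 0 p) - bary u v w p := ⟨_, rfl⟩
  obtain ⟨m, hm⟩ : ∃ m, m = bary v w u (similarity 1 1 0 q) - bary v w u q := ⟨_, rfl⟩
  obtain ⟨n, hn⟩ : ∃ n, n = bary w u v (similarity 1 1 0 r) - bary w u v r := ⟨_, rfl⟩
  have hcross := h.cross_ne_zero
  obtain ⟨σ, hσ, hκ⟩ : ∃ σ : ℝ, σ ^ 2 = 1 ∧ 0 ≤ σ * (l + m + n) := by
    rcases le_total 0 (l + m + n) with hsum | hsum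
    · exact ⟨1, by norm_num, by linarith⟩
    · exact ⟨-1, by norm_num, by linarith⟩
  refine h.false_of_expanding hK (a := 1 + σ * (l + m + n)) (b := σ)
    (t := -(σ • (l • u + m • v + n • w))) (by linarith) (by nlinarith)
    (fun x hx => ?_) (fun x hx => ?_) (fun x hx => ?_)
  · refine (h.bary_nonneg hx).1.lt_or_eq'.imp id fun h0 => ?_
    obtain rfl := hp x hx h0
    rw [bary_similarity_of_rescaling hcross rfl rfl hl, h0, mul_zero]
  · refine (h.bary_nonneg hx).2.1.lt_or_eq'.imp id fun h0 => ?_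
    obtain rfl := hq x hx h0
    rw [bary_similarity_of_rescaling h.rotate.cross_ne_zero (l := m) (m := n) (n := l)
      (by ring) (by module) hm, h0, mul_zero]
  · refine (h.bary_nonneg hx).2.2.lt_or_eq'.imp id fun h0 => ?_
    obtain rfl := hr x hx h0
    rw [bary_similarity_of_rescaling h.rotate.rotate.cross_ne_zero (l := n) (m := l) (n := m)
      (by ring) (by module) hn, h0, mul_zero]

end MinContainer

section FreeVertex

variable {K : Set Pt} {u v w : Pt}

lemma continuousAt_cross {r : ℝ → Pt} {e : ℝ} (hr : ContinuousAt r e) (P Q : Pt) :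
    ContinuousAt (fun e => cross P Q (r e)) e := by
  unfold cross
  fun_prop

lemma eventually_bary_pos_of_continuousAt {r : ℝ → Pt} (hr : ContinuousAt r 0) {x : Pt}
    (hcross : cross u v (r 0) ≠ 0) (hx : 0 < bary u v (r 0) x) :
    ∀ᶠ e in 𝓝[>] 0, 0 < bary u v (r e) x :=
  eventually_nhdsGT_zero_pos
    ((continuousAt_cross hr x v).div (continuousAt_cross hr u v) hcross) hx

lemma IsMinContainer.false_of_moving_vertex (hK : K.Finite) {r : ℝ → Pt}
    (h : IsMinContainer K u v (r 0)) (hr : ContinuousAt r 0) {ρ : ℝ → ℝ}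
    (hcross : ∀ e, cross u v (r e) = ρ e * cross u v (r 0))
    (hρ : ∀ᶠ e in 𝓝[>] 0, 0 < ρ e ∧ ρ e < 1) (hiso : ∀ e, IsIsosceles u v (r e))
    (hfree : ∀ x ∈ K, x = u ∨ x = v ∨ 0 < bary u v (r 0) x ∧ 0 < bary v u (r 0) x) : False := by
  have hmem : ∀ᶠ e in 𝓝[>] 0, ∀ x ∈ K, x ∈ tri u v (r e) := by
    refine (eventually_all_finite hK).2 fun x hx => ?_
    rcases hfree x hx with rfl | rfl | ⟨hxu, hxv⟩
    · exact .of_forall fun e => subset_convexHull _ _ (by simp)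
    · exact .of_forall fun e => subset_convexHull _ _ (by simp)
    filter_upwards [hρ, eventually_bary_pos_of_continuousAt hr h.cross_ne_zero hxu,
      eventually_bary_pos_of_continuousAt hr h.rotate.swap.cross_ne_zero hxv] with e hρe hue hve
    have hne : cross u v (r e) ≠ 0 := by
      rw [hcross]
      exact mul_ne_zero hρe.1.ne' h.cross_ne_zero
    refine (mem_tri_iff hne).2 ⟨hue.le, by rw [bary_swap]; exact hve.le, ?_⟩
    have hxw := (h.bary_nonneg hx).2.2
    rw [bary, cross_rotate' u v x, cross_rotate' u v (r _)] at hxw ⊢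
    rw [hcross, div_mul_eq_div_div_swap]
    exact div_nonneg hxw hρe.1.le
  obtain ⟨e, he, hρ₀, hρ₁⟩ := (hmem.and hρ).exists
  exact h.false_of_smaller hρ₀ hρ₁ (hcross e) (hiso e) he

lemma IsMinContainer.false_of_free_apex (hK : K.Finite) (h : IsMinContainer K u v w)
    (hiso : dist v w = dist w u)
    (hfree : ∀ x ∈ K, x = u ∨ x = v ∨ 0 < bary u v w x ∧ 0 < bary v u w x) : False := by
  have hr₀ : AffineMap.lineMap w (midpoint ℝ u v) (0 : ℝ) = w := AffineMap.lineMap_apply_zero _ _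
  rw [← hr₀] at h
  refine h.false_of_moving_vertex hK (r := AffineMap.lineMap w (midpoint ℝ u v))
    (ρ := fun e => 1 - e) (by fun_prop) (fun e => ?_) ?_ (fun e => Or.inl ?_) (by rwa [hr₀])
  · simp only [cross, midpoint_eq_smul_add, AffineMap.lineMap_apply_module, PiLp.add_apply,
      PiLp.smul_apply, smul_eq_mul, invOf_eq_inv]
    ring
  · filter_upwards [Ioo_mem_nhdsGT one_pos] with e he
    exact ⟨sub_pos.2 he.2, sub_lt_self _ he.1⟩
  · rw [dist_eq_dist_iff_sq, dist_sq_eq, dist_sq_eq] at hiso ⊢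
    simp only [midpoint_eq_smul_add, AffineMap.lineMap_apply_module, PiLp.add_apply,
      PiLp.smul_apply, smul_eq_mul, invOf_eq_inv]
    linear_combination (1 - e) * hiso

/-- Turning the leg `u w` about the apex `u` by the angle `e` multiplies the area by
`cos e + m sin e`, which is less than `1` for small `e` of one of the two signs. -/
lemma IsMinContainer.false_of_free_leg (hK : K.Finite) (h : IsMinContainer K u v w)
    (hiso : dist w u = dist u v)
    (hfree : ∀ x ∈ K, x = u ∨ x = v ∨ 0 < bary u v w x ∧ 0 < bary v u w x) : False := by
  obtain ⟨m, hm⟩ : ∃ m, m = cross u v (u + quarterTurn (w - u)) / cross u v w := ⟨_, rfl⟩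
  obtain ⟨σ, hσ, hσm⟩ : ∃ σ : ℝ, σ ^ 2 = 1 ∧ σ * m ≤ 0 := by
    rcases le_total 0 m with h0 | h0
    · exact ⟨-1, by norm_num, by linarith⟩
    · exact ⟨1, by norm_num, by linarith⟩
  let r : ℝ → Pt := fun e => u + (cos e • (w - u) + (σ * sin e) • quarterTurn (w - u))
  have hr₀ : r 0 = w := by simp [r]
  rw [← hr₀] at h hfree
  refine h.false_of_moving_vertex hK (ρ := fun e => cos e + σ * m * sin e) (by fun_prop)
    (fun e => ?_) ?_ (fun e => Or.inr (Or.inl ?_)) hfree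
  · rw [hr₀] at h ⊢
    have := h.cross_ne_zero
    rw [hm]
    field_simp
    simp only [r, cross, quarterTurn, PiLp.add_apply, PiLp.smul_apply, PiLp.sub_apply, smul_eq_mul,
      Matrix.cons_val_zero, Matrix.cons_val_one]
    ring
  · filter_upwards [eventually_nhdsGT_zero_pos (f := fun e => cos e + σ * m * sin e) (by fun_prop)
      (by simp), Ioo_mem_nhdsGT one_pos] with e hpos he
    have hsin : 0 < sin e := sin_pos_of_pos_of_le_one he.1 he.2.le
    have hcos : cos e < 1 := by nlinarith [sin_sq_add_cos_sq e]
    exact ⟨hpos, by nlinarith⟩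
  · rw [← hiso, dist_eq_dist_iff_sq, dist_sq_eq, dist_sq_eq]
    simp only [r, quarterTurn, PiLp.add_apply, PiLp.smul_apply, PiLp.sub_apply, smul_eq_mul,
      Matrix.cons_val_zero, Matrix.cons_val_one]
    linear_combination ((w 0 - u 0) ^ 2 + (w 1 - u 1) ^ 2) *
      (sin_sq_add_cos_sq e + sin e ^ 2 * hσ)

lemma IsMinContainer.false_of_free_vertex (hK : K.Finite) (h : IsMinContainer K u v w)
    (hfree : ∀ x ∈ K, x = u ∨ x = v ∨ 0 < bary u v w x ∧ 0 < bary v u w x) : False := by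
  rcases h.isIsosceles with hiso | hiso | hiso
  · exact h.false_of_free_apex hK hiso hfree
  · exact h.false_of_free_leg hK hiso hfree
  · refine h.rotate.swap.false_of_free_leg hK (by rw [dist_comm w, ← hiso, dist_comm]) ?_
    exact fun x hx => or_left_comm.1 ((hfree x hx).imp_right (Or.imp_right And.symm))

end FreeVertex

section Shape

variable {u v w : Pt} {a ρ : ℝ}

/-- The shape of a triangle `v u w` up to similarity: placing `v` and `u` at the complex numbers
`0` and `1`, the third vertex `w` has real part `a` and squared modulus `ρ`. -/
def HasShape (v u w : Pt) (a ρ : ℝ) : Prop :=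
  dist v w ^ 2 = ρ * dist v u ^ 2 ∧ dist u w ^ 2 = (1 - 2 * a + ρ) * dist v u ^ 2

/-- The condition on the shape parameters of `HasShape` for the triangle to be isosceles, with apex
`w`, `v` and `u` respectively. -/
def IsIsoscelesShape (a ρ : ℝ) : Prop := a = 1 / 2 ∨ ρ = 1 ∨ ρ = 2 * a

lemma dist_sq_mul_dist_sq (v u w : Pt) :
    dist v u ^ 2 * dist v w ^ 2 =
      ((dist v u ^ 2 + dist v w ^ 2 - dist u w ^ 2) / 2) ^ 2 + cross v u w ^ 2 := by
  simp only [dist_sq_eq, cross]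
  ring

lemma ne_of_cross_ne_zero (h : cross v u w ≠ 0) : v ≠ u := by
  rintro rfl
  simp [cross] at h

lemma exists_hasShape (h : cross v u w ≠ 0) : ∃ a ρ, HasShape v u w a ρ ∧ a ^ 2 < ρ := by
  have hvu : dist v u ≠ 0 := (dist_pos.2 (ne_of_cross_ne_zero h)).ne'
  refine ⟨(dist v u ^ 2 + dist v w ^ 2 - dist u w ^ 2) / 2 / dist v u ^ 2,
    dist v w ^ 2 / dist v u ^ 2, ⟨by field_simp, by field_simp; ring⟩, ?_⟩
  have hρ : dist v w ^ 2 / dist v u ^ 2 =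
      dist v u ^ 2 * dist v w ^ 2 / (dist v u ^ 2) ^ 2 := by
    field_simp
  rw [hρ, div_pow, dist_sq_mul_dist_sq]
  have := sq_pos_of_ne_zero h
  gcongr
  linarith

lemma HasShape.isIsosceles_iff (h : HasShape v u w a ρ) (hvu : v ≠ u) :
    IsIsosceles v u w ↔ IsIsoscelesShape a ρ := by
  have hpos : dist v u ^ 2 ≠ 0 := pow_ne_zero 2 (dist_pos.2 hvu).ne'
  have hscale : IsIsosceles v u w ↔ (1 - 2 * a + ρ) * dist v u ^ 2 = ρ * dist v u ^ 2 ∨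
      ρ * dist v u ^ 2 = 1 * dist v u ^ 2 ∨
      1 * dist v u ^ 2 = (1 - 2 * a + ρ) * dist v u ^ 2 := by
    rw [← h.1, ← h.2, one_mul, IsIsosceles, dist_comm w v]
    simp only [dist_eq_dist_iff_sq]
  simp only [hscale, mul_left_inj' hpos]
  refine or_congr ?_ (or_congr_right ?_) <;> constructor <;> intro <;> linarith

lemma HasShape.slide (h : HasShape v u w a ρ) {c e k : ℝ} (he : e ≠ 1) :
    HasShape (AffineMap.lineMap v u e) u
      (AffineMap.lineMap (AffineMap.lineMap v u e) (AffineMap.lineMap v w c) k)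
      (k * (c * a - e) / (1 - e)) (k ^ 2 * (c ^ 2 * ρ - 2 * c * e * a + e ^ 2) / (1 - e) ^ 2) := by
  have he₀ : 1 - e ≠ 0 := sub_ne_zero.2 he.symm
  obtain ⟨hvw, huw⟩ := h
  rw [dist_sq_eq, dist_sq_eq] at hvw huw
  constructor <;> rw [dist_sq_eq, dist_sq_eq] <;>
    simp only [AffineMap.lineMap_apply_module, PiLp.add_apply, PiLp.smul_apply, smul_eq_mul] <;>
    field_simp
  · linear_combination (1 - e) ^ 2 * k ^ 2 * (c ^ 2 * hvw - c * e * (hvw - huw))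
  · linear_combination (1 - e) ^ 2 * (k ^ 2 * (c ^ 2 * hvw - c * e * (hvw - huw))
       - k * (1 - e) * c * (hvw - huw))

lemma HasShape.lineMap_lineMap (h : HasShape u v w a ρ) {e f : ℝ} (hef : e ≠ f) :
    HasShape (AffineMap.lineMap u v e) (AffineMap.lineMap u v f) w
      ((a - e) / (f - e)) ((ρ - 2 * e * a + e ^ 2) / (f - e) ^ 2) := by
  have hfe : f - e ≠ 0 := sub_ne_zero.2 hef.symm
  obtain ⟨huw, hvw⟩ := h
  rw [dist_sq_eq, dist_sq_eq] at huw hvw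
  constructor <;> rw [dist_sq_eq, dist_sq_eq] <;>
    simp only [AffineMap.lineMap_apply_module, PiLp.add_apply, PiLp.smul_apply, smul_eq_mul] <;>
    field_simp
  · linear_combination (f - e) ^ 2 * (huw - e * (huw - hvw))
  · linear_combination (f - e) ^ 2 * (huw - f * (huw - hvw))

end Shape

section Slide

/-- The parameters `e`, `k` produce a smaller isosceles container of the points `u`,
`lineMap v u s` and `lineMap v w c` from an isosceles triangle `v u w` of shape `(a, ρ)`: the vertex
`v` slides to `v' = lineMap v u e`, and the new third vertex is `lineMap v' (lineMap v w c) k`. -/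
structure IsShrinkingSlide (a ρ s c e k : ℝ) : Prop where
  le : e ≤ s
  lt_one : e < 1
  one_le : 1 ≤ k
  area_lt : (1 - e) * k * c < 1
  isIsosceles : IsIsoscelesShape (k * (c * a - e) / (1 - e))
    (k ^ 2 * (c ^ 2 * ρ - 2 * c * e * a + e ^ 2) / (1 - e) ^ 2)

variable {K : Set Pt} {u v w : Pt} {a ρ s c e k : ℝ}

lemma IsMinContainer.false_of_isShrinkingSlide (h : IsMinContainer K v u w)
    (hshape : HasShape v u w a ρ) (hs : s ≤ 1) (hc : 0 < c)
    (hK : ∀ x ∈ K, x = u ∨ x = AffineMap.lineMap v u s ∨ x = AffineMap.lineMap v w c)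
    (hek : IsShrinkingSlide a ρ s c e k) : False := by
  obtain ⟨hes, he, hk, harea, hiso⟩ := hek
  have he₀ : 0 < 1 - e := sub_pos.2 he
  have hk₀ : 0 < k := one_pos.trans_le hk
  have hratio : 0 < (1 - e) * k * c := by positivity
  have hcross : cross (AffineMap.lineMap v u e) u
      (AffineMap.lineMap (AffineMap.lineMap v u e) (AffineMap.lineMap v w c) k) =
        (1 - e) * k * c * cross v u w := by
    simp only [cross, AffineMap.lineMap_apply_module, PiLp.add_apply, PiLp.smul_apply, smul_eq_mul]
    ring
  have hne : AffineMap.lineMap v u e ≠ u :=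
    ne_of_cross_ne_zero (hcross ▸ mul_ne_zero hratio.ne' h.cross_ne_zero)
  refine h.false_of_smaller hratio harea hcross
    (((hshape.slide he.ne).isIsosceles_iff hne).2 hiso) fun x hx => ?_
  rcases hK x hx with rfl | rfl | rfl
  · exact subset_convexHull ℝ _ (by simp)
  · have hxv : AffineMap.lineMap v u s =
        AffineMap.lineMap (AffineMap.lineMap v u e) u ((s - e) / (1 - e)) := by
      simp only [AffineMap.lineMap_apply_module]
      match_scalars <;> field_simp <;> ring
    rw [hxv]
    exact segment_subset_convexHull (by simp) (by simp) (lineMap_mem_segment ℝ _ _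
      ⟨div_nonneg (by linarith) he₀.le, (div_le_one he₀).2 (by linarith)⟩)
  · have hyw : AffineMap.lineMap v w c = AffineMap.lineMap (AffineMap.lineMap v u e)
        (AffineMap.lineMap (AffineMap.lineMap v u e) (AffineMap.lineMap v w c) k) k⁻¹ := by
      rw [AffineMap.lineMap_lineMap_right, inv_mul_cancel₀ hk₀.ne', AffineMap.lineMap_apply_one]
    rw [hyw]
    exact segment_subset_convexHull (by simp) (by rw [← hyw]; simp) (lineMap_mem_segment ℝ _ _
      ⟨inv_nonneg.2 hk₀.le, inv_le_one_of_one_le₀ hk⟩)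

lemma exists_isShrinkingSlide_of_base (hs : 0 < s) (hc₀ : 0 < c) (hc₁ : c < 1) :
    ∃ e k, IsShrinkingSlide (1 / 2) ρ s c e k := by
  have : 2 - c ≠ 0 := by linarith
  refine ⟨c - 1, 1, ⟨by linarith, by linarith, le_rfl, by nlinarith, Or.inl ?_⟩⟩
  rw [show 1 - (c - 1) = 2 - c by ring]
  field_simp
  ring

/-- The apex `v` is kept: `k` restores the equality of the two legs after `v` has moved by `e`. -/
lemma exists_isShrinkingSlide_of_lt_two_mul (hs : 0 < s) (hc₀ : 0 < c) (hc₁ : c < 1)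
    (ha : a ^ 2 < 1) (hac : a < 2 * c) : ∃ e k, IsShrinkingSlide a 1 s c e k := by
  have hsmall : ∀ᶠ e : ℝ in 𝓝[>] 0, 0 < (1 - e) ^ 2 - (c ^ 2 - 2 * c * e * a + e ^ 2) :=
    eventually_nhdsGT_zero_pos (by fun_prop) (by nlinarith)
  have harea : ∀ᶠ e : ℝ in 𝓝[>] 0,
      0 < -(2 * c * a) + e + c ^ 2 * (4 - 6 * e + 4 * e ^ 2 - e ^ 3) :=
    eventually_nhdsGT_zero_pos (by fun_prop) (by nlinarith)
  obtain ⟨e, he₁, he₂, he₀, he⟩ :=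
    (hsmall.and (harea.and (Ioo_mem_nhdsGT (lt_min hs one_pos)))).exists
  have hle := (lt_min_iff.1 he)
  have hQ : 0 < c ^ 2 - 2 * c * e * a + e ^ 2 := by
    have : 0 < c ^ 2 * (1 - a ^ 2) := mul_pos (by positivity) (by linarith)
    linarith [sq_nonneg (c * a - e)]
  obtain ⟨q, hq⟩ : ∃ q, q = √(c ^ 2 - 2 * c * e * a + e ^ 2) := ⟨_, rfl⟩
  have hq₀ : 0 < q := by rw [hq]; exact Real.sqrt_pos.2 hQ
  have hqsq : q ^ 2 = c ^ 2 - 2 * c * e * a + e ^ 2 := by rw [hq]; exact Real.sq_sqrt hQ.le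
  have hkq : q ≤ 1 - e := by
    refine (sq_le_sq₀ hq₀.le (by linarith)).1 (by linarith)
  have he₀' : 0 < 1 - e := by linarith
  refine ⟨e, (1 - e) / q, ⟨hle.1.le, hle.2, (one_le_div hq₀).2 hkq, ?_, Or.inr (Or.inl ?_)⟩⟩
  · rw [mul_div_assoc', div_mul_eq_mul_div, div_lt_one hq₀]
    refine (sq_lt_sq₀ (by positivity) hq₀.le).1 ?_
    rw [hqsq]
    linarith [mul_pos he₀ he₂]
  · rw [mul_one, ← hqsq]
    field_simp

lemma exists_isShrinkingSlide_of_leg (hs : 0 < s) (hc₀ : 0 < c) (hc₁ : c < 1) (ha : a ^ 2 < 1) :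
    ∃ e k, IsShrinkingSlide a 1 s c e k := by
  rcases lt_or_ge a (2 * c) with hac | hac
  · exact exists_isShrinkingSlide_of_lt_two_mul hs hc₀ hc₁ ha hac
  -- `lineMap v w c` is so close to `v` that `v` and `u` can be kept, and `w` moved towards `v`
  -- until the apex is `u` or `w` instead of `v`.
  have ha₀ : 0 < a := by linarith
  have ha₁ : a < 1 := by nlinarith
  rcases lt_trichotomy a (1 / 2) with hlt | rfl | hgt
  · refine ⟨0, 2 * a / c, ⟨hs.le, one_pos, (one_le_div hc₀).2 (by linarith), ?_,
      Or.inr (Or.inr ?_)⟩⟩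
    · field_simp
      linarith
    · field_simp
      ring
  · exact exists_isShrinkingSlide_of_base hs hc₀ hc₁
  · refine ⟨0, 1 / (2 * c * a), ⟨hs.le, one_pos, (one_le_div (by positivity)).2 (by nlinarith), ?_,
      Or.inl ?_⟩⟩
    · field_simp
      linarith
    · field_simp
      ring

/-- The apex `u` is kept: `k` restores the equality of the two legs after `v` has moved by `e`. -/
lemma exists_isShrinkingSlide_of_sub_one_lt (hs : 0 < s) (hc₀ : 0 < c) (hc₁ : c < 1)
    (ha : 0 < a) (hac : a - 1 < 2 * c * a) : ∃ e k, IsShrinkingSlide a (2 * a) s c e k := by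
  have hQ : ∀ᶠ e : ℝ in 𝓝[>] 0, 0 < 2 * a * c ^ 2 - 2 * c * e * a + e ^ 2 :=
    eventually_nhdsGT_zero_pos (by fun_prop) (by nlinarith [mul_pos ha (pow_pos hc₀ 2)])
  have hsmall : ∀ᶠ e : ℝ in 𝓝[>] 0,
      0 < 2 * (1 - e) * (c * a - e) - (2 * a * c ^ 2 - 2 * c * e * a + e ^ 2) := by
    refine eventually_nhdsGT_zero_pos (by fun_prop) ?_
    have : 0 < 2 * a * c * (1 - c) := by have := sub_pos.2 hc₁; positivity
    linarith
  have harea : ∀ᶠ e : ℝ in 𝓝[>] 0,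
      0 < 2 * c * (1 - a + 2 * c * a) + e * (1 - 4 * c - 2 * c ^ 2 * a + 2 * c * e) := by
    refine eventually_nhdsGT_zero_pos (by fun_prop) ?_
    have : 0 < 2 * c * (1 - a + 2 * c * a) := mul_pos (by linarith) (by linarith)
    linarith
  obtain ⟨e, heQ, heS, heA, he₀, he⟩ :=
    (hQ.and (hsmall.and (harea.and (Ioo_mem_nhdsGT (lt_min hs one_pos))))).exists
  obtain ⟨hes, he₁⟩ := lt_min_iff.1 he
  have h1e : 1 - e ≠ 0 := (sub_pos.2 he₁).ne'
  refine ⟨e, 2 * (1 - e) * (c * a - e) / (2 * a * c ^ 2 - 2 * c * e * a + e ^ 2),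
    ⟨hes.le, he₁, (one_le_div heQ).2 (by linarith), ?_, Or.inr (Or.inr ?_)⟩⟩
  · rw [mul_div_assoc', div_mul_eq_mul_div, div_lt_one heQ]
    linarith [mul_pos he₀ heA]
  · rw [show c ^ 2 * (2 * a) = 2 * a * c ^ 2 by ring]
    field_simp

lemma exists_isShrinkingSlide_of_apex (hs : 0 < s) (hc₀ : 0 < c) (hc₁ : c < 1)
    (ha : a ^ 2 < 2 * a) : ∃ e k, IsShrinkingSlide a (2 * a) s c e k := by
  have ha₀ : 0 < a := by nlinarith
  have ha₂ : a < 2 := by nlinarith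
  rcases lt_or_ge (a - 1) (2 * c * a) with hac | hac
  · exact exists_isShrinkingSlide_of_sub_one_lt hs hc₀ hc₁ ha₀ hac
  -- `lineMap v w c` is so close to `v` that `v` and `u` can be kept, and `w` moved towards `v`
  -- until the apex is `v` instead of `u`.
  obtain ⟨q, hq₀, hq⟩ : ∃ q, 0 < q ∧ q ^ 2 = 2 * a :=
    ⟨√(2 * a), by positivity, Real.sq_sqrt (by linarith)⟩
  have hca : 0 < c * a := mul_pos hc₀ ha₀
  have hq₁ : 1 < q := by nlinarith
  have hcq : c * q ≤ 1 := by nlinarith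
  refine ⟨0, 1 / (c * q), ⟨hs.le, one_pos, (one_le_div (by positivity)).2 hcq, ?_,
    Or.inr (Or.inl ?_)⟩⟩
  · field_simp
    linarith
  · rw [← hq]
    field_simp
    ring

lemma exists_isShrinkingSlide (hs : 0 < s) (hc₀ : 0 < c) (hc₁ : c < 1) (ha : a ^ 2 < ρ)
    (hiso : IsIsoscelesShape a ρ) : ∃ e k, IsShrinkingSlide a ρ s c e k := by
  rcases hiso with rfl | rfl | rfl
  · exact exists_isShrinkingSlide_of_base hs hc₀ hc₁
  · exact exists_isShrinkingSlide_of_leg hs hc₀ hc₁ ha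
  · exact exists_isShrinkingSlide_of_apex hs hc₀ hc₁ ha

lemma IsMinContainer.false_of_slide (h : IsMinContainer K v u w) (hs₀ : 0 < s) (hs₁ : s ≤ 1)
    (hc₀ : 0 < c) (hc₁ : c < 1)
    (hK : ∀ x ∈ K, x = u ∨ x = AffineMap.lineMap v u s ∨ x = AffineMap.lineMap v w c) : False := by
  obtain ⟨a, ρ, hshape, ha⟩ := exists_hasShape h.cross_ne_zero
  obtain ⟨e, k, hek⟩ := exists_isShrinkingSlide hs₀ hc₀ hc₁ ha
    ((hshape.isIsosceles_iff (ne_of_cross_ne_zero h.cross_ne_zero)).1 h.isIsosceles)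
  exact h.false_of_isShrinkingSlide hshape hs₁ hc₀ hK hek

end Slide

section Apex

variable {K : Set Pt} {u v w : Pt} {a ρ : ℝ}

lemma IsMinContainer.false_of_narrower_base (h : IsMinContainer K u v w)
    (hshape : HasShape u v w a ρ) {e f : ℝ} (hef : e < f) (hfe : f - e < 1)
    (hiso : IsIsoscelesShape ((a - e) / (f - e)) ((ρ - 2 * e * a + e ^ 2) / (f - e) ^ 2))
    (hK : ∀ x ∈ K, x = w ∨ ∃ s ∈ Set.Icc e f, AffineMap.lineMap u v s = x) : False := by
  have hfe₀ : 0 < f - e := sub_pos.2 hef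
  have hcross : cross (AffineMap.lineMap u v e) (AffineMap.lineMap u v f) w =
      (f - e) * cross u v w := by
    simp only [cross, AffineMap.lineMap_apply_module, PiLp.add_apply, PiLp.smul_apply, smul_eq_mul]
    ring
  have hne := ne_of_cross_ne_zero (hcross ▸ mul_ne_zero hfe₀.ne' h.cross_ne_zero)
  refine h.false_of_smaller hfe₀ hfe hcross
    (((hshape.lineMap_lineMap hef.ne).isIsosceles_iff hne).2 hiso) fun x hx => ?_
  rcases hK x hx with rfl | ⟨s, hs, rfl⟩
  · exact subset_convexHull ℝ _ (by simp)
  · have hs' : AffineMap.lineMap u v s = AffineMap.lineMap (AffineMap.lineMap u v e)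
        (AffineMap.lineMap u v f) ((s - e) / (f - e)) := by
      simp only [AffineMap.lineMap_apply_module]
      match_scalars <;> field_simp <;> ring
    rw [hs']
    exact segment_subset_convexHull (by simp) (by simp) (lineMap_mem_segment ℝ _ _
      ⟨div_nonneg (sub_nonneg.2 hs.1) hfe₀.le, (div_le_one hfe₀).2 (by linarith [hs.2])⟩)

lemma IsMinContainer.false_of_narrowing (hK : K.Finite) (h : IsMinContainer K u v w)
    (hshape : HasShape u v w a ρ) {f : ℝ → ℝ} (hf : ContinuousAt f 0) (hf₀ : f 0 = 1)
    (hiso : ∀ᶠ e in 𝓝[>] 0, f e - e < 1 ∧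
      IsIsoscelesShape ((a - e) / (f e - e)) ((ρ - 2 * e * a + e ^ 2) / (f e - e) ^ 2))
    (hKw : ∀ x ∈ K, x = w ∨ ∃ s ∈ Set.Ioo (0 : ℝ) 1, AffineMap.lineMap u v s = x) : False := by
  have hmem : ∀ᶠ e in 𝓝[>] 0, ∀ x ∈ K,
      x = w ∨ ∃ s ∈ Set.Icc e (f e), AffineMap.lineMap u v s = x := by
    refine (eventually_all_finite hK).2 fun x hx => ?_
    rcases hKw x hx with rfl | ⟨s, ⟨hs₀, hs₁⟩, rfl⟩
    · exact .of_forall fun e => Or.inl rfl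
    filter_upwards [Ioo_mem_nhdsGT hs₀, eventually_nhdsGT_zero_pos (f := fun e => f e - s)
      (by fun_prop) (by rw [hf₀]; linarith)] with e he hfe
    exact Or.inr ⟨s, ⟨he.2.le, by linarith⟩, rfl⟩
  have hlt : ∀ᶠ e in 𝓝[>] 0, 0 < f e - e :=
    eventually_nhdsGT_zero_pos (by fun_prop) (by rw [hf₀]; norm_num)
  obtain ⟨e, hKe, hef, hfe, hisoe⟩ := (hmem.and (hlt.and hiso)).exists
  exact h.false_of_narrower_base hshape (sub_pos.1 hef) hfe hisoe hKe

lemma HasShape.bary_similarity_lineMap (h : HasShape u v w a ρ) (hcross : cross u v w ≠ 0) (s : ℝ) :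
    bary w u v (similarity 1 (cross u v w) (-cross u v w • quarterTurn w)
      (AffineMap.lineMap u v s)) = (s - a) * dist u v ^ 2 := by
  obtain ⟨huw, hvw⟩ := h
  rw [bary, cross_rotate' u v w, div_eq_iff hcross]
  rw [dist_sq_eq, dist_sq_eq] at huw hvw
  rw [dist_sq_eq]
  obtain ⟨C, hC⟩ : ∃ C, C = cross u v w := ⟨_, rfl⟩
  rw [← hC]
  simp only [cross, similarity_apply_zero, similarity_apply_one, quarterTurn,
    AffineMap.lineMap_apply_module, PiLp.add_apply, PiLp.smul_apply, smul_eq_mul,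
    Matrix.cons_val_zero, Matrix.cons_val_one]
  linear_combination C / 2 * (hvw - huw)

/-- If the angle at `u` is not acute, then a rotation about `w` towards the inside of the triangle
leaves the points of the side `u v` in the same half-plane. -/
lemma IsMinContainer.false_of_nonacute (hK : K.Finite) (h : IsMinContainer K u v w)
    (hshape : HasShape u v w a ρ) (ha : a ≤ 0)
    (hKw : ∀ x ∈ K, x = w ∨ ∃ s ∈ Set.Ioo (0 : ℝ) 1, AffineMap.lineMap u v s = x) : False := by
  have hcross := h.cross_ne_zero
  have hfix : similarity 1 (cross u v w) (-cross u v w • quarterTurn w) w = w := by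
    simp only [similarity]
    module
  refine h.false_of_expanding hK (a := 1) (b := cross u v w) (t := -cross u v w • quarterTurn w)
    le_rfl (by linarith [sq_pos_of_ne_zero hcross])
    (fun x hx => ?_) (fun x hx => ?_) (fun x hx => ?_)
  all_goals rcases hKw x hx with rfl | ⟨s, hs, rfl⟩
  · rw [hfix, bary_eq_zero_of_mem_segment (right_mem_segment ℝ v x)]
    exact Or.inr le_rfl
  · rw [bary_lineMap, bary_self hcross, bary_eq_zero_of_mem_segment (left_mem_segment ℝ v w)]
    exact Or.inl (by linarith [hs.2])
  · rw [hfix, bary_eq_zero_of_mem_segment (left_mem_segment ℝ x u)]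
    exact Or.inr le_rfl
  · rw [bary_lineMap, bary_self h.rotate.cross_ne_zero,
      bary_eq_zero_of_mem_segment (right_mem_segment ℝ w u)]
    exact Or.inl (by linarith [hs.1])
  · rw [bary_self h.rotate.rotate.cross_ne_zero]
    exact Or.inl one_pos
  · rw [hshape.bary_similarity_lineMap hcross]
    exact Or.inr (mul_nonneg (by linarith [hs.1]) (sq_nonneg _))

lemma HasShape.swap (h : HasShape u v w a ρ) : HasShape v u w (1 - a) (1 - 2 * a + ρ) :=
  ⟨by rw [h.2, dist_comm], by rw [h.1, dist_comm]; ring⟩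

lemma IsMinContainer.false_of_apex_of_leg (hK : K.Finite) (h : IsMinContainer K u v w)
    (hshape : HasShape u v w a 1)
    (hKw : ∀ x ∈ K, x = w ∨ ∃ s ∈ Set.Ioo (0 : ℝ) 1, AffineMap.lineMap u v s = x) : False := by
  rcases le_or_gt a 0 with ha | ha
  · exact h.false_of_nonacute hK hshape ha hKw
  refine h.false_of_narrowing hK hshape (f := fun e => e + √(1 - 2 * e * a + e ^ 2))
    (by fun_prop) (by simp) ?_ hKw
  filter_upwards [Ioo_mem_nhdsGT (mul_pos two_pos ha), eventually_nhdsGT_zero_pos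
    (f := fun e => 1 - 2 * e * a + e ^ 2) (by fun_prop) (by simp)] with e he hpos
  rw [add_sub_cancel_left, Real.sq_sqrt hpos.le, div_self hpos.ne']
  refine ⟨(Real.sqrt_lt' one_pos).2 ?_, Or.inr (Or.inl rfl)⟩
  linarith [mul_pos he.1 (sub_pos.2 he.2)]

lemma IsMinContainer.false_of_apex (hK : K.Finite) (h : IsMinContainer K u v w)
    (hKw : ∀ x ∈ K, x = w ∨ ∃ s ∈ Set.Ioo (0 : ℝ) 1, AffineMap.lineMap u v s = x) : False := by
  obtain ⟨a, ρ, hshape, -⟩ := exists_hasShape h.cross_ne_zero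
  rcases (hshape.isIsosceles_iff (ne_of_cross_ne_zero h.cross_ne_zero)).1 h.isIsosceles with
    rfl | rfl | rfl
  · refine h.false_of_narrowing hK hshape (f := fun e => 1 - e) (by fun_prop) (by simp) ?_ hKw
    filter_upwards [Ioo_mem_nhdsGT (one_half_pos (α := ℝ))] with e he
    have hne : 1 - e - e ≠ 0 := by linarith [he.2]
    refine ⟨by linarith [he.1], Or.inl ?_⟩
    field_simp
    ring
  · exact h.false_of_apex_of_leg hK hshape hKw
  · refine h.rotate.swap.false_of_apex_of_leg hK (a := 1 - a) ?_ fun x hx => ?_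
    · convert hshape.swap using 1
      ring
    · refine (hKw x hx).imp_right ?_
      rintro ⟨s, hs, rfl⟩
      exact ⟨1 - s, ⟨by linarith [hs.2], by linarith [hs.1]⟩, AffineMap.lineMap_apply_one_sub _ _ _⟩

end Apex

section SpecialContainer

/-- `T` is an isosceles triangle `X Y W` with the two vertices `X` and `Y` in the three-point set
`K`, whose remaining point `Z` lies on the side `X W`. -/
def IsSpecialContainer (K T : Set Pt) : Prop :=
  ∃ X Y Z W : Pt, K = {X, Y, Z} ∧ T = tri X Y W ∧ IsIsosceles X Y W ∧ Z ∈ segment ℝ X W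

variable {u v w x y z : Pt}

lemma IsMinContainer.isSpecialContainer_of_two_vertices (h : IsMinContainer {u, v, z} u v w) :
    IsSpecialContainer {u, v, z} (tri u v w) := by
  obtain hu | hv : bary u v w z = 0 ∨ bary v u w z = 0 := by
    by_contra! hne
    refine h.false_of_free_vertex (by simp) fun x hx => ?_
    rcases hx with rfl | rfl | rfl
    · exact .inl rfl
    · exact .inr (.inl rfl)
    · have hnonneg := h.bary_nonneg (x := x) (by simp)
      rw [bary_swap v u w] at hnonneg
      exact .inr (.inr ⟨hnonneg.1.lt_of_ne' hne.1, hnonneg.2.1.lt_of_ne' hne.2⟩)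
  · have hz := mem_segment_of_bary_eq_zero h.cross_ne_zero (h.subset (by simp)) hu
    exact ⟨v, u, z, w, Set.insert_comm _ _ _, by rw [← tri_rotate, tri_swap],
      h.rotate.swap.isIsosceles, hz⟩
  · rw [bary_swap] at hv
    have hz := mem_segment_of_bary_eq_zero h.rotate.cross_ne_zero (h.rotate.subset (by simp)) hv
    exact ⟨u, v, z, w, rfl, rfl, h.isIsosceles, segment_symm ℝ w u ▸ hz⟩

lemma IsMinContainer.isSpecialContainer_of_vertex (h : IsMinContainer {u, y, z} u v w)
    (hy : y ∈ segment ℝ u v) : IsSpecialContainer {u, y, z} (tri u v w) := by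
  by_cases hyv : y = v
  · obtain rfl := hyv
    exact h.isSpecialContainer_of_two_vertices
  by_cases hzv : z = v
  · obtain rfl := hzv
    rw [Set.pair_comm] at h ⊢
    exact h.isSpecialContainer_of_two_vertices
  by_cases hzw : z = w
  · obtain rfl := hzw
    rw [Set.pair_comm] at h ⊢
    rw [← tri_swap]
    exact h.swap.isSpecialContainer_of_two_vertices
  obtain ⟨t, ht, htvw⟩ := h.exists_mem_segment (by simp)
  exfalso
  rcases ht with rfl | rfl | rfl
  · exact notMem_segment_of_cross_ne_zero h.cross_ne_zero htvw
  · exact hyv (eq_of_mem_segment_of_mem_segment h.cross_ne_zero hy htvw)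
  · have htvw' := mem_openSegment_of_ne_left_right (Ne.symm hzv) (Ne.symm hzw) htvw
    rw [openSegment_eq_image_lineMap] at htvw'
    rw [segment_symm, segment_eq_image_lineMap] at hy
    obtain ⟨c, ⟨hc₀, hc₁⟩, rfl⟩ := htvw'
    obtain ⟨s, ⟨hs₀, hs₁⟩, rfl⟩ := hy
    have hs : s ≠ 0 := by
      rintro rfl
      exact hyv (AffineMap.lineMap_apply_zero _ _)
    exact h.rotate.swap.false_of_slide (hs₀.lt_of_ne' hs) hs₁ hc₀ hc₁ fun x hx => hx

lemma IsMinContainer.isSpecialContainer_of_endpoint (h : IsMinContainer {x, y, z} u v w)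
    (hx : x = u ∨ x = v) (hy : y ∈ segment ℝ u v) : IsSpecialContainer {x, y, z} (tri u v w) := by
  rcases hx with rfl | rfl
  · exact h.isSpecialContainer_of_vertex hy
  · rw [← tri_rotate, ← tri_swap]
    exact h.rotate.swap.isSpecialContainer_of_vertex (segment_symm ℝ u x ▸ hy)

lemma IsMinContainer.isSpecialContainer_of_common_side (h : IsMinContainer {x, y, z} u v w)
    (hx : x ∈ segment ℝ u v) (hy : y ∈ segment ℝ u v) :
    IsSpecialContainer {x, y, z} (tri u v w) := by
  by_cases hxuv : x = u ∨ x = v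
  · exact h.isSpecialContainer_of_endpoint hxuv hy
  by_cases hyuv : y = u ∨ y = v
  · rw [Set.insert_comm] at h ⊢
    exact h.isSpecialContainer_of_endpoint hyuv hx
  rw [not_or] at hxuv hyuv
  exfalso
  have hzvw : z ∈ segment ℝ v w := by
    obtain ⟨t, rfl | rfl | rfl, htvw⟩ := h.exists_mem_segment (by simp)
    · exact absurd (eq_of_mem_segment_of_mem_segment h.cross_ne_zero hx htvw) hxuv.2
    · exact absurd (eq_of_mem_segment_of_mem_segment h.cross_ne_zero hy htvw) hyuv.2
    · exact htvw
  have hzwu : z ∈ segment ℝ w u := by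
    have hcross := h.rotate.rotate.cross_ne_zero
    obtain ⟨t, rfl | rfl | rfl, htwu⟩ := h.rotate.exists_mem_segment (by simp)
    · exact absurd (eq_of_mem_segment_of_mem_segment hcross htwu hx) hxuv.1
    · exact absurd (eq_of_mem_segment_of_mem_segment hcross htwu hy) hyuv.1
    · exact htwu
  obtain rfl := eq_of_mem_segment_of_mem_segment h.rotate.cross_ne_zero hzvw hzwu
  have hx' := mem_openSegment_of_ne_left_right (Ne.symm hxuv.1) (Ne.symm hxuv.2) hx
  have hy' := mem_openSegment_of_ne_left_right (Ne.symm hyuv.1) (Ne.symm hyuv.2) hy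
  rw [openSegment_eq_image_lineMap] at hx' hy'
  refine h.false_of_apex (by simp) fun t ht => ?_
  rcases ht with rfl | rfl | rfl
  · exact .inr hx'
  · exact .inr hy'
  · exact .inl rfl

lemma exists_triple_eq {α : Type*} {x y z p q : α} (hp : p ∈ ({x, y, z} : Set α))
    (hq : q ∈ ({x, y, z} : Set α)) (hpq : p ≠ q) : ∃ r, ({x, y, z} : Set α) = {p, q, r} := by
  rcases hp with rfl | rfl | rfl <;> rcases hq with rfl | rfl | rfl
  · exact absurd rfl hpq
  · exact ⟨z, rfl⟩
  · exact ⟨y, by rw [Set.pair_comm]⟩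
  · exact ⟨z, Set.insert_comm _ _ _⟩
  · exact absurd rfl hpq
  · exact ⟨x, (triple_rotate _ _ _).symm⟩
  · exact ⟨y, by rw [triple_rotate, triple_rotate]⟩
  · exact ⟨x, by rw [← triple_rotate, Set.insert_comm]⟩
  · exact absurd rfl hpq

lemma IsMinContainer.exists_single_contact (h : IsMinContainer {x, y, z} u v w)
    (hspecial : ¬IsSpecialContainer {x, y, z} (tri u v w)) :
    ∃ p, ∀ q ∈ ({x, y, z} : Set Pt), bary u v w q = 0 → q = p := by
  obtain ⟨p, hp, hpvw⟩ := h.exists_mem_segment (by simp)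
  refine ⟨p, fun q hq hq₀ => by_contra fun hqp => hspecial ?_⟩
  have hqvw := mem_segment_of_bary_eq_zero h.cross_ne_zero (h.subset hq) hq₀
  obtain ⟨r, hr⟩ := exists_triple_eq hq hp hqp
  rw [hr] at h ⊢
  rw [← tri_rotate]
  exact h.rotate.isSpecialContainer_of_common_side hqvw hpvw

theorem IsMinContainer.isSpecialContainer (h : IsMinContainer {x, y, z} u v w) :
    IsSpecialContainer {x, y, z} (tri u v w) := by
  by_contra hspecial
  obtain ⟨p, hp⟩ := h.exists_single_contact hspecial
  obtain ⟨q, hq⟩ := h.rotate.exists_single_contact (by rwa [tri_rotate])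
  obtain ⟨r, hr⟩ := h.rotate.rotate.exists_single_contact (by rwa [tri_rotate, tri_rotate])
  exact h.false_of_single_contacts (by simp) hp hq hr

end SpecialContainer

section Kinds

variable {A B C X Y Z W S P R : Pt}

/-- `T` is one of the special containers `A B' C`, `A B C'`, `A B C''` of the first kind. -/
def IsFirstKind (A B C : Pt) (T : Set Pt) : Prop :=
  (∃ Q : Pt, OnRay C B Q ∧ dist C Q = dist C A ∧ T = tri A Q C) ∨
  (∃ Q : Pt, OnRay A C Q ∧ dist A Q = dist A B ∧ T = tri A B Q) ∨
  (∃ Q : Pt, OnRay B C Q ∧ dist B Q = dist A B ∧ T = tri A B Q)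

/-- `T` is one of the special containers `A B₁ C`, `A B C₁`, `A B C₂` of the second kind. -/
def IsSecondKind (A B C : Pt) (T : Set Pt) : Prop :=
  (∃ Q : Pt, OnRay A B Q ∧ Q ≠ A ∧ dist Q C = dist C A ∧ T = tri A Q C) ∨
  (∃ Q : Pt, OnRay A C Q ∧ Q ≠ A ∧ dist B Q = dist A B ∧ T = tri A B Q) ∨
  (∃ Q : Pt, OnRay B C Q ∧ Q ≠ B ∧ dist A Q = dist A B ∧ T = tri A B Q)

/-- `T` is one of the special containers of the third kind, whose third vertices are the points
called `Ā`, `B̄`, `C̄` in the paper. -/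
def IsThirdKind (A B C : Pt) (T : Set Pt) : Prop :=
  (∃ Q : Pt, Q ∈ line[ℝ, A, C] ∧ dist Q B = dist Q C ∧ T = tri Q B C) ∨
  (∃ Q : Pt, Q ∈ line[ℝ, B, C] ∧ dist Q A = dist Q C ∧ T = tri A Q C) ∨
  (∃ Q : Pt, Q ∈ line[ℝ, B, C] ∧ dist Q A = dist Q B ∧ T = tri A B Q)

lemma onRay_of_mem_segment (h : Z ∈ segment ℝ X W) : OnRay X Z W :=
  (mem_segment_iff_wbtw.1 h).sameRay_vsub_left

lemma ne_of_dist_lt_dist (hab : dist B C < dist C A) (hbc : dist C A < dist A B) :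
    B ≠ C ∧ C ≠ A ∧ A ≠ B := by
  refine ⟨?_, dist_pos.1 (dist_nonneg.trans_lt hab), dist_pos.1 (dist_nonneg.trans_lt hbc)⟩
  rintro rfl
  exact hbc.ne (dist_comm _ _)

lemma eq_of_triple_eq (hab : dist B C < dist C A) (hbc : dist C A < dist A B)
    (h : ({A, B, C} : Set Pt) = {X, Y, Z}) :
    (A = X ∧ B = Y ∧ C = Z) ∨ (A = X ∧ B = Z ∧ C = Y) ∨ (A = Y ∧ B = X ∧ C = Z) ∨
      (A = Y ∧ B = Z ∧ C = X) ∨ (A = Z ∧ B = X ∧ C = Y) ∨ (A = Z ∧ B = Y ∧ C = X) := by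
  obtain ⟨hBC, hCA, hAB⟩ := ne_of_dist_lt_dist hab hbc
  have hA : A ∈ ({X, Y, Z} : Set Pt) := h ▸ by simp
  have hB : B ∈ ({X, Y, Z} : Set Pt) := h ▸ by simp
  have hC : C ∈ ({X, Y, Z} : Set Pt) := h ▸ by simp
  simp only [Set.mem_insert_iff, Set.mem_singleton_iff] at hA hB hC
  grind

lemma isFirstKind_of_mem_segment (hab : dist B C < dist C A) (hbc : dist C A < dist A B)
    (hK : ({A, B, C} : Set Pt) = {X, Y, Z}) (hZ : Z ∈ segment ℝ X W) (hiso : dist X W = dist X Y) :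
    IsFirstKind A B C (tri X Y W) := by
  have hle : dist X Z ≤ dist X Y := by
    linarith [(mem_segment_iff_wbtw.1 hZ).dist_add_dist, dist_nonneg (x := Z) (y := W)]
  have hray := onRay_of_mem_segment hZ
  have := dist_nonneg (x := B) (y := C)
  rcases eq_of_triple_eq hab hbc hK with ⟨rfl, rfl, rfl⟩ | ⟨rfl, rfl, rfl⟩ |
    ⟨rfl, rfl, rfl⟩ | ⟨rfl, rfl, rfl⟩ | ⟨rfl, rfl, rfl⟩ | ⟨rfl, rfl, rfl⟩
  · exact .inr (.inl ⟨W, hray, hiso, rfl⟩)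
  · linarith [dist_comm C A]
  · exact .inr (.inr ⟨W, hray, by rw [hiso, dist_comm], by rw [← tri_rotate, tri_swap]⟩)
  · exact .inl ⟨W, hray, hiso, by rw [← tri_rotate]⟩
  · linarith [dist_comm A B]
  · linarith [dist_comm B C]

lemma isSecondKind_of_mem_segment (hab : dist B C < dist C A) (hbc : dist C A < dist A B)
    (hK : ({A, B, C} : Set Pt) = {X, Y, Z}) (hZ : Z ∈ segment ℝ X W) (hiso : dist X Y = dist Y W) :
    IsSecondKind A B C (tri X Y W) := by
  have hle : dist Z Y ≤ dist X Y := by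
    have := (mem_segment_iff_wbtw.1 hZ).dist_le_max_dist Y
    rwa [dist_comm W Y, ← hiso, max_self] at this
  have hray := onRay_of_mem_segment hZ
  have hWX (hne : Z ≠ X) : W ≠ X := by
    rintro rfl
    rw [segment_same] at hZ
    exact hne hZ
  obtain ⟨hBC, hCA, hAB⟩ := ne_of_dist_lt_dist hab hbc
  rcases eq_of_triple_eq hab hbc hK with ⟨rfl, rfl, rfl⟩ | ⟨rfl, rfl, rfl⟩ |
    ⟨rfl, rfl, rfl⟩ | ⟨rfl, rfl, rfl⟩ | ⟨rfl, rfl, rfl⟩ | ⟨rfl, rfl, rfl⟩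
  · exact .inr (.inl ⟨W, hray, hWX hCA, hiso.symm, rfl⟩)
  · exact .inl ⟨W, hray, hWX hAB.symm, by rw [dist_comm, ← hiso, dist_comm], by rw [tri_swap]⟩
  · exact .inr (.inr ⟨W, hray, hWX hBC.symm, by rw [← hiso, dist_comm],
      by rw [← tri_rotate, tri_swap]⟩)
  · linarith [dist_comm A B]
  · linarith [dist_comm C A]
  · linarith [dist_comm B C]

lemma isThirdKind_of_mem_segment (hab : dist B C < dist C A) (hbc : dist C A < dist A B)
    (hK : ({A, B, C} : Set Pt) = {X, Y, Z}) (hZ : Z ∈ segment ℝ X W) (hiso : dist Y W = dist W X) :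
    IsThirdKind A B C (tri X Y W) := by
  have hle : dist X Z ≤ dist Y Z := by
    have := (mem_segment_iff_wbtw.1 hZ).dist_add_dist
    linarith [dist_triangle Y Z W, dist_comm W X]
  have hline (hne : X ≠ Z) : W ∈ line[ℝ, X, Z] :=
    (mem_segment_iff_wbtw.1 hZ).right_mem_affineSpan_of_left_ne hne
  obtain ⟨hBC, hCA, -⟩ := ne_of_dist_lt_dist hab hbc
  rcases eq_of_triple_eq hab hbc hK with ⟨rfl, rfl, rfl⟩ | ⟨rfl, rfl, rfl⟩ |
    ⟨rfl, rfl, rfl⟩ | ⟨rfl, rfl, rfl⟩ | ⟨rfl, rfl, rfl⟩ | ⟨rfl, rfl, rfl⟩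
  · linarith [dist_comm C A]
  · linarith [dist_comm B C]
  · exact .inr (.inr ⟨W, hline hBC, by rw [← hiso, dist_comm], by rw [← tri_rotate, tri_swap]⟩)
  · exact .inr (.inl ⟨W, Set.pair_comm C B ▸ hline hBC.symm, by rw [← hiso, dist_comm],
      by rw [← tri_rotate]⟩)
  · linarith [dist_comm A B]
  · exact .inl ⟨W, Set.pair_comm C A ▸ hline hCA, by rw [← hiso, dist_comm],
      by rw [tri_swap, tri_rotate, tri_rotate]⟩

lemma isMinContainer_of_isMinIsoscelesContainer (h : IsMinIsoscelesContainer A B C S P R) :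
    IsMinContainer {A, B, C} S P R := by
  obtain ⟨⟨hind, hiso, hsub⟩, hmin⟩ := h
  refine ⟨affineIndependent_iff_cross_ne_zero.1 hind, hiso, (subset_convexHull ℝ _).trans hsub,
    fun S' P' R' hcross' hiso' hsub' => ?_⟩
  have hle := hmin S' P' R' ⟨affineIndependent_iff_cross_ne_zero.2 hcross', hiso',
    convexHull_min hsub' (convex_convexHull ℝ _)⟩
  rw [triArea_eq, triArea_eq] at hle
  exact le_of_mul_le_mul_right hle unitArea_pos

end Kinds

end IsoscelesContainer

/-- every minimum area isosceles container of a triangle `A B C`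
with side lengths `a < b < c` equals (as a convex set) one of the nine special
containers: first kind (`AB'C`, `ABC'`, `ABC''`), second kind
(`AB₁C`, `ABC₁`, `ABC₂`), or third kind (`ĀBC`, `AB̄C`, `ABC̄`). -/
theorem statement1 (A B C S P R : Pt)
    (hABC : AffineIndependent ℝ ![A, B, C])
    (hab : dist B C < dist C A) (hbc : dist C A < dist A B)
    (hmin : IsMinIsoscelesContainer A B C S P R) :
    (∃ B' : Pt, OnRay C B B' ∧ dist C B' = dist C A ∧
      tri S P R = tri A B' C) ∨
    (∃ C' : Pt, OnRay A C C' ∧ dist A C' = dist A B ∧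
      tri S P R = tri A B C') ∨
    (∃ C'' : Pt, OnRay B C C'' ∧ dist B C'' = dist A B ∧
      tri S P R = tri A B C'') ∨
    (∃ B₁ : Pt, OnRay A B B₁ ∧ B₁ ≠ A ∧ dist B₁ C = dist C A ∧
      tri S P R = tri A B₁ C) ∨
    (∃ C₁ : Pt, OnRay A C C₁ ∧ C₁ ≠ A ∧ dist B C₁ = dist A B ∧
      tri S P R = tri A B C₁) ∨
    (∃ C₂ : Pt, OnRay B C C₂ ∧ C₂ ≠ B ∧ dist A C₂ = dist A B ∧
      tri S P R = tri A B C₂) ∨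
    (∃ Abar : Pt, Abar ∈ line[ℝ, A, C] ∧ dist Abar B = dist Abar C ∧
      tri S P R = tri Abar B C) ∨
    (∃ Bbar : Pt, Bbar ∈ line[ℝ, B, C] ∧ dist Bbar A = dist Bbar C ∧
      tri S P R = tri A Bbar C) ∨
    (∃ Cbar : Pt, Cbar ∈ line[ℝ, B, C] ∧ dist Cbar A = dist Cbar B ∧
      tri S P R = tri A B Cbar) := by
  obtain ⟨X, Y, Z, W, hK, hT, hiso, hZ⟩ :=
    (IsoscelesContainer.isMinContainer_of_isMinIsoscelesContainer hmin).isSpecialContainer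
  have hkind : IsoscelesContainer.IsFirstKind A B C (tri X Y W) ∨
      IsoscelesContainer.IsSecondKind A B C (tri X Y W) ∨
        IsoscelesContainer.IsThirdKind A B C (tri X Y W) := by
    rcases hiso with hYW | hXW | hXY
    · exact .inr (.inr (IsoscelesContainer.isThirdKind_of_mem_segment hab hbc hK hZ hYW))
    · rw [dist_comm] at hXW
      exact .inl (IsoscelesContainer.isFirstKind_of_mem_segment hab hbc hK hZ hXW)
    · exact .inr (.inl (IsoscelesContainer.isSecondKind_of_mem_segment hab hbc hK hZ hXY))
  rw [← hT] at hkind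
  simpa only [IsoscelesContainer.IsFirstKind, IsoscelesContainer.IsSecondKind,
    IsoscelesContainer.IsThirdKind, or_assoc] using hkind
end
end

section
/- Let ABC be a triangle with side lengths a < b < c, and let T' be a minimum area isosceles container for ABC. If T' is an acute triangle, then T' equals (as a convex set) one of the special containers of the first kind AB'C, ABC', ABC''. -/
open EuclideanGeometry MeasureTheory Real

noncomputable section

/-!
Use oblique coordinates in which the minimal container is the unit triangle with its apex at the
origin. Minimality forces a point of `{A, B, C}` on each side. If the apex is not one of these three
points, then either a base vertex is, or each side carries one of them in its interior; sliding,
reflecting or rotating the container then decreases the area. So the apex is a vertex, with vectors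
`v`, `w` to the other two vertices, `v` the longer one. Comparing with the special container on
these two legs, whose area is that of the triangle scaled by `|v| / |w|`, Gram's inequality leaves
only the case in which `v` is a unit vector and the two triangles share both leg lines.
-/

section Oblique

open Filter Topology

lemma exists_ne_zero_mul_nonpos (κ : ℝ) {p : ℝ → Prop} (hp : ∀ᶠ t in 𝓝 0, p t) :
    ∃ t ≠ 0, t * κ ≤ 0 ∧ p t := by
  have hneg : ∀ᶠ t in 𝓝 (0 : ℝ), p (-t) := (continuous_neg.tendsto' 0 0 neg_zero).eventually hp
  obtain ⟨t, ⟨hpt, hnt⟩, ht : 0 < t⟩ :=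
    ((hp.and hneg).filter_mono nhdsWithin_le_nhds |>.and
      (self_mem_nhdsWithin : Set.Ioi (0 : ℝ) ∈ 𝓝[>] 0)).exists
  rcases le_total κ 0 with h | h
  · exact ⟨t, ht.ne', mul_nonpos_of_nonneg_of_nonpos ht.le h, hpt⟩
  · exact ⟨-t, neg_ne_zero.2 ht.ne', mul_nonpos_of_nonpos_of_nonneg (by linarith) h, hnt⟩

/-- The triangle with vertices `(0, 0)`, `(1, 0)`, `(0, 1)`: barycentric coordinates of a triangular
region with respect to its last two vertices. -/
def unitTriangle : Set (ℝ × ℝ) := {w | 0 ≤ w.1 ∧ 0 ≤ w.2 ∧ w.1 + w.2 ≤ 1}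

/-- The determinant of two vectors in coordinates, that is, the signed area ratio of the triangle
they span to the unit triangle. -/
def planeDet (v w : ℝ × ℝ) : ℝ := v.1 * w.2 - v.2 * w.1

/-- The squared length of `w.1 • p + w.2 • r` for unit vectors `p`, `r` enclosing an angle of
cosine `c`. -/
def obliqueNormSq (c : ℝ) (w : ℝ × ℝ) : ℝ := w.1 ^ 2 + w.2 ^ 2 + 2 * c * (w.1 * w.2)

/-- In oblique coordinates with unit axes at an acute angle of cosine `c`, the unit triangle
contains the points of `K` and no isosceles triangle containing them has smaller area. The
competitors have apex `s` and legs `a`, `b`. -/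
structure IsMinUnitContainer (c : ℝ) (K : Finset (ℝ × ℝ)) : Prop where
  cos_pos : 0 < c
  cos_lt_one : c < 1
  subset : ∀ z ∈ K, z ∈ unitTriangle
  one_le_abs_planeDet : ∀ s a b : ℝ × ℝ, obliqueNormSq c a = obliqueNormSq c b →
    planeDet a b ≠ 0 → (∀ z ∈ K, ∃ w ∈ unitTriangle, z = s + w.1 • a + w.2 • b) →
    1 ≤ |planeDet a b|

lemma obliqueNormSq_eq_sub (c : ℝ) (w : ℝ × ℝ) :
    obliqueNormSq c w = (w.1 + w.2) ^ 2 - 2 * ((1 - c) * (w.1 * w.2)) := by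
  simp only [obliqueNormSq]; ring

lemma obliqueNormSq_smul (c t : ℝ) (w : ℝ × ℝ) :
    obliqueNormSq c (t • w) = t ^ 2 * obliqueNormSq c w := by
  simp only [obliqueNormSq, Prod.smul_fst, Prod.smul_snd, smul_eq_mul]; ring

lemma planeDet_smul_smul (t t' : ℝ) (v w : ℝ × ℝ) :
    planeDet (t • v) (t' • w) = t * t' * planeDet v w := by
  simp only [planeDet, Prod.smul_fst, Prod.smul_snd, smul_eq_mul]; ring

lemma obliqueNormSq_pos {c : ℝ} (hc : |c| < 1) {w : ℝ × ℝ} (hw : w ≠ 0) :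
    0 < obliqueNormSq c w := by
  have hc2 : 0 < 1 - c ^ 2 := by linarith [(sq_lt_one_iff_abs_lt_one c).2 hc]
  have hsum : obliqueNormSq c w = (w.1 + c * w.2) ^ 2 + (1 - c ^ 2) * w.2 ^ 2 := by
    simp only [obliqueNormSq]; ring
  rw [hsum]
  rcases eq_or_ne w.2 0 with h2 | h2
  · have h1 : w.1 ≠ 0 := fun h1 => hw (Prod.ext h1 h2)
    simp only [h2, mul_zero, add_zero]
    positivity
  · positivity

lemma obliqueNormSq_le_one {c : ℝ} (hc : c ≤ 1) {w : ℝ × ℝ} (hw : w ∈ unitTriangle) :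
    obliqueNormSq c w ≤ 1 := by
  obtain ⟨h1, h2, h12⟩ := hw
  have hprod : 0 ≤ (1 - c) * (w.1 * w.2) := mul_nonneg (by linarith) (mul_nonneg h1 h2)
  calc obliqueNormSq c w ≤ (w.1 + w.2) ^ 2 := by rw [obliqueNormSq_eq_sub]; linarith
    _ ≤ 1 := pow_le_one₀ (by linarith) h12

lemma eq_of_obliqueNormSq_eq_one {c : ℝ} (hc : c < 1) {w : ℝ × ℝ} (hw : w ∈ unitTriangle)
    (h : obliqueNormSq c w = 1) : w = (1, 0) ∨ w = (0, 1) := by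
  obtain ⟨h1, h2, h12⟩ := hw
  have hsq : (w.1 + w.2) ^ 2 ≤ 1 := pow_le_one₀ (by linarith) h12
  have hprod : 0 ≤ w.1 * w.2 := mul_nonneg h1 h2
  rw [obliqueNormSq_eq_sub] at h
  have hsum : w.1 + w.2 = 1 :=
    (pow_eq_one_iff_of_nonneg (by linarith) two_ne_zero).1 (by nlinarith)
  have hzero : w.1 * w.2 = 0 := by nlinarith
  rcases mul_eq_zero.1 hzero with h0 | h0
  · exact Or.inr (Prod.ext h0 (by linarith))
  · exact Or.inl (Prod.ext (by linarith) h0)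

/-- Gram's identity; `v.1 * w.1 + v.2 * w.2` is not the inner product, but on the positive quadrant
it is a lower bound for it when the axes enclose an acute angle. -/
lemma planeDet_sq_add_sq_le {c : ℝ} (hc : 0 ≤ c) {v w : ℝ × ℝ} (hv1 : 0 ≤ v.1) (hv2 : 0 ≤ v.2)
    (hw1 : 0 ≤ w.1) (hw2 : 0 ≤ w.2) :
    planeDet v w ^ 2 + (v.1 * w.1 + v.2 * w.2) ^ 2 ≤ obliqueNormSq c v * obliqueNormSq c w := by
  have hgram : obliqueNormSq c v * obliqueNormSq c w =
      planeDet v w ^ 2 + (v.1 * w.1 + v.2 * w.2) ^ 2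
      + 2 * c * ((v.1 * w.1 + v.2 * w.2) * (v.1 * w.2 + w.1 * v.2))
      + 4 * c ^ 2 * ((v.1 * w.1) * (v.2 * w.2)) := by
    simp only [obliqueNormSq, planeDet]; ring
  rw [hgram]
  have hcross : 0 ≤ 2 * c * ((v.1 * w.1 + v.2 * w.2) * (v.1 * w.2 + w.1 * v.2)) := by positivity
  have hquad : 0 ≤ 4 * c ^ 2 * ((v.1 * w.1) * (v.2 * w.2)) := by positivity
  linarith

namespace IsMinUnitContainer

variable {c : ℝ} {K : Finset (ℝ × ℝ)} {v w : ℝ × ℝ}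

lemma abs_cos_lt_one (h : IsMinUnitContainer c K) : |c| < 1 :=
  abs_lt.2 ⟨by linarith [h.cos_pos], h.cos_lt_one⟩

lemma swap (h : IsMinUnitContainer c K) : IsMinUnitContainer c (K.image Prod.swap) where
  cos_pos := h.cos_pos
  cos_lt_one := h.cos_lt_one
  subset := by
    simp only [Finset.forall_mem_image]
    exact fun z hz => let ⟨h1, h2, h12⟩ := h.subset z hz; ⟨h2, h1, by simpa [add_comm] using h12⟩
  one_le_abs_planeDet s a b hlegs hdet hK := by
    have hswap : planeDet b.swap a.swap = planeDet a b := by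
      simp only [planeDet, Prod.fst_swap, Prod.snd_swap]; ring
    rw [← hswap] at hdet ⊢
    refine h.one_le_abs_planeDet s.swap b.swap a.swap ?_ hdet fun z hz => ?_
    · simp only [obliqueNormSq, Prod.fst_swap, Prod.snd_swap] at hlegs ⊢; linarith
    · obtain ⟨w, ⟨h1, h2, h12⟩, hw⟩ := hK z.swap (Finset.mem_image_of_mem _ hz)
      refine ⟨w.swap, ⟨h2, h1, by simpa [add_comm] using h12⟩, ?_⟩
      rw [← z.swap_swap, hw]
      simp only [Prod.swap_add, Prod.smul_swap, Prod.fst_swap, Prod.snd_swap]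
      abel

/-- A competitor given by its apex `s`, its leg length `m` and arbitrary vectors `d`, `e` in the
directions of its legs. -/
lemma sqrt_mul_sqrt_le (h : IsMinUnitContainer c K) {s d e : ℝ × ℝ} {m : ℝ} (hm : 0 < m)
    (hdet : planeDet d e ≠ 0)
    (hK : ∀ z ∈ K, ∃ u v : ℝ, 0 ≤ u ∧ 0 ≤ v ∧
      u * √(obliqueNormSq c d) + v * √(obliqueNormSq c e) ≤ m ∧ z = s + u • d + v • e) :
    √(obliqueNormSq c d) * √(obliqueNormSq c e) ≤ m ^ 2 * |planeDet d e| := by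
  have hd : 0 < obliqueNormSq c d :=
    obliqueNormSq_pos h.abs_cos_lt_one (by rintro rfl; simp [planeDet] at hdet)
  have he : 0 < obliqueNormSq c e :=
    obliqueNormSq_pos h.abs_cos_lt_one (by rintro rfl; simp [planeDet] at hdet)
  set δ := √(obliqueNormSq c d)
  set ε := √(obliqueNormSq c e)
  have hδ : 0 < δ := Real.sqrt_pos.2 hd
  have hε : 0 < ε := Real.sqrt_pos.2 he
  have harea := h.one_le_abs_planeDet s ((m / δ) • d) ((m / ε) • e)
    (by
      rw [obliqueNormSq_smul, obliqueNormSq_smul, div_pow, div_pow, Real.sq_sqrt hd.le,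
        Real.sq_sqrt he.le, div_mul_cancel₀ _ hd.ne', div_mul_cancel₀ _ he.ne'])
    (by rw [planeDet_smul_smul]; positivity)
    (fun z hz => by
      obtain ⟨u, v, hu, hv, huv, rfl⟩ := hK z hz
      refine ⟨(u * δ / m, v * ε / m), ⟨by positivity, by positivity, ?_⟩, ?_⟩
      · rwa [← add_div, div_le_one hm]
      · simp only [smul_smul]
        congr <;> field_simp)
  rw [planeDet_smul_smul, abs_mul, abs_of_pos (by positivity)] at harea
  calc δ * ε = δ * ε * 1 := (mul_one _).symm
    _ ≤ δ * ε * (m / δ * (m / ε) * |planeDet d e|) := by gcongr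
    _ = m ^ 2 * |planeDet d e| := by field_simp

/-- If `K` lies on the two legs of an angle, no square roots are needed to compare with the
isosceles triangle of squared leg length `M` cut off from that angle. -/
lemma mul_le_sq_mul_planeDet_sq (h : IsMinUnitContainer c K) {s d e : ℝ × ℝ} {M : ℝ} (hM : 0 < M)
    (hdet : planeDet d e ≠ 0)
    (hK : ∀ z ∈ K, (∃ u, 0 ≤ u ∧ u ^ 2 * obliqueNormSq c d ≤ M ∧ z = s + u • d) ∨
      ∃ v, 0 ≤ v ∧ v ^ 2 * obliqueNormSq c e ≤ M ∧ z = s + v • e) :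
    obliqueNormSq c d * obliqueNormSq c e ≤ M ^ 2 * planeDet d e ^ 2 := by
  have hd : 0 < obliqueNormSq c d :=
    obliqueNormSq_pos h.abs_cos_lt_one (by rintro rfl; simp [planeDet] at hdet)
  have he : 0 < obliqueNormSq c e :=
    obliqueNormSq_pos h.abs_cos_lt_one (by rintro rfl; simp [planeDet] at hdet)
  have hlen : ∀ u q : ℝ, u ^ 2 * q ≤ M → u * √q ≤ √M := fun u q hq => by
    refine Real.le_sqrt_of_sq_le ?_
    rcases le_total 0 q with h0 | h0
    · rwa [mul_pow, Real.sq_sqrt h0]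
    · simpa [Real.sqrt_eq_zero_of_nonpos h0] using hM.le
  have hle := h.sqrt_mul_sqrt_le (s := s) (Real.sqrt_pos.2 hM) hdet fun z hz => by
    rcases hK z hz with ⟨u, hu, huM, rfl⟩ | ⟨v, hv, hvM, rfl⟩
    · exact ⟨u, 0, hu, le_rfl, by simpa using hlen u _ huM, by simp⟩
    · exact ⟨0, v, le_rfl, hv, by simpa using hlen v _ hvM, by simp⟩
  rw [Real.sq_sqrt hM.le] at hle
  calc obliqueNormSq c d * obliqueNormSq c e
      = (√(obliqueNormSq c d) * √(obliqueNormSq c e)) ^ 2 := by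
        rw [mul_pow, Real.sq_sqrt hd.le, Real.sq_sqrt he.le]
    _ ≤ (M * |planeDet d e|) ^ 2 := by gcongr
    _ = M ^ 2 * planeDet d e ^ 2 := by rw [mul_pow, sq_abs]

/-- Otherwise slide the apex inward along the second leg, keeping the base vertex `(1, 0)`. -/
lemma exists_mem_first_leg (h : IsMinUnitContainer c K) : ∃ a < 1, (a, (0 : ℝ)) ∈ K := by
  by_contra! hne
  have hslide : ∀ᶠ s in 𝓝[>] (0 : ℝ), s < c ∧ ∀ z ∈ K, s * (1 - z.1) ≤ z.2 := by
    refine (eventually_nhdsWithin_of_eventually_nhds (eventually_lt_nhds h.cos_pos)).and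
      ((eventually_all_finset K).2 fun z hz => ?_)
    rcases (h.subset z hz).2.1.eq_or_lt with h0 | h0
    · have hz1 : 1 ≤ z.1 := by
        by_contra! hlt
        exact hne z.1 hlt (by rwa [h0])
      filter_upwards [self_mem_nhdsWithin] with s (hs : 0 < s)
      nlinarith
    · have hev : ∀ᶠ s in 𝓝 (0 : ℝ), s * (1 - z.1) < z.2 :=
        ContinuousAt.eventually_lt (by fun_prop) (by fun_prop) (by simpa using h0)
      exact eventually_nhdsWithin_of_eventually_nhds (hev.mono fun _ => le_of_lt)
  obtain ⟨s, ⟨hsc, hsK⟩, hs0 : 0 < s⟩ := (hslide.and self_mem_nhdsWithin).exists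
  have hc1 := h.cos_lt_one
  have hnormSq : obliqueNormSq c (1, -s) = 1 + s ^ 2 - 2 * c * s := by
    simp only [obliqueNormSq]; ring
  have hunit : obliqueNormSq c (0, 1) = 1 := by simp [obliqueNormSq]
  have hdet : planeDet (1, -s) (0, 1) = 1 := by simp [planeDet]
  set L := √(obliqueNormSq c (1, -s)) with hL
  have hL0 : 0 < L := Real.sqrt_pos.2 (by rw [hnormSq]; nlinarith)
  have hLs : 1 - s ≤ L := Real.le_sqrt_of_sq_le (by rw [hnormSq]; nlinarith)
  have hL1 : L < 1 := (Real.sqrt_lt' one_pos).2 (by rw [hnormSq]; nlinarith)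
  have hle := h.sqrt_mul_sqrt_le (s := (0, s)) hL0 (hdet ▸ one_ne_zero) fun z hz => by
    obtain ⟨h1, h2, h12⟩ := h.subset z hz
    refine ⟨z.1, z.2 - s * (1 - z.1), h1, by linarith [hsK z hz], ?_, ?_⟩
    · rw [hunit, Real.sqrt_one, ← hL]
      nlinarith
    · exact Prod.ext (by simp)
        (by simp only [Prod.snd_add, Prod.smul_snd, smul_eq_mul]; ring)
  rw [hunit, hdet, ← hL] at hle
  simp only [Real.sqrt_one, mul_one, abs_one] at hle
  nlinarith

lemma exists_mem_second_leg (h : IsMinUnitContainer c K) : ∃ b < 1, ((0 : ℝ), b) ∈ K := by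
  obtain ⟨b, hb, hbK⟩ := h.swap.exists_mem_first_leg
  obtain ⟨z, hz, hzb⟩ := Finset.mem_image.1 hbK
  obtain rfl : z = (0, b) := Prod.swap_injective hzb
  exact ⟨b, hb, hz⟩

/-- Otherwise shrink the triangle towards its apex. -/
lemma exists_mem_base (h : IsMinUnitContainer c K) : ∃ e, (e, 1 - e) ∈ K := by
  by_contra! hne
  have hshrink : ∀ᶠ m in 𝓝[<] (1 : ℝ), 0 < m ∧ ∀ z ∈ K, z.1 + z.2 ≤ m := by
    refine eventually_nhdsWithin_of_eventually_nhds ((eventually_gt_nhds one_pos).and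
      ((eventually_all_finset K).2 fun z hz => ?_))
    have hlt : z.1 + z.2 < 1 := (h.subset z hz).2.2.lt_of_ne fun h1 =>
      hne z.1 (by rwa [← h1, add_sub_cancel_left])
    exact (eventually_gt_nhds hlt).mono fun _ => le_of_lt
  obtain ⟨m, ⟨hm0, hmK⟩, hm1 : m < 1⟩ := (hshrink.and self_mem_nhdsWithin).exists
  have hle := h.sqrt_mul_sqrt_le (s := 0) (d := (1, 0)) (e := (0, 1)) hm0 (by simp [planeDet])
    fun z hz => ⟨z.1, z.2, (h.subset z hz).1, (h.subset z hz).2.1,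
      by simpa [obliqueNormSq] using hmK z hz, by ext <;> simp⟩
  have hm : (1 : ℝ) ≤ m ^ 2 := by simpa [obliqueNormSq, planeDet] using hle
  exact absurd hm (pow_lt_one₀ hm0.le hm1 two_ne_zero).not_ge

/-- The competitor with base vertex `(1, 0)` as its apex and the leg lines through `(0, 0)` and
`(0, b)` is smaller. -/
lemma not_subset_of_two_mul_le (h : IsMinUnitContainer c K) {a b : ℝ} (ha0 : 0 < a) (ha1 : a < 1)
    (hb0 : 0 < b) (hbc : 2 * b ≤ c) : ¬ K ⊆ {(a, 0), (0, b), (1, 0)} := by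
  intro hK
  have hc1 := h.cos_lt_one
  have hd : obliqueNormSq c (-1, 0) = 1 := by simp [obliqueNormSq]
  have he : obliqueNormSq c (-1, b) = 1 + b ^ 2 - 2 * c * b := by simp only [obliqueNormSq]; ring
  have hdet : planeDet (-1, 0) (-1, b) = -b := by simp [planeDet]
  set N := 1 + b ^ 2 - 2 * c * b
  have hbN : b ^ 2 < N := by nlinarith
  have hN1 : N < 1 := by nlinarith
  set M := max N ((1 - a) ^ 2)
  have hNM : N ≤ M := le_max_left _ _
  have hM1 : M < 1 := max_lt hN1 (pow_lt_one₀ (by linarith) (by linarith) two_ne_zero)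
  have hM0 : 0 < M := by linarith [sq_nonneg b]
  have hle : N ≤ M ^ 2 * b ^ 2 := by
    have hprod := h.mul_le_sq_mul_planeDet_sq (s := (1, 0)) hM0
      (by rw [hdet]; exact neg_ne_zero.2 hb0.ne') fun z hz => by
        simp only [hd, he]
        rcases (by simpa using hK hz : z = (a, 0) ∨ z = (0, b) ∨ z = (1, 0)) with rfl | rfl | rfl
        · exact Or.inl ⟨1 - a, by linarith, by simp [M], by simp⟩
        · exact Or.inr ⟨1, zero_le_one, by simpa using hNM, by simp⟩
        · exact Or.inl ⟨0, le_rfl, by simpa using hM0.le, by simp⟩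
    rwa [hd, he, hdet, one_mul, neg_sq] at hprod
  have hMb : M ^ 2 * b ^ 2 ≤ b ^ 2 :=
    mul_le_of_le_one_left (sq_nonneg b) (pow_le_one₀ hM0.le hM1.le)
  linarith

/-- Sliding the apex from `(0, 0)` to `(s, 0)`, with the second leg kept through `(0, b)`, shrinks
the area to first order. -/
lemma not_subset_of_lt_two_mul (h : IsMinUnitContainer c K) {a b : ℝ} (ha0 : 0 < a) (ha1 : a < 1)
    (hb0 : 0 < b) (hb1 : b < 1) (hbc : c < 2 * b) : ¬ K ⊆ {(a, 0), (0, b), (1, 0)} := by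
  intro hK
  have hlen : ∀ᶠ s in 𝓝 (0 : ℝ), b ^ 2 + 2 * s * (1 - c * b) < 1 :=
    ContinuousAt.eventually_lt (by fun_prop) (by fun_prop)
      (by simpa using pow_lt_one₀ hb0.le hb1 two_ne_zero)
  have hslope : ∀ᶠ s in 𝓝 (0 : ℝ), b ^ 2 * (6 * s - 4 * s ^ 2 + s ^ 3) < s + 2 * b * (2 * b - c) :=
    ContinuousAt.eventually_lt (by fun_prop) (by fun_prop)
      (by simpa using mul_pos (by positivity : 0 < 2 * b) (sub_pos.2 hbc))
  obtain ⟨s, ⟨hsa, hslen, hsslope⟩, hs0 : 0 < s⟩ :=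
    (((eventually_lt_nhds ha0).and (hlen.and hslope)).filter_mono nhdsWithin_le_nhds |>.and
      (self_mem_nhdsWithin : Set.Ioi (0 : ℝ) ∈ 𝓝[>] 0)).exists
  have hd : obliqueNormSq c (1, 0) = 1 := by simp [obliqueNormSq]
  have he : obliqueNormSq c (-s, b) = s ^ 2 + b ^ 2 - 2 * c * s * b := by
    simp only [obliqueNormSq]; ring
  have hdet : planeDet (1, 0) (-s, b) = b := by simp [planeDet]
  have hle := h.mul_le_sq_mul_planeDet_sq (s := (s, 0)) (M := (1 - s) ^ 2)
    (pow_pos (by linarith) 2) (by rw [hdet]; exact hb0.ne') fun z hz => by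
      simp only [hd, he]
      rcases (by simpa using hK hz : z = (a, 0) ∨ z = (0, b) ∨ z = (1, 0)) with rfl | rfl | rfl
      · exact Or.inl ⟨a - s, by linarith, by nlinarith, by simp⟩
      · exact Or.inr ⟨1, zero_le_one, by linarith, by simp⟩
      · exact Or.inl ⟨1 - s, by linarith, by simp, by simp⟩
  rw [hd, he, hdet, one_mul] at hle
  have hgap : s ^ 2 + b ^ 2 - 2 * c * s * b - ((1 - s) ^ 2) ^ 2 * b ^ 2 =
      s * (s + 2 * b * (2 * b - c) - b ^ 2 * (6 * s - 4 * s ^ 2 + s ^ 3)) := by ring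
  have hgap0 := mul_pos hs0 (sub_pos.2 hsslope)
  rw [← hgap] at hgap0
  linarith

lemma not_subset_base_vertex (h : IsMinUnitContainer c K) {a b : ℝ} (ha0 : 0 < a) (ha1 : a < 1)
    (hb0 : 0 < b) (hb1 : b < 1) : ¬ K ⊆ {(a, 0), (0, b), (1, 0)} :=
  (le_or_gt (2 * b) c).elim (h.not_subset_of_two_mul_le ha0 ha1 hb0)
    (h.not_subset_of_lt_two_mul ha0 ha1 hb0 hb1)

/-- The vector `(-(c * z.1 + z.2), z.1 + c * z.2)` is `z` turned by a right angle and scaled by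
`√(1 - c ^ 2)`, so the left-hand sides below are the coordinates, up to the factor
`1 + t ^ 2 * (1 - c ^ 2)`, of `z` with respect to axes turned by the angle of slope
`t * √(1 - c ^ 2)`. -/
lemma one_add_le_sq_of_rotate (h : IsMinUnitContainer c K) {t σ τ m : ℝ} (hm : 0 < m)
    (h1 : ∀ z ∈ K, σ ≤ z.1 + t * (c * z.1 + z.2))
    (h2 : ∀ z ∈ K, τ ≤ z.2 - t * (z.1 + c * z.2))
    (h12 : ∀ z ∈ K, z.1 + z.2 + t * (1 - c) * (z.2 - z.1) ≤ σ + τ + m) :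
    1 + t ^ 2 * (1 - c ^ 2) ≤ m ^ 2 := by
  have hc2 : 0 < 1 - c ^ 2 := by nlinarith [h.cos_pos, h.cos_lt_one]
  set Δ := 1 + t ^ 2 * (1 - c ^ 2) with hΔ
  have hΔ0 : 0 < Δ := by positivity
  have hdet : planeDet ((m / Δ) • (1 - t * c, t)) ((m / Δ) • (-t, 1 + t * c)) = m ^ 2 / Δ := by
    have hrot : planeDet (1 - t * c, t) (-t, 1 + t * c) = Δ := by simp only [planeDet, hΔ]; ring
    rw [planeDet_smul_smul, hrot]; field_simp
  have hle := h.one_le_abs_planeDet ((σ * (1 - t * c) - τ * t) / Δ, (σ * t + τ * (1 + t * c)) / Δ)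
    ((m / Δ) • (1 - t * c, t)) ((m / Δ) • (-t, 1 + t * c))
    (by rw [obliqueNormSq_smul, obliqueNormSq_smul]; simp only [obliqueNormSq]; ring)
    (by rw [hdet]; positivity)
    fun z hz => by
      refine ⟨((z.1 + t * (c * z.1 + z.2) - σ) / m, (z.2 - t * (z.1 + c * z.2) - τ) / m),
        ⟨div_nonneg (by linarith [h1 z hz]) hm.le, div_nonneg (by linarith [h2 z hz]) hm.le, ?_⟩,
        ?_⟩
      · rw [← add_div, div_le_one hm]
        linarith [h12 z hz]
      · ext
        · simp only [Prod.fst_add, Prod.smul_fst, smul_eq_mul]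
          field_simp
          rw [hΔ]; ring
        · simp only [Prod.snd_add, Prod.smul_snd, smul_eq_mul]
          field_simp
          rw [hΔ]; ring
  rwa [hdet, abs_of_pos (by positivity), one_le_div hΔ0] at hle

/-- The triangles similar to the unit triangle whose sides pass through the three points form a
one-parameter family of rotated copies. Their size is a concave function of the parameter `t` up to
the factor `1 + t ^ 2 * (1 - c ^ 2)`, hence no local minimum. -/
lemma not_subset_side_interiors (h : IsMinUnitContainer c K) {a b e : ℝ} (ha0 : 0 < a)
    (ha1 : a < 1) (hb0 : 0 < b) (hb1 : b < 1) (he0 : 0 < e) (he1 : e < 1) :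
    ¬ K ⊆ {(a, 0), (0, b), (e, 1 - e)} := by
  intro hK
  set κ := (1 - c) * (1 - 2 * e) - b + a with hκ
  have hsmall : ∀ᶠ t in 𝓝 (0 : ℝ), 0 < 1 + t * κ ∧ 0 < a + t * (c * a - b) ∧
      0 < (1 - a) + t * (κ - (c * a - b)) ∧ 0 < b + t * (a - c * b) ∧
      0 < (1 - b) + t * (κ - (a - c * b)) ∧ 0 < e + t * (c * e + (1 - e) - b) ∧
      0 < (1 - e) - t * (e + c * (1 - e) - a) := by
    refine .and ?_ <| .and ?_ <| .and ?_ <| .and ?_ <| .and ?_ <| .and ?_ ?_ <;>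
      exact ContinuousAt.eventually_lt (by fun_prop) (by fun_prop) (by simp [*])
  obtain ⟨t, ht0, htκ, hμ, hA0, hA1, hB0, hB1, hE0, hE1⟩ :=
    exists_ne_zero_mul_nonpos κ hsmall
  have hc2 : 0 < 1 - c ^ 2 := by nlinarith [h.cos_pos, h.cos_lt_one]
  have hcases : ∀ z ∈ K, z = (a, 0) ∨ z = (0, b) ∨ z = (e, 1 - e) := fun z hz => by
    simpa using hK hz
  have hle := h.one_add_le_sq_of_rotate (t := t) (σ := t * b) (τ := -(t * a)) hμ
    (fun z hz => by rcases hcases z hz with rfl | rfl | rfl <;> simp only <;> linarith)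
    (fun z hz => by rcases hcases z hz with rfl | rfl | rfl <;> simp only <;> linarith)
    (fun z hz => by rcases hcases z hz with rfl | rfl | rfl <;> simp only <;> linarith)
  have hμ1 : (1 + t * κ) ^ 2 ≤ 1 := pow_le_one₀ hμ.le (by linarith)
  have hpos : 0 < t ^ 2 * (1 - c ^ 2) := by positivity
  linarith

/-- Otherwise each of the three sides carries exactly one point of `K`. -/
lemma zero_mem (h : IsMinUnitContainer c K) (hcard : K.card ≤ 3) : ((0 : ℝ), (0 : ℝ)) ∈ K := by
  by_contra h0
  obtain ⟨a, ha1, haK⟩ := h.exists_mem_first_leg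
  obtain ⟨b, hb1, hbK⟩ := h.exists_mem_second_leg
  obtain ⟨e, heK⟩ := h.exists_mem_base
  have ha0 : 0 < a := (h.subset _ haK).1.lt_of_ne fun ha => h0 (ha ▸ haK)
  have hb0 : 0 < b := (h.subset _ hbK).2.1.lt_of_ne fun hb => h0 (hb ▸ hbK)
  have hK : K = {(a, 0), (0, b), (e, 1 - e)} := by
    refine (Finset.eq_of_subset_of_card_le (by simp [Finset.insert_subset_iff, *]) ?_).symm
    rwa [Finset.card_eq_three.2 ⟨_, _, _, ?_, ?_, ?_, rfl⟩]
    · simp [ha0.ne']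
    · simp only [ne_eq, Prod.mk.injEq]; rintro ⟨rfl, h1⟩; linarith
    · simp only [ne_eq, Prod.mk.injEq]; rintro ⟨rfl, h1⟩; linarith
  have he0 : 0 ≤ e := (h.subset _ heK).1
  have he1 : 0 ≤ 1 - e := (h.subset _ heK).2.1
  rcases he0.eq_or_lt with rfl | he0
  · refine h.swap.not_subset_base_vertex hb0 hb1 ha0 ha1 ?_
    rw [hK]; simp [Finset.image_insert, Finset.insert_comm]
  rcases he1.eq_or_lt with he1 | he1
  · obtain rfl : e = 1 := by linarith
    exact h.not_subset_base_vertex ha0 ha1 hb0 hb1 (by rw [hK]; simp)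
  · exact h.not_subset_side_interiors ha0 ha1 hb0 hb1 he0 (by linarith) hK.subset

/-- The isosceles triangle with apex `(0, 0)`, base vertex `v` and second leg through `w` contains
`K`; the squared area ratio of the triangle `(0, 0)`, `v`, `w` to the unit triangle is at most the
product of the squared lengths of `v` and `w`, so minimality forces equality throughout. -/
lemma eq_of_apex_mem (h : IsMinUnitContainer c {(0, 0), v, w}) (hdet : planeDet v w ≠ 0)
    (hle : obliqueNormSq c w ≤ obliqueNormSq c v) :
    v = (1, 0) ∧ w.1 = 0 ∨ v = (0, 1) ∧ w.2 = 0 := by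
  have hv := h.subset v (by simp)
  have hw := h.subset w (by simp)
  have hw0 : 0 < obliqueNormSq c w :=
    obliqueNormSq_pos h.abs_cos_lt_one (by rintro rfl; simp [planeDet] at hdet)
  set p := obliqueNormSq c v
  set q := obliqueNormSq c w
  have hp1 : p ≤ 1 := obliqueNormSq_le_one h.cos_lt_one.le hv
  have hp0 : 0 < p := hw0.trans_le hle
  have hqp : q ≤ p * planeDet v w ^ 2 := by
    have hprod := h.mul_le_sq_mul_planeDet_sq (s := (0, 0)) hp0 hdet fun z hz => by
      rcases (by simpa using hz : z = (0, 0) ∨ z = v ∨ z = w) with rfl | rfl | rfl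
      · exact Or.inl ⟨0, le_rfl, by simpa using hp0.le, by simp⟩
      · exact Or.inl ⟨1, zero_le_one, by simp [p], by simp⟩
      · exact Or.inr ⟨1, zero_le_one, by simpa using hle, by simp⟩
    exact le_of_mul_le_mul_left (by linarith : p * q ≤ p * (p * planeDet v w ^ 2)) hp0
  have hgram := planeDet_sq_add_sq_le h.cos_pos.le hv.1 hv.2.1 hw.1 hw.2.1
  have hdetp : p * planeDet v w ^ 2 ≤ planeDet v w ^ 2 :=
    mul_le_of_le_one_left (sq_nonneg _) hp1
  have hpq : p * q ≤ q := mul_le_of_le_one_left hw0.le hp1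
  have hq : q ≤ p * q := by linarith [sq_nonneg (v.1 * w.1 + v.2 * w.2)]
  have hp : p = 1 := le_antisymm hp1 ((le_mul_iff_one_le_left hw0).1 hq)
  have horth : v.1 * w.1 + v.2 * w.2 = 0 :=
    pow_eq_zero_iff two_ne_zero |>.1 (le_antisymm (by linarith) (sq_nonneg _))
  rcases eq_of_obliqueNormSq_eq_one h.cos_lt_one hv hp with rfl | rfl
  · exact Or.inl ⟨rfl, by simpa using horth⟩
  · exact Or.inr ⟨rfl, by simpa using horth⟩

end IsMinUnitContainer

end Oblique

section ObliquePoint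

variable {E : Type*} [AddCommGroup E] [Module ℝ E]

/-- The point with oblique coordinates `w` with respect to the origin `S` and the unit points `P`,
`R` on the axes. -/
def obliquePoint (S P R : E) (w : ℝ × ℝ) : E := S + w.1 • (P - S) + w.2 • (R - S)

lemma obliquePoint_sub_obliquePoint (S P R : E) (v w : ℝ × ℝ) :
    obliquePoint S P R v - obliquePoint S P R w =
      (v - w).1 • (P - S) + (v - w).2 • (R - S) := by
  simp only [obliquePoint, Prod.fst_sub, Prod.snd_sub]; module

@[simp] lemma obliquePoint_zero (S P R : E) : obliquePoint S P R 0 = S := by simp [obliquePoint]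

@[simp] lemma obliquePoint_one_zero (S P R : E) : obliquePoint S P R (1, 0) = P := by
  simp [obliquePoint]

@[simp] lemma obliquePoint_zero_one (S P R : E) : obliquePoint S P R (0, 1) = R := by
  simp [obliquePoint]

lemma obliquePoint_obliquePoint (S P R : E) (s a b w : ℝ × ℝ) :
    obliquePoint (obliquePoint S P R s) (obliquePoint S P R (s + a))
        (obliquePoint S P R (s + b)) w =
      obliquePoint S P R (s + w.1 • a + w.2 • b) := by
  simp only [obliquePoint, Prod.fst_add, Prod.snd_add, Prod.smul_fst, Prod.smul_snd, smul_eq_mul]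
  module

lemma convexHull_triple_eq_image_unitTriangle (S P R : E) :
    convexHull ℝ {S, P, R} = obliquePoint S P R '' unitTriangle := by
  refine (convexHull_min ?_ ?_).antisymm ?_
  · rintro _ (rfl | rfl | rfl)
    exacts [⟨0, by simp [unitTriangle], by simp⟩, ⟨(1, 0), by simp [unitTriangle], by simp⟩,
      ⟨(0, 1), by simp [unitTriangle], by simp⟩]
  · rintro _ ⟨v, ⟨hv1, hv2, hv⟩, rfl⟩ _ ⟨w, ⟨hw1, hw2, hw⟩, rfl⟩ s t hs ht hst
    refine ⟨s • v + t • w, ⟨?_, ?_, ?_⟩, ?_⟩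
    · simp only [Prod.fst_add, Prod.smul_fst, smul_eq_mul]; positivity
    · simp only [Prod.snd_add, Prod.smul_snd, smul_eq_mul]; positivity
    · simp only [Prod.fst_add, Prod.snd_add, Prod.smul_fst, Prod.smul_snd, smul_eq_mul]
      nlinarith
    · obtain rfl : t = 1 - s := by linarith
      simp only [obliquePoint, Prod.fst_add, Prod.snd_add, Prod.smul_fst, Prod.smul_snd,
        smul_eq_mul]
      module
  · rintro _ ⟨w, ⟨h1, h2, h12⟩, rfl⟩
    have hsum := (convex_convexHull ℝ ({S, P, R} : Set E)).sum_mem (t := Finset.univ)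
      (w := ![1 - w.1 - w.2, w.1, w.2]) (z := ![S, P, R])
      (by simpa [Fin.forall_fin_succ, h1, h2] using by linarith)
      (by simp only [Fin.sum_univ_three, Matrix.cons_val]; ring)
      (fun i _ => subset_convexHull ℝ _ (by fin_cases i <;> simp))
    convert hsum using 1
    simp only [obliquePoint, Fin.sum_univ_three, Matrix.cons_val]
    module

lemma affineIndependent_triple_iff_linearIndependent {A B C : E} :
    AffineIndependent ℝ ![A, B, C] ↔ LinearIndependent ℝ ![B - A, C - A] := by
  rw [affineIndependent_iff_linearIndependent_vsub ℝ _ (0 : Fin 3),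
    ← linearIndependent_equiv (finSuccAboveEquiv (0 : Fin 3))]
  congr! 1
  ext i; fin_cases i <;> rfl

lemma affineIndependent_obliquePoint_iff {S P R : E} (h : AffineIndependent ℝ ![S, P, R])
    (u v w : ℝ × ℝ) :
    AffineIndependent ℝ ![obliquePoint S P R u, obliquePoint S P R v, obliquePoint S P R w] ↔
      planeDet (v - u) (w - u) ≠ 0 := by
  rw [affineIndependent_triple_iff_linearIndependent] at h ⊢
  simp only [obliquePoint_sub_obliquePoint, LinearIndependent.pair_add_smul_add_smul_iff, h,
    true_and, planeDet, sub_ne_zero]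

lemma obliquePoint_injective {S P R : E} (h : AffineIndependent ℝ ![S, P, R]) :
    Function.Injective (obliquePoint S P R) := by
  intro v w hvw
  rw [affineIndependent_triple_iff_linearIndependent, LinearIndependent.pair_iff] at h
  rw [← sub_eq_zero, obliquePoint_sub_obliquePoint] at hvw
  exact sub_eq_zero.1 (Prod.ext_iff.2 (h _ _ hvw))

end ObliquePoint

lemma dist_obliquePoint_sq {E : Type*} [NormedAddCommGroup E] [InnerProductSpace ℝ E] {S P R : E}
    (h : dist S P = dist S R) (v w : ℝ × ℝ) :
    dist (obliquePoint S P R v) (obliquePoint S P R w) ^ 2 =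
      dist S P ^ 2 * obliqueNormSq (cos (∠ P S R)) (v - w) := by
  have hinner := InnerProductGeometry.cos_angle_mul_norm_mul_norm (P - S) (R - S)
  rw [dist_comm S P, dist_comm S R, dist_eq_norm, dist_eq_norm] at h
  rw [dist_comm S P, dist_eq_norm, dist_eq_norm, obliquePoint_sub_obliquePoint, norm_add_sq_real,
    norm_smul, norm_smul, mul_pow, mul_pow, real_inner_smul_left, real_inner_smul_right, ← hinner,
    ← h, norm_eq_abs, norm_eq_abs, sq_abs, sq_abs, EuclideanGeometry.angle, obliqueNormSq]
  simp only [vsub_eq_sub]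
  ring

lemma eq_of_onRay {X Y Z W : Pt} (hXY : X ≠ Y) (hZ : OnRay X Y Z) (hW : OnRay X Y W)
    (h : dist X Z = dist X W) : Z = W :=
  sub_left_injective <| norm_injOn_ray_left (sub_ne_zero.2 hXY.symm) hZ hW <| by
    simpa only [dist_eq_norm, norm_sub_rev X] using h

section Triangle

lemma tri_rotate (A B C : Pt) : tri B C A = tri A B C := by
  rw [tri, tri, Set.pair_comm C A, Set.insert_comm]

lemma tri_swap_left (A B C : Pt) : tri B A C = tri A B C := by
  rw [tri, tri, Set.insert_comm]

lemma tri_swap_right (A B C : Pt) : tri A C B = tri A B C := by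
  rw [tri, tri, Set.pair_comm]

lemma triArea_map (g : Pt →ᵃ[ℝ] Pt) (A B C : Pt) :
    triArea (g A) (g B) (g C) = |LinearMap.det g.linear| * triArea A B C := by
  have himage : tri (g A) (g B) (g C) = (fun X => X + g 0) '' (g.linear '' tri A B C) := by
    have hvertices : ({g A, g B, g C} : Set Pt) = g '' {A, B, C} := by
      simp only [Set.image_insert_eq, Set.image_singleton]
    rw [tri, hvertices, ← AffineMap.image_convexHull, Set.image_image, tri]
    exact Set.image_congr fun X _ => congrFun g.decomp X
  rw [triArea, himage, Set.image_add_right, measure_preimage_add_right,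
    Measure.addHaar_image_linearMap, ENNReal.toReal_mul, ENNReal.toReal_ofReal (abs_nonneg _),
    triArea]

lemma triArea_pos_s2 {A B C : Pt} (h : AffineIndependent ℝ ![A, B, C]) : 0 < triArea A B C := by
  have hspan : affineSpan ℝ {A, B, C} = ⊤ := by
    rw [← h.affineSpan_eq_top_iff_card_eq_finrank_add_one.2 (by simp)]
    congr 1
    simp only [Matrix.range_cons, Matrix.range_empty, Set.union_empty, Set.singleton_union]
  refine ENNReal.toReal_pos ?_ ((Set.toFinite {A, B, C}).isCompact_convexHull ℝ).measure_ne_top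
  exact (Measure.measure_pos_of_nonempty_interior _
    (interior_convexHull_nonempty_iff_affineSpan_eq_top.2 hspan)).ne'

lemma triArea_obliquePoint {S P R : Pt} (h : AffineIndependent ℝ ![S, P, R]) (u v w : ℝ × ℝ) :
    triArea (obliquePoint S P R u) (obliquePoint S P R v) (obliquePoint S P R w) =
      |planeDet (v - u) (w - u)| * triArea S P R := by
  have hli := affineIndependent_triple_iff_linearIndependent.1 h
  let b := basisOfLinearIndependentOfCardEqFinrank hli (by simp)
  have hb0 : b 0 = P - S := by simp [b]
  have hb1 : b 1 = R - S := by simp [b]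
  let f : Pt →ₗ[ℝ] Pt :=
    Matrix.toLin b b !![(v - u).1, (w - u).1; (v - u).2, (w - u).2]
  have hf0 : f (P - S) = obliquePoint S P R v - obliquePoint S P R u := by
    rw [obliquePoint_sub_obliquePoint, ← hb0, ← hb1, Matrix.toLin_self]
    simp only [Fin.sum_univ_two, Matrix.of_apply, Matrix.cons_val]
  have hf1 : f (R - S) = obliquePoint S P R w - obliquePoint S P R u := by
    rw [obliquePoint_sub_obliquePoint, ← hb0, ← hb1, Matrix.toLin_self]
    simp only [Fin.sum_univ_two, Matrix.of_apply, Matrix.cons_val]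
  let g : Pt →ᵃ[ℝ] Pt := AffineMap.mk' (fun X => f (X - S) + obliquePoint S P R u) f S (by simp)
  have hdet : LinearMap.det g.linear = planeDet (v - u) (w - u) := by
    rw [show g.linear = f from rfl, LinearMap.det_toLin, Matrix.det_fin_two_of, planeDet]
    ring
  have hmap := triArea_map g S P R
  simp only [g, AffineMap.coe_mk', hf0, hf1, sub_self, map_zero, zero_add, sub_add_cancel] at hmap
  rw [hmap, ← hdet]

lemma isIsoscelesContainer_obliquePoint {S P R : Pt} (h : AffineIndependent ℝ ![S, P, R])
    (hiso : dist S P = dist S R) {x y z s a b : ℝ × ℝ}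
    (hlegs : obliqueNormSq (cos (∠ P S R)) a = obliqueNormSq (cos (∠ P S R)) b)
    (hdet : planeDet a b ≠ 0)
    (hsub : ∀ t ∈ ({x, y, z} : Finset (ℝ × ℝ)), ∃ w ∈ unitTriangle, t = s + w.1 • a + w.2 • b) :
    IsIsoscelesContainer (obliquePoint S P R x) (obliquePoint S P R y) (obliquePoint S P R z)
      (obliquePoint S P R s) (obliquePoint S P R (s + a)) (obliquePoint S P R (s + b)) := by
  refine ⟨?_, Or.inr (Or.inl ?_), convexHull_min ?_ (convex_convexHull ℝ _)⟩
  · rwa [affineIndependent_obliquePoint_iff h, add_sub_cancel_left, add_sub_cancel_left]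
  · rw [← sq_eq_sq₀ dist_nonneg dist_nonneg, dist_comm (obliquePoint S P R s),
      dist_obliquePoint_sq hiso, dist_obliquePoint_sq hiso, add_sub_cancel_left,
      add_sub_cancel_left, hlegs]
  · have hmem : ∀ t ∈ ({x, y, z} : Finset (ℝ × ℝ)), obliquePoint S P R t ∈
        tri (obliquePoint S P R s) (obliquePoint S P R (s + a)) (obliquePoint S P R (s + b)) := by
      intro t ht
      obtain ⟨w, hw, rfl⟩ := hsub t ht
      rw [tri, convexHull_triple_eq_image_unitTriangle]
      exact ⟨w, hw, obliquePoint_obliquePoint S P R s a b w⟩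
    rintro _ (rfl | rfl | rfl) <;> exact hmem _ (by simp)

end Triangle

namespace IsMinIsoscelesContainer

variable {A B C A' B' C' C'' S P R : Pt}

lemma congr_tri (h : IsMinIsoscelesContainer A B C S P R) (htri : tri A B C = tri A' B' C') :
    IsMinIsoscelesContainer A' B' C' S P R := by
  simpa only [IsMinIsoscelesContainer, IsIsoscelesContainer, htri] using h

lemma rotate_s2 (h : IsMinIsoscelesContainer A B C S P R) : IsMinIsoscelesContainer A B C P R S := by
  obtain ⟨⟨hind, hiso, hsub⟩, hmin⟩ := h
  refine ⟨⟨hind.comm_left.comm_right, ?_, by rwa [tri_rotate S P R]⟩, fun S' P' R' h' => ?_⟩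
  · simpa only [IsIsosceles, dist_comm, or_comm, or_left_comm, or_assoc] using hiso
  · simpa only [triArea, tri_rotate] using hmin S' P' R' h'

lemma isMinUnitContainer {x y z : ℝ × ℝ}
    (h : IsMinIsoscelesContainer (obliquePoint S P R x) (obliquePoint S P R y)
      (obliquePoint S P R z) S P R)
    (hiso : dist S P = dist S R) (hacute : ∠ P S R < π / 2)
    (hx : x ∈ unitTriangle) (hy : y ∈ unitTriangle) (hz : z ∈ unitTriangle) :
    IsMinUnitContainer (cos (∠ P S R)) {x, y, z} where
  cos_pos := cos_pos_of_mem_Ioo ⟨by linarith [angle_nonneg P S R, pi_pos], hacute⟩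
  cos_lt_one := by
    have hangle : 0 < ∠ P S R :=
      angle_pos_of_not_collinear (affineIndependent_iff_not_collinear_set.1 h.1.1.comm_left)
    simpa only [cos_zero] using cos_lt_cos_of_nonneg_of_le_pi le_rfl (angle_le_pi P S R) hangle
  subset := by simp [hx, hy, hz]
  one_le_abs_planeDet s a b hlegs hdet hK := by
    have harea := h.2 _ _ _ (isIsoscelesContainer_obliquePoint h.1.1 hiso hlegs hdet hK)
    rwa [triArea_obliquePoint h.1.1, add_sub_cancel_left, add_sub_cancel_left,
      le_mul_iff_one_le_left (triArea_pos_s2 h.1.1)] at harea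

lemma exists_coordinates (h : IsMinIsoscelesContainer A B C S P R) (hiso : dist S P = dist S R)
    (hacute : ∠ P S R < π / 2) :
    ∃ x y z, A = obliquePoint S P R x ∧ B = obliquePoint S P R y ∧ C = obliquePoint S P R z ∧
      IsMinUnitContainer (cos (∠ P S R)) {x, y, z} := by
  have hsub := (subset_convexHull ℝ _).trans h.1.2.2
  rw [tri, convexHull_triple_eq_image_unitTriangle] at hsub
  obtain ⟨x, hx, rfl⟩ := hsub (Set.mem_insert A _)
  obtain ⟨y, hy, rfl⟩ := hsub (by simp : B ∈ _)
  obtain ⟨z, hz, rfl⟩ := hsub (by simp : C ∈ _)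
  exact ⟨x, y, z, rfl, rfl, rfl, h.isMinUnitContainer hiso hacute hx hy hz⟩

lemma apex_eq_vertex (h : IsMinIsoscelesContainer A B C S P R) (hiso : dist S P = dist S R)
    (hacute : ∠ P S R < π / 2) : S = A ∨ S = B ∨ S = C := by
  obtain ⟨x, y, z, rfl, rfl, rfl, hcoord⟩ := h.exists_coordinates hiso hacute
  rcases (by simpa using hcoord.zero_mem Finset.card_le_three :
      (0, 0) = x ∨ (0, 0) = y ∨ (0, 0) = z) with rfl | rfl | rfl
  · exact Or.inl (obliquePoint_zero S P R).symm
  · exact Or.inr (Or.inl (obliquePoint_zero S P R).symm)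
  · exact Or.inr (Or.inr (obliquePoint_zero S P R).symm)

/-- The first-kind container with apex `S` keeps the farther vertex `B` and moves `C` out to `W`. -/
lemma tri_eq_of_apex (h : IsMinIsoscelesContainer S B C S P R)
    (hind : AffineIndependent ℝ ![S, B, C]) (hiso : dist S P = dist S R)
    (hacute : ∠ P S R < π / 2) (hle : dist S C ≤ dist S B) {W : Pt}
    (hWray : OnRay S C W) (hWdist : dist S W = dist S B) : tri S P R = tri S B W := by
  have hSPR := h.1.1
  have hSC : S ≠ C := hind.injective.ne (by decide : (0 : Fin 3) ≠ 2)
  obtain ⟨u, v, w, hS, rfl, rfl, hcoord⟩ := h.exists_coordinates hiso hacute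
  obtain rfl : u = 0 := obliquePoint_injective hSPR (by rw [← hS, obliquePoint_zero])
  have hdet : planeDet v w ≠ 0 := by
    simpa only [obliquePoint_zero, sub_zero, ne_eq] using
      (affineIndependent_obliquePoint_iff hSPR 0 v w).1 (by rwa [obliquePoint_zero])
  have hnorm : obliqueNormSq (cos (∠ P S R)) w ≤ obliqueNormSq (cos (∠ P S R)) v := by
    have hlen (t : ℝ × ℝ) : dist S (obliquePoint S P R t) ^ 2 =
        dist S P ^ 2 * obliqueNormSq (cos (∠ P S R)) t := by
      simpa [dist_comm S] using dist_obliquePoint_sq hiso t 0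
    have hSP : 0 < dist S P := dist_pos.2 (hSPR.injective.ne (by decide : (0 : Fin 3) ≠ 1))
    refine le_of_mul_le_mul_left ?_ (pow_pos hSP 2)
    rw [← hlen, ← hlen]
    gcongr
  have hW : ∀ (Q : Pt) (t : ℝ), 0 ≤ t → obliquePoint S P R w = S + t • (Q - S) →
      dist S Q = dist S (obliquePoint S P R v) → Q = W := fun Q t ht hQ hdist =>
    eq_of_onRay hSC (by
      rw [hQ, OnRay, add_sub_cancel_left]; exact .nonneg_smul_left (SameRay.refl _) ht) hWray
      (hdist.trans hWdist.symm)
  obtain ⟨hw1, hw2, -⟩ := hcoord.subset w (by simp)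
  rcases hcoord.eq_of_apex_mem hdet hnorm with ⟨rfl, hw0⟩ | ⟨rfl, hw0⟩
  · rw [← hW R w.2 hw2 (by simp [obliquePoint, hw0]) (by simp [hiso]), obliquePoint_one_zero]
  · rw [← hW P w.1 hw1 (by simp [obliquePoint, hw0]) (by simp [hiso]), obliquePoint_zero_one,
      tri_swap_right]

/-- The three first-kind containers are those with apex `C`, `A` and `B`, in this order. -/
lemma tri_eq_specialContainer (h : IsMinIsoscelesContainer A B C S P R)
    (hind : AffineIndependent ℝ ![A, B, C])
    (hab : dist B C ≤ dist C A) (hbc : dist C A ≤ dist A B)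
    (hB'ray : OnRay C B B') (hB'dist : dist C B' = dist C A)
    (hC'ray : OnRay A C C') (hC'dist : dist A C' = dist A B)
    (hC''ray : OnRay B C C'') (hC''dist : dist B C'' = dist A B)
    (hiso : dist S P = dist S R) (hacute : ∠ P S R < π / 2) :
    tri S P R = tri A B' C ∨ tri S P R = tri A B C' ∨ tri S P R = tri A B C'' := by
  rcases h.apex_eq_vertex hiso hacute with rfl | rfl | rfl
  · exact Or.inr <| Or.inl <| h.tri_eq_of_apex hind hiso hacute
      (by rw [dist_comm]; exact hbc) hC'ray hC'dist
  · rw [← tri_swap_left A S C'']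
    exact Or.inr <| Or.inr <| (h.congr_tri (tri_swap_left S A C)).tri_eq_of_apex hind.comm_left hiso
      hacute (by rw [dist_comm S A]; exact hab.trans hbc) hC''ray
      (by rw [hC''dist, dist_comm])
  · rw [tri_rotate S A B']
    exact Or.inl <| (h.congr_tri (tri_rotate S A B)).tri_eq_of_apex hind.comm_right.comm_left hiso
      hacute (by rw [dist_comm S B]; exact hab) hB'ray hB'dist

end IsMinIsoscelesContainer

/-- if a minimum area isosceles container `S P R` of a triangle
`A B C` with side lengths `a < b < c` is acute, then it equals one of the
special containers of the first kind `AB'C`, `ABC'`, `ABC''`. -/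
theorem statement2 (A B C B' C' C'' S P R : Pt)
    (hABC : AffineIndependent ℝ ![A, B, C])
    (hab : dist B C < dist C A) (hbc : dist C A < dist A B)
    (hB'ray : OnRay C B B') (hB'dist : dist C B' = dist C A)
    (hC'ray : OnRay A C C') (hC'dist : dist A C' = dist A B)
    (hC''ray : OnRay B C C'') (hC''dist : dist B C'' = dist A B)
    (hmin : IsMinIsoscelesContainer A B C S P R)
    (hacute : ∠ P S R < π / 2 ∧ ∠ S P R < π / 2 ∧ ∠ S R P < π / 2) :
    tri S P R = tri A B' C ∨ tri S P R = tri A B C' ∨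
      tri S P R = tri A B C'' := by
  have eq_special {S P R : Pt} (h : IsMinIsoscelesContainer A B C S P R) :=
    h.tri_eq_specialContainer hABC hab.le hbc.le hB'ray hB'dist hC'ray hC'dist hC''ray hC''dist
  obtain ⟨hS, hP, hR⟩ := hacute
  rcases hmin.1.2.1 with hiso | hiso | hiso
  · rw [← tri_rotate S P R, ← tri_rotate P R S]
    exact eq_special hmin.rotate_s2.rotate_s2 (by rw [dist_comm R P, hiso]) hR
  · exact eq_special hmin (by rw [dist_comm S R, hiso]) hS
  · rw [← tri_rotate S P R]
    exact eq_special hmin.rotate_s2 (by rw [dist_comm P S, hiso]) (by rwa [angle_comm])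
end
end
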